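/- arXiv:1602.02458 — 2 statements merged into one kernel-verified Lean document; each statement's English description precedes it below -/
import Mathlib

section
/- Let Ω ⊆ ℝ³ be open with torsion-free C^∞ Christoffel symbols Γ^λ_{μν} : Ω → ℝ, let φ : W → Ω be a geodesic flow, let γ : I → Ω be a C^∞ curve on an open interval I, and let f(t,s) = φ(γ(t), γ'(t), s) be the ∇-tangent surface, defined on a neighborhood of (t₀,0) in I × ℝ. If (∇γ)(t₀), (∇²γ)(t₀), (∇³γ)(t₀) are linearly independent, then the germ of f at (t₀,0) is diffeomorphic to the cuspidal edge (u,w) ↦ (u, w², w³). -/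
open Set

noncomputable section

/-- `σ` is a `C^∞` diffeomorphism from the open set `U` onto its open image. -/
def SmoothDiffeoOn {E F : Type*} [NormedAddCommGroup E] [NormedSpace ℝ E]
    [NormedAddCommGroup F] [NormedSpace ℝ F] (σ : E → F) (U : Set E) : Prop :=
  IsOpen U ∧ IsOpen (σ '' U) ∧ ContDiffOn ℝ (⊤ : ℕ∞) σ U ∧
    ∃ σinv : F → E, ContDiffOn ℝ (⊤ : ℕ∞) σinv (σ '' U) ∧ ∀ x ∈ U, σinv (σ x) = x

/-- The map-germ of `f` at `p` is diffeomorphic to the map-germ of `g` at `q`: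
there are open neighborhoods `U ∋ p`, `V ∋ f p` and `C^∞` diffeomorphisms
`σ` from `U` onto an open neighborhood of `q`, `τ` from `V` onto an open
neighborhood of `g q`, with `σ p = q`, `τ (f p) = g q`, `f(U) ⊆ V` and
`τ ∘ f = g ∘ σ` on `U`. -/
def GermDiffeomorphic {E F : Type*} [NormedAddCommGroup E] [NormedSpace ℝ E]
    [NormedAddCommGroup F] [NormedSpace ℝ F]
    (f : E → F) (p : E) (g : E → F) (q : E) : Prop :=
  ∃ (U : Set E) (V : Set F) (σ : E → E) (τ : F → F),
    SmoothDiffeoOn σ U ∧ SmoothDiffeoOn τ V ∧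
    p ∈ U ∧ f p ∈ V ∧ σ p = q ∧ τ (f p) = g q ∧
    (∀ x ∈ U, f x ∈ V) ∧ ∀ x ∈ U, τ (f x) = g (σ x)

/-- Iterated covariant derivative of a curve `γ` with respect to the Christoffel
symbols `Γ` (in local coordinates): `covDeriv Γ γ k` is `∇^{k+1} γ`, i.e.
`covDeriv Γ γ 0 = ∇γ = γ'` and
`(∇^{k+1}γ)^λ(t) = d/dt (∇^k γ)^λ(t) + Σ_{μ,ν} Γ^λ_{μν}(γ(t)) (γ^μ)'(t) (∇^k γ)^ν(t)`. -/
noncomputable def covDeriv {m : ℕ} (Γ : (Fin m → ℝ) → Fin m → Fin m → Fin m → ℝ)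
    (γ : ℝ → Fin m → ℝ) : ℕ → ℝ → Fin m → ℝ
  | 0 => deriv γ
  | k + 1 => fun t l =>
      deriv (fun u => covDeriv Γ γ k u l) t +
        ∑ μ, ∑ ν, Γ (γ t) l μ ν * deriv γ t μ * covDeriv Γ γ k t ν

/-- `φ : W → Ω` is a geodesic flow for the Christoffel symbols `Γ` on the open set
`Ω ⊆ ℝ^m`: `W ⊆ Ω × ℝ^m × ℝ` is an open neighborhood of `Ω × ℝ^m × {0}`, `φ` is `C^∞`
on `W`, and for each `(x, v)` the curve `s ↦ φ(x, v, s)` is a geodesic with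
`φ(x,v,0) = x` and `∂φ/∂s(x,v,0) = v`. -/
structure IsGeodesicFlow {m : ℕ} (Γ : (Fin m → ℝ) → Fin m → Fin m → Fin m → ℝ)
    (Ω : Set (Fin m → ℝ)) (W : Set ((Fin m → ℝ) × (Fin m → ℝ) × ℝ))
    (φ : (Fin m → ℝ) × (Fin m → ℝ) × ℝ → Fin m → ℝ) : Prop where
  isOpen_W : IsOpen W
  subset_fst : ∀ p ∈ W, p.1 ∈ Ω
  mem_zero : ∀ x ∈ Ω, ∀ v, (x, v, (0 : ℝ)) ∈ W
  smooth : ContDiffOn ℝ (⊤ : ℕ∞) φ W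
  mapsTo : ∀ p ∈ W, φ p ∈ Ω
  init_pos : ∀ x ∈ Ω, ∀ v, φ (x, v, 0) = x
  init_vel : ∀ x ∈ Ω, ∀ v, deriv (fun s => φ (x, v, s)) 0 = v
  geodesic : ∀ p ∈ W, ∀ l,
    deriv (deriv (fun s => φ (p.1, p.2.1, s) l)) p.2.2 +
      ∑ μ, ∑ ν, Γ (φ p) l μ ν * deriv (fun s => φ (p.1, p.2.1, s) μ) p.2.2 *
        deriv (fun s => φ (p.1, p.2.1, s) ν) p.2.2 = 0

section Aux

open Filter Topology MeasureTheory
open scoped ContDiff FourierTransform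


lemma exists_entire_cos : ∃ c : ℝ → ℝ, ContDiff ℝ ∞ c ∧ ∀ w, c (w ^ 2) = Real.cos w := by
  let a : ℕ → ℝ := fun n => (-1) ^ n / (2 * n).factorial
  refine ⟨FormalMultilinearSeries.ofScalarsSum a, ?_, ?_⟩
  · have hr : (FormalMultilinearSeries.ofScalars ℝ a).radius = ⊤ := by
      apply FormalMultilinearSeries.ofScalars_radius_eq_top_of_tendsto
      · refine Eventually.of_forall fun n => ?_
        simp only [a]; positivity
      · have h1 : ∀ n : ℕ, ‖a n.succ‖ / ‖a n‖ = 1 / ((2 * n + 1) * (2 * n + 2) : ℝ) := by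
          intro n
          simp only [a, norm_div, norm_pow, norm_neg, norm_one, one_pow, Nat.succ_eq_add_one]
          rw [show 2 * (n + 1) = 2 * n + 1 + 1 by ring, Nat.factorial_succ, Nat.factorial_succ]
          push_cast
          simp only [norm_mul, Real.norm_natCast]
          rw [Real.norm_of_nonneg (by positivity), Real.norm_of_nonneg (by positivity)]
          have : ((2 * n).factorial : ℝ) ≠ 0 := by positivity
          field_simp
          ring
        simp_rw [h1]
        refine squeeze_zero (fun n => by positivity) (fun n => ?_)
          tendsto_one_div_add_atTop_nhds_zero_nat
        apply one_div_le_one_div_of_le (by positivity)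
        have : (0 : ℝ) ≤ n := by positivity
        nlinarith
    have h := (FormalMultilinearSeries.ofScalars ℝ a).hasFPowerSeriesOnBall (by rw [hr]; simp)
    rw [hr] at h
    have h2 := h.analyticOnNhd
    simp only [Metric.eball_top] at h2
    exact contDiffOn_univ.1 h2.contDiffOn_of_completeSpace
  · intro w
    have := Real.hasSum_cos w
    simp only [FormalMultilinearSeries.ofScalarsSum_eq_tsum]
    rw [← this.tsum_eq]
    congr 1
    ext n
    simp only [a, smul_eq_mul, pow_mul]
    ring

lemma cos_ode {c : ℝ → ℝ} (hc : ContDiff ℝ ∞ c) (hcos : ∀ w, c (w ^ 2) = Real.cos w) :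
    (∀ w, 2 * w * deriv c (w ^ 2) = - Real.sin w) ∧
    ∀ k : ℕ, ∀ y > 0, 4 * y * iteratedDeriv (k + 2) c y
      + (2 + 4 * k) * iteratedDeriv (k + 1) c y + iteratedDeriv k c y = 0 := by
  have hd : ∀ k y, HasDerivAt (iteratedDeriv k c) (iteratedDeriv (k + 1) c y) y := by
    intro k y
    rw [iteratedDeriv_succ]
    exact ((hc.differentiable_iteratedDeriv k (by exact_mod_cast WithTop.coe_lt_top _)) y).hasDerivAt
  have h1 : ∀ w, 2 * w * iteratedDeriv 1 c (w ^ 2) = - Real.sin w := by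
    intro w
    have e1 : HasDerivAt (fun w => c (w ^ 2)) (iteratedDeriv 1 c (w ^ 2) * (2 * w)) w := by
      have h0 := hd 0 (w ^ 2)
      rw [iteratedDeriv_zero] at h0
      have h3 : HasDerivAt (fun w : ℝ => w ^ 2) (2 * w) w := by simpa using hasDerivAt_pow 2 w
      exact HasDerivAt.comp w h0 h3
    have e2 : HasDerivAt (fun w => c (w ^ 2)) (- Real.sin w) w := by
      rw [funext hcos]; exact Real.hasDerivAt_cos w
    rw [← e1.unique e2]; ring
  have h2 : ∀ w, 4 * w ^ 2 * iteratedDeriv 2 c (w ^ 2) + 2 * iteratedDeriv 1 c (w ^ 2)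
      + c (w ^ 2) = 0 := by
    intro w
    have e1 := ((hasDerivAt_id w).const_mul 2).mul ((hd 1 (w ^ 2)).comp w (hasDerivAt_pow 2 w))
    have e2 := (Real.hasDerivAt_sin w).neg
    have e3 := e1.unique (e2.congr_of_eventuallyEq (Eventually.of_forall fun x => by
      simpa using h1 x))
    rw [hcos]
    simp only [Function.comp_apply, id] at e3
    norm_num at e3
    rw [iteratedDeriv_one]
    linear_combination e3
  refine ⟨by simpa [iteratedDeriv_one] using h1, ?_⟩
  intro k
  induction k with
  | zero =>
    intro y hy
    have := h2 (Real.sqrt y)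
    rw [Real.sq_sqrt hy.le] at this
    simpa using this
  | succ k ih =>
    intro y hy
    have e1 := ((((hasDerivAt_id y).const_mul 4).mul (hd (k+2) y)).add
      ((hd (k+1) y).const_mul (2 + 4 * (k:ℝ)))).add (hd k y)
    have e2 : HasDerivAt (fun _ : ℝ => (0:ℝ)) 0 y := hasDerivAt_const y 0
    have e3 := e1.unique (e2.congr_of_eventuallyEq (by
      filter_upwards [lt_mem_nhds hy] with z hz
      simpa using ih z hz))
    push_cast
    simp at e3
    linear_combination e3

lemma exists_cosSqrt : ∃ c : ℝ → ℝ, c.HasTemperateGrowth ∧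
    ∀ w, c (w ^ 2) = Real.cos w := by
  obtain ⟨c, hc, hcos⟩ := exists_entire_cos
  obtain ⟨h1, hode⟩ := cos_ode hc hcos
  -- derivatives of `c` are bounded on `[1,∞)`
  have hb : ∀ k : ℕ, (∃ M, ∀ y ≥ 1, |iteratedDeriv k c y| ≤ M) ∧
      ∃ M, ∀ y ≥ 1, |iteratedDeriv (k+1) c y| ≤ M := by
    intro k
    induction k with
    | zero =>
      constructor
      · refine ⟨1, fun y hy => ?_⟩
        have := hcos (Real.sqrt y)
        rw [Real.sq_sqrt (by linarith)] at this
        rw [iteratedDeriv_zero, this]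
        exact Real.abs_cos_le_one _
      · refine ⟨1, fun y hy => ?_⟩
        have := h1 (Real.sqrt y)
        rw [Real.sq_sqrt (by linarith)] at this
        have h3 : 1 ≤ Real.sqrt y := by rw [Real.one_le_sqrt]; exact hy
        have h4 : |2 * Real.sqrt y * deriv c y| ≤ 1 := by
          rw [this, abs_neg]; exact Real.abs_sin_le_one _
        rw [abs_mul, abs_of_pos (by positivity)] at h4
        rw [zero_add, iteratedDeriv_one]
        nlinarith [abs_nonneg (deriv c y)]
    | succ k ih =>
      refine ⟨ih.2, ?_⟩
      obtain ⟨⟨M, hM⟩, N, hN⟩ := ih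
      refine ⟨(2 + 4 * k) * N + M, fun y hy => ?_⟩
      have e := hode k y (by linarith)
      have e2 : 4 * y * iteratedDeriv (k + 2) c y =
        -((2 + 4 * k) * iteratedDeriv (k + 1) c y + iteratedDeriv k c y) := by linarith
      have e3 : 4 * y * |iteratedDeriv (k + 2) c y| ≤ (2 + 4 * k) * N + M := by
        have : |4 * y * iteratedDeriv (k + 2) c y| ≤ (2 + 4 * k) * N + M := by
          rw [e2, abs_neg]
          refine (abs_add_le _ _).trans ?_
          rw [abs_mul, abs_of_nonneg (by positivity : (0:ℝ) ≤ 2 + 4 * k)]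
          gcongr
          · exact hN y hy
          · exact hM y hy
        rwa [abs_mul, abs_of_nonneg (by linarith : 0 ≤ 4 * y)] at this
      nlinarith [abs_nonneg (iteratedDeriv (k + 2) c y)]
  let C : ℝ → ℝ := fun y => Real.smoothTransition (y + 1) * c y
  have hC : ContDiff ℝ ∞ C := by
    refine ContDiff.mul ?_ hc
    exact Real.smoothTransition.contDiff.comp (by fun_prop)
  refine ⟨C, ⟨hC, fun k => ?_⟩, fun w => ?_⟩
  · obtain ⟨M, hM⟩ := (hb k).1
    obtain ⟨N, hN⟩ := (isCompact_Icc (a := (-2:ℝ)) (b := 1)).exists_bound_of_continuousOn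
      (f := iteratedDeriv k C) (hC.continuous_iteratedDeriv k (by exact_mod_cast le_top)).continuousOn
    refine ⟨0, max M (max N 0), fun y => ?_⟩
    rw [norm_iteratedFDeriv_eq_norm_iteratedDeriv, pow_zero, mul_one]
    rcases lt_or_ge y (-1) with hy | hy
    · have : C =ᶠ[𝓝 y] fun _ => 0 := by
        filter_upwards [gt_mem_nhds hy] with z hz
        simp only [C]
        rw [Real.smoothTransition.zero_of_nonpos (by linarith), zero_mul]
      rw [this.iteratedDeriv_eq k]
      simp
    · rcases le_or_gt y 1 with hy1 | hy1
      · exact (hN y ⟨by linarith, hy1⟩).trans ((le_max_left _ _).trans (le_max_right _ _))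
      · have : C =ᶠ[𝓝 y] c := by
          filter_upwards [lt_mem_nhds hy1] with z hz
          simp only [C]
          rw [Real.smoothTransition.one_of_one_le (by linarith), one_mul]
        rw [this.iteratedDeriv_eq k]
        exact (hM y hy1.le).trans (le_max_left _ _)
  · simp only [C]
    rw [Real.smoothTransition.one_of_one_le (by nlinarith [sq_nonneg w]), one_mul, hcos]


section param
set_option linter.unusedSectionVars false
variable {P X : Type} [NormedAddCommGroup P] [NormedSpace ℝ P]
  [NormedAddCommGroup X] [NormedSpace ℝ X] [MeasurableSpace X] [BorelSpace X]
  [SecondCountableTopology X] {𝕜 : Type} [RCLike 𝕜]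

/-- Domination hypothesis for parametric integrals `∫ g ξ • T (p, ξ)`. -/
def DomParam (μ : Measure X) (g : X → 𝕜) {F : Type} [NormedAddCommGroup F] [NormedSpace ℝ F]
    (T : P × X → F) : Prop :=
  ContDiff ℝ ∞ T ∧ ∀ (n : ℕ) (R : ℝ), ∃ b : X → ℝ, Integrable (fun ξ => ‖g ξ‖ * b ξ) μ ∧
    ∀ᵐ ξ ∂μ, ∀ p : P, ‖p‖ < R → ‖iteratedFDeriv ℝ n T (p, ξ)‖ ≤ b ξ

lemma DomParam.deriv {μ : Measure X} {g : X → 𝕜} {F : Type} [NormedAddCommGroup F]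
    [NormedSpace ℝ F] {T : P × X → F} (h : DomParam μ g T) :
    DomParam μ g (fun z => (fderiv ℝ T z).comp (ContinuousLinearMap.inl ℝ P X)) := by
  let L : (P × X →L[ℝ] F) →L[ℝ] (P →L[ℝ] F) :=
    (ContinuousLinearMap.compL ℝ P (P × X) F).flip (ContinuousLinearMap.inl ℝ P X)
  have hd : ContDiff ℝ ∞ (fderiv ℝ T) := (contDiff_infty_iff_fderiv.1 h.1).2
  have hL : (fun z => (fderiv ℝ T z).comp (ContinuousLinearMap.inl ℝ P X)) = L ∘ fderiv ℝ T := by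
    ext; rfl
  rw [hL]
  refine ⟨L.contDiff.comp hd, fun n R => ?_⟩
  obtain ⟨b, hb, hb'⟩ := h.2 (n + 1) R
  refine ⟨fun ξ => ‖L‖ * b ξ, ?_, ?_⟩
  · refine (hb.const_mul ‖L‖).congr (Eventually.of_forall fun ξ => ?_)
    simp only; ring
  · filter_upwards [hb'] with ξ hξ p hp
    refine (L.norm_iteratedFDeriv_comp_left (N := ∞) hd.contDiffAt (by exact_mod_cast le_top)).trans ?_
    rw [norm_iteratedFDeriv_fderiv]
    gcongr
    exact hξ p hp

lemma DomParam.hasFDerivAt {μ : Measure X} {g : X → 𝕜} (hg : AEStronglyMeasurable g μ)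
    {F : Type} [NormedAddCommGroup F]
    [NormedSpace ℝ F] [NormedSpace 𝕜 F] [SMulCommClass ℝ 𝕜 F] {T : P × X → F}
    (h : DomParam μ g T) (p : P) :
    HasFDerivAt (fun p => ∫ ξ, g ξ • T (p, ξ) ∂μ)
      (∫ ξ, g ξ • (fderiv ℝ T (p, ξ)).comp (ContinuousLinearMap.inl ℝ P X) ∂μ) p := by
  obtain ⟨b0, hb0, hb0'⟩ := h.2 0 (‖p‖ + 1)
  obtain ⟨b, hb, hb'⟩ := h.deriv.2 0 (‖p‖ + 1)
  have hc : ∀ p, Continuous fun ξ : X => T (p, ξ) := fun p =>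
    h.1.continuous.comp (by fun_prop)
  have hm : ∀ p, AEStronglyMeasurable (fun ξ : X => g ξ • T (p, ξ)) μ := fun p =>
    hg.smul (hc p).aestronglyMeasurable
  have hm' : AEStronglyMeasurable
      (fun ξ : X => g ξ • (fderiv ℝ T (p, ξ)).comp (ContinuousLinearMap.inl ℝ P X)) μ := by
    refine hg.smul (Continuous.aestronglyMeasurable ?_)
    exact h.deriv.1.continuous.comp (by fun_prop : Continuous fun ξ : X => (p, ξ))
  refine hasFDerivAt_integral_of_dominated_of_fderiv_le (𝕜 := ℝ)
    (F' := fun p ξ => g ξ • (fderiv ℝ T (p, ξ)).comp (ContinuousLinearMap.inl ℝ P X))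
    (s := Metric.ball 0 (‖p‖ + 1))
    (bound := fun ξ => ‖g ξ‖ * b ξ) (Metric.isOpen_ball.mem_nhds (by simp))
    (Eventually.of_forall hm) ?_ hm' ?_ hb ?_
  · refine hb0.mono' (hm p) ?_
    filter_upwards [hb0'] with ξ hξ
    rw [norm_smul]
    gcongr
    simpa using hξ p (by simp)
  · filter_upwards [hb'] with ξ hξ q hq
    rw [norm_smul]
    gcongr
    simpa using hξ q (by simpa using hq)
  · refine Eventually.of_forall fun ξ q _ => ?_
    have h1 : HasFDerivAt T (fderiv ℝ T (q, ξ)) (q, ξ) :=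
      ((contDiff_infty_iff_fderiv.1 h.1).1 _).hasFDerivAt
    exact (h1.comp q (hasFDerivAt_prodMk_left q ξ)).const_smul (g ξ)

lemma DomParam.integrable {μ : Measure X} {g : X → 𝕜} (hg : AEStronglyMeasurable g μ)
    {F : Type} [NormedAddCommGroup F]
    [NormedSpace ℝ F] [NormedSpace 𝕜 F] [SMulCommClass ℝ 𝕜 F] {T : P × X → F}
    (h : DomParam μ g T) (p : P) : Integrable (fun ξ => g ξ • T (p, ξ)) μ := by
  obtain ⟨b0, hb0, hb0'⟩ := h.2 0 (‖p‖ + 1)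
  have hc : Continuous fun ξ : X => T (p, ξ) := h.1.continuous.comp (by fun_prop)
  refine hb0.mono' (hg.smul hc.aestronglyMeasurable) ?_
  filter_upwards [hb0'] with ξ hξ
  rw [norm_smul]
  gcongr
  simpa using hξ p (by simp)

lemma DomParam.contDiff_nat {μ : Measure X} {g : X → 𝕜} (hg : AEStronglyMeasurable g μ) (n : ℕ) :
    ∀ {F : Type} [NormedAddCommGroup F]
    [NormedSpace ℝ F] [NormedSpace 𝕜 F] [SMulCommClass ℝ 𝕜 F] {T : P × X → F}
    (_ : DomParam μ g T), ContDiff ℝ n (fun p => ∫ ξ, g ξ • T (p, ξ) ∂μ) := by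
  induction n with
  | zero =>
    intro F _ _ _ _ T h
    rw [Nat.cast_zero, contDiff_zero]
    exact continuous_iff_continuousAt.2 fun p => (h.hasFDerivAt hg p).continuousAt
  | succ n ih =>
    intro F _ _ _ _ T h
    rw [Nat.cast_add, Nat.cast_one, contDiff_succ_iff_hasFDerivAt]
    exact ⟨_, ih h.deriv, h.hasFDerivAt hg⟩

lemma DomParam.contDiff {μ : Measure X} {g : X → 𝕜} (hg : AEStronglyMeasurable g μ)
    {F : Type} [NormedAddCommGroup F]
    [NormedSpace ℝ F] [NormedSpace 𝕜 F] [SMulCommClass ℝ 𝕜 F] {T : P × X → F}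
    (h : DomParam μ g T) : ContDiff ℝ ∞ (fun p => ∫ ξ, g ξ • T (p, ξ) ∂μ) :=
  contDiff_infty.2 fun n => h.contDiff_nat hg n

lemma contDiff_integral_schwartz {μ : Measure X} [μ.HasTemperateGrowth] (g : SchwartzMap X ℂ)
    {T : P × X → ℂ} (hT : T.HasTemperateGrowth) :
    ContDiff ℝ ∞ (fun p => ∫ ξ, g ξ • T (p, ξ) ∂μ) ∧
      ∀ p, Integrable (fun ξ => g ξ • T (p, ξ)) μ := by
  suffices h : DomParam μ g T from ⟨h.contDiff g.continuous.aestronglyMeasurable,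
    h.integrable g.continuous.aestronglyMeasurable⟩
  refine ⟨hT.1, fun n R => ?_⟩
  obtain ⟨k, C, hC⟩ := hT.2 n
  refine ⟨fun ξ => |C| * ((1 + |R|) ^ k * (2 ^ k * (1 + ‖ξ‖ ^ k))), ?_, ?_⟩
  · have h1 := g.integrable_pow_mul μ k
    have h0 := g.integrable_pow_mul μ 0
    refine ((h0.add h1).const_mul (|C| * ((1 + |R|) ^ k * 2 ^ k))).congr
      (Eventually.of_forall fun ξ => ?_)
    simp only [Pi.add_apply]; ring
  · refine Eventually.of_forall fun ξ p hp => (hC _).trans ?_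
    have e1 : (1 + ‖(p, ξ)‖) ≤ (1 + |R|) * (1 + ‖ξ‖) := by
      have : ‖(p, ξ)‖ ≤ |R| + ‖ξ‖ := by
        rw [Prod.norm_mk]
        have := le_abs_self R
        exact max_le (by linarith [norm_nonneg ξ]) (by linarith [abs_nonneg R])
      nlinarith [abs_nonneg R, norm_nonneg ξ]
    have e2 : (1 + ‖ξ‖) ^ k ≤ 2 ^ k * (1 + ‖ξ‖ ^ k) := by
      rcases le_total ‖ξ‖ 1 with h | h
      · calc (1 + ‖ξ‖) ^ k ≤ 2 ^ k := by gcongr; linarith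
          _ ≤ _ := le_mul_of_one_le_right (by positivity) (by simp)
      · calc (1 + ‖ξ‖) ^ k ≤ (2 * ‖ξ‖) ^ k := by gcongr; linarith
          _ ≤ _ := by rw [mul_pow]; gcongr; simp
    calc C * (1 + ‖(p, ξ)‖) ^ k ≤ |C| * ((1 + |R|) * (1 + ‖ξ‖)) ^ k := by
          gcongr; exact le_abs_self C
      _ = |C| * ((1 + |R|) ^ k * (1 + ‖ξ‖) ^ k) := by rw [mul_pow]
      _ ≤ |C| * ((1 + |R|) ^ k * (2 ^ k * (1 + ‖ξ‖ ^ k))) := by gcongr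

end param

lemma contDiff_integral_unit {P : Type} [NormedAddCommGroup P] [NormedSpace ℝ P]
    [FiniteDimensional ℝ P] {T : P × ℝ → ℝ} (hT : ContDiff ℝ ∞ T) :
    ContDiff ℝ ∞ (fun p => ∫ t in (0:ℝ)..1, T (p, t)) := by
  have key : DomParam (volume.restrict (Ioc (0:ℝ) 1)) (fun _ : ℝ => (1:ℝ)) T := by
    refine ⟨hT, fun n R => ?_⟩
    have hcpt : IsCompact (Metric.closedBall (0:P) R ×ˢ Icc (0:ℝ) 1) :=
      (isCompact_closedBall 0 R).prod isCompact_Icc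
    obtain ⟨N, hN⟩ := hcpt.exists_bound_of_continuousOn
      (f := iteratedFDeriv ℝ n T) (hT.continuous_iteratedFDeriv (by exact_mod_cast le_top)).continuousOn
    refine ⟨fun _ => N, ?_, ?_⟩
    · simp
    · filter_upwards [ae_restrict_mem measurableSet_Ioc] with ξ hξ p hp
      exact hN _ ⟨by simpa using hp.le, hξ.1.le, hξ.2⟩
  have := key.contDiff aestronglyMeasurable_const
  simpa [intervalIntegral.integral_of_le zero_le_one] using this

/-- Hadamard's lemma in the second variable. -/
lemma hadamard {K : ℝ × ℝ → ℝ} (hK : ContDiff ℝ ∞ K) :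
    ∃ A : ℝ × ℝ → ℝ, ContDiff ℝ ∞ A ∧ ∀ u y, K (u, y) = K (u, 0) + y * A (u, y) := by
  have hd : ContDiff ℝ ∞ (fderiv ℝ K) := (contDiff_infty_iff_fderiv.1 hK).2
  have hdiff := (contDiff_infty_iff_fderiv.1 hK).1
  let T : (ℝ × ℝ) × ℝ → ℝ := fun z => fderiv ℝ K (z.1.1, z.2 * z.1.2) (0, 1)
  have hT : ContDiff ℝ ∞ T := (hd.comp (by fun_prop)).clm_apply contDiff_const
  refine ⟨_, contDiff_integral_unit hT, fun u y => ?_⟩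
  have h1 : ∀ t ∈ uIcc (0:ℝ) 1, HasDerivAt (fun t : ℝ => K (u, t * y)) (y * T ((u, y), t)) t := by
    intro t _
    have e1 : HasDerivAt (fun t : ℝ => (u, t * y)) (0, y) t := by
      simpa using (hasDerivAt_const t u).prodMk ((hasDerivAt_id t).mul_const y)
    have e2 := (hdiff (u, t * y)).hasFDerivAt.comp_hasDerivAt t e1
    have e3 : y * T ((u, y), t) = fderiv ℝ K (u, t * y) (0, y) := by
      rw [show ((0:ℝ), y) = y • ((0:ℝ), (1:ℝ)) by simp, map_smul, smul_eq_mul]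
    rw [e3]
    exact e2
  have h2 := intervalIntegral.integral_eq_sub_of_hasDerivAt h1
    (Continuous.intervalIntegrable (by
      have := hT.continuous
      fun_prop) _ _)
  rw [intervalIntegral.integral_const_mul] at h2
  simp at h2
  linarith


abbrev E2 := EuclideanSpace ℝ (Fin 2)

lemma temperate_deriv {c : ℝ → ℝ} (hc : c.HasTemperateGrowth) : (deriv c).HasTemperateGrowth := by
  refine ⟨(contDiff_infty_iff_deriv.1 hc.1).2, fun n => ?_⟩
  obtain ⟨k, C, h⟩ := hc.2 (n + 1)
  refine ⟨k, C, fun x => ?_⟩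
  have := h x
  rwa [norm_iteratedFDeriv_eq_norm_iteratedDeriv, iteratedDeriv_succ',
    ← norm_iteratedFDeriv_eq_norm_iteratedDeriv] at this

lemma temperate_cos : Real.cos.HasTemperateGrowth := by
  refine ⟨Real.contDiff_cos, fun n => ⟨0, 1, fun x => ?_⟩⟩
  rw [norm_iteratedFDeriv_eq_norm_iteratedDeriv]
  simpa using Real.abs_iteratedDeriv_cos_le_one n x

lemma temperate_sin : Real.sin.HasTemperateGrowth := by
  refine ⟨Real.contDiff_sin, fun n => ⟨0, 1, fun x => ?_⟩⟩
  rw [norm_iteratedFDeriv_eq_norm_iteratedDeriv]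
  simpa using Real.abs_iteratedDeriv_sin_le_one n x

lemma whitney {G : ℝ × ℝ → ℝ} (hG : ContDiff ℝ ∞ G) (hGc : HasCompactSupport G) :
    ∃ K0 K1 : ℝ × ℝ → ℝ, ContDiff ℝ ∞ K0 ∧ ContDiff ℝ ∞ K1 ∧
      ∀ u w, G (u, w) = K0 (u, w ^ 2) + w * K1 (u, w ^ 2) := by
  obtain ⟨c, hc, hcos⟩ := exists_cosSqrt
  have hs := temperate_deriv hc
  have hsin : ∀ w, Real.sin w = w * (-2 * deriv c (w ^ 2)) := by
    intro w
    have h0 : HasDerivAt c (deriv c (w ^ 2)) (w ^ 2) :=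
      ((hc.1.differentiable (by simp)) _).hasDerivAt
    have h3 : HasDerivAt (fun w : ℝ => w ^ 2) (2 * w) w := by simpa using hasDerivAt_pow 2 w
    have e1 : HasDerivAt (fun w => c (w ^ 2)) (deriv c (w ^ 2) * (2 * w)) w :=
      HasDerivAt.comp w h0 h3
    rw [funext hcos] at e1
    have := e1.unique (Real.hasDerivAt_cos w)
    linarith
  let e : E2 → ℝ × ℝ := fun x => (x 0, x 1)
  have he : ContDiff ℝ ∞ e := by fun_prop
  have hcomp : HasCompactSupport (fun x : E2 => ((G (e x) : ℝ) : ℂ)) := by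
    let L : E2 ≃L[ℝ] ℝ × ℝ := (EuclideanSpace.equiv (Fin 2) ℝ).trans
      (ContinuousLinearEquiv.finTwoArrow ℝ ℝ)
    have h1 : HasCompactSupport (G ∘ L) := hGc.comp_homeomorph L.toHomeomorph
    exact h1.comp_left (g := fun r : ℝ => (r : ℂ)) (by simp)
  let g : SchwartzMap E2 ℂ := hcomp.toSchwartzMap
    (Complex.ofRealCLM.contDiff.comp (hG.comp he))
  have hinv : ∀ u w : ℝ, ((G (u, w) : ℝ) : ℂ) = ∫ ξ : E2, (𝓕 g) ξ •
      Complex.exp ((2 * Real.pi * (ξ 0 * u + ξ 1 * w) : ℝ) * Complex.I) := by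
    intro u w
    have h1 : (𝓕⁻ (𝓕 g)) !₂[u, w] = g !₂[u, w] := by
      rw [FourierTransform.fourierInv_fourier_eq]
    rw [SchwartzMap.fourierInv_coe, Real.fourierInv_eq'] at h1
    have h2 : g !₂[u, w] = G (u, w) := rfl
    rw [← h2, ← h1]
    congr 1
    ext ξ
    rw [smul_eq_mul, smul_eq_mul, mul_comm]
    congr 4
    simp [PiLp.inner_apply, Fin.sum_univ_two]
    try ring
  let a : (ℝ × ℝ) × E2 → ℂ := fun z =>
    (Real.cos (2 * Real.pi * (z.2 0 * z.1.1)) : ℂ) +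
      (Real.sin (2 * Real.pi * (z.2 0 * z.1.1)) : ℂ) * Complex.I
  let T0 : (ℝ × ℝ) × E2 → ℂ := fun z =>
    a z * ((c ((2 * Real.pi * z.2 1) ^ 2 * z.1.2) : ℝ) : ℂ)
  let T1 : (ℝ × ℝ) × E2 → ℂ := fun z =>
    a z * (((2 * Real.pi * z.2 1) * (-2 * deriv c ((2 * Real.pi * z.2 1) ^ 2 * z.1.2)) : ℝ) : ℂ)
      * Complex.I
  have q0 : ((fun z => z.1.1 : (ℝ × ℝ) × E2 → ℝ)).HasTemperateGrowth :=
    ((ContinuousLinearMap.fst ℝ ℝ ℝ).comp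
      (ContinuousLinearMap.fst ℝ (ℝ × ℝ) E2)).hasTemperateGrowth
  have q1 : ((fun z => z.1.2 : (ℝ × ℝ) × E2 → ℝ)).HasTemperateGrowth :=
    ((ContinuousLinearMap.snd ℝ ℝ ℝ).comp
      (ContinuousLinearMap.fst ℝ (ℝ × ℝ) E2)).hasTemperateGrowth
  have q : ∀ i, ((fun z => z.2 i : (ℝ × ℝ) × E2 → ℝ)).HasTemperateGrowth := fun i =>
    ((EuclideanSpace.proj i).comp
      (ContinuousLinearMap.snd ℝ (ℝ × ℝ) E2)).hasTemperateGrowth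
  have cst : ∀ r : ℝ, (fun _ : (ℝ × ℝ) × E2 => r).HasTemperateGrowth :=
    fun r => Function.HasTemperateGrowth.const r
  have ofR : ∀ {f : (ℝ × ℝ) × E2 → ℝ}, f.HasTemperateGrowth →
    (fun z => ((f z : ℝ) : ℂ)).HasTemperateGrowth :=
      fun hf => Function.Complex.hasTemperateGrowth_ofReal.comp hf
  have cI : (fun _ : (ℝ × ℝ) × E2 => Complex.I).HasTemperateGrowth :=
    Function.HasTemperateGrowth.const _
  have hang : (fun z : (ℝ × ℝ) × E2 => 2 * Real.pi * (z.2 0 * z.1.1)).HasTemperateGrowth :=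
    (cst _).mul ((q 0).mul q0)
  have hang1 : (fun z : (ℝ × ℝ) × E2 => 2 * Real.pi * z.2 1).HasTemperateGrowth :=
    (cst _).mul (q 1)
  have hang2 : (fun z : (ℝ × ℝ) × E2 => (2 * Real.pi * z.2 1) ^ 2 * z.1.2).HasTemperateGrowth :=
    (hang1.pow 2).mul q1
  have ha : a.HasTemperateGrowth :=
    (ofR (temperate_cos.comp hang)).add ((ofR (temperate_sin.comp hang)).mul cI)
  have hT0 : T0.HasTemperateGrowth := ha.mul (ofR (hc.comp hang2))
  have hT1 : T1.HasTemperateGrowth :=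
    (ha.mul (ofR (hang1.mul ((cst (-2)).mul (hs.comp hang2))))).mul cI
  have s0 := contDiff_integral_schwartz (μ := volume) (𝓕 g) hT0
  have s1 := contDiff_integral_schwartz (μ := volume) (𝓕 g) hT1
  refine ⟨fun p => (∫ ξ, (𝓕 g) ξ • T0 (p, ξ)).re, fun p => (∫ ξ, (𝓕 g) ξ • T1 (p, ξ)).re,
    Complex.reCLM.contDiff.comp s0.1, Complex.reCLM.contDiff.comp s1.1, fun u w => ?_⟩
  have hsum : ((G (u, w) : ℝ) : ℂ) =
      (∫ ξ, (𝓕 g) ξ • T0 ((u, w ^ 2), ξ)) + (w : ℂ) * ∫ ξ, (𝓕 g) ξ • T1 ((u, w ^ 2), ξ) := by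
    rw [hinv, ← integral_const_mul, ← integral_add (s0.2 _) ((s1.2 _).const_mul _)]
    congr 1
    ext ξ
    have e1 : c ((2 * Real.pi * ξ 1) ^ 2 * w ^ 2) = Real.cos (2 * Real.pi * ξ 1 * w) := by
      rw [← mul_pow, hcos]
    have e2 : Real.sin (2 * Real.pi * ξ 1 * w) = (2 * Real.pi * ξ 1 * w) *
        (-2 * deriv c ((2 * Real.pi * ξ 1) ^ 2 * w ^ 2)) := by
      rw [← mul_pow, ← hsin]
    have e3 : Complex.exp ((2 * Real.pi * (ξ 0 * u + ξ 1 * w) : ℝ) * Complex.I) =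
        (Real.cos (2 * Real.pi * (ξ 0 * u)) + Real.sin (2 * Real.pi * (ξ 0 * u)) * Complex.I) *
        (Real.cos (2 * Real.pi * ξ 1 * w) + Real.sin (2 * Real.pi * ξ 1 * w) * Complex.I) := by
      rw [Complex.ofReal_cos, Complex.ofReal_sin, Complex.ofReal_cos, Complex.ofReal_sin,
        ← Complex.exp_mul_I, ← Complex.exp_mul_I, ← Complex.exp_add]
      congr 1
      push_cast
      ring
    simp only [T0, T1, a, smul_eq_mul]
    rw [e3, e1, e2]
    push_cast
    ring
  have := congrArg Complex.re hsum
  rw [Complex.ofReal_re, Complex.add_re, Complex.re_ofReal_mul] at this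
  exact this


lemma expansion_scalar {f : ℝ × ℝ → ℝ} {N : Set (ℝ × ℝ)} (hN : IsOpen N)
    (hf : ContDiffOn ℝ ∞ f N) {p₀ : ℝ × ℝ} (hp : p₀ ∈ N) :
    ∃ (β δ : ℝ → ℝ) (A K : ℝ × ℝ → ℝ), ContDiff ℝ ∞ β ∧ ContDiff ℝ ∞ δ ∧ ContDiff ℝ ∞ A ∧
      ContDiff ℝ ∞ K ∧ ∀ᶠ p in 𝓝 p₀, f p = β (p.1 + p.2) + p.2 * δ (p.1 + p.2)
        + p.2 ^ 2 * A (p.1 + p.2, p.2 ^ 2) + p.2 ^ 3 * K (p.1 + p.2, p.2 ^ 2) := by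
  obtain ⟨r, hr, hrN⟩ := Metric.nhds_basis_closedBall.mem_iff.1 (hN.mem_nhds hp)
  let χ : ContDiffBump p₀ := ⟨r / 2, r, by positivity, by linarith⟩
  let G0 : ℝ × ℝ → ℝ := fun p => χ p * f p
  have hts : tsupport G0 ⊆ Metric.closedBall p₀ r := by
    have := tsupport_mul_subset_left (f := χ) (g := f)
    exact this.trans χ.tsupport_eq.subset
  have hG0 : ContDiff ℝ ∞ G0 := by
    rw [contDiff_iff_contDiffAt]
    intro x
    by_cases hx : x ∈ tsupport G0
    · exact χ.contDiffAt.mul (hf.contDiffAt (hN.mem_nhds (hrN (hts hx))))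
    · exact (contDiffAt_const (c := (0 : ℝ))).congr_of_eventuallyEq
        (notMem_tsupport_iff_eventuallyEq.1 hx)
  have hG0c : HasCompactSupport G0 :=
    (isCompact_closedBall p₀ r).of_isClosed_subset (isClosed_tsupport _) hts
  let e : ℝ × ℝ ≃ₜ ℝ × ℝ :=
    { toFun := fun p => (p.1 - p.2, p.2)
      invFun := fun p => (p.1 + p.2, p.2)
      left_inv := fun p => by simp
      right_inv := fun p => by simp
      continuous_toFun := by fun_prop
      continuous_invFun := by fun_prop }
  have hG : ContDiff ℝ ∞ (G0 ∘ e) :=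
    hG0.comp (by change ContDiff ℝ ∞ (fun p : ℝ × ℝ => (p.1 - p.2, p.2)); fun_prop)
  obtain ⟨K0, K1, h0, h1, hK⟩ := whitney hG (hG0c.comp_homeomorph e)
  obtain ⟨A, hA, hA'⟩ := hadamard h0
  obtain ⟨K, hK1, hK1'⟩ := hadamard h1
  refine ⟨fun u => K0 (u, 0), fun u => K1 (u, 0), A, K, h0.comp (by fun_prop),
    h1.comp (by fun_prop), hA, hK1, ?_⟩
  filter_upwards [χ.eventuallyEq_one] with p hp
  have e1 : f p = G0 p := by simp only [G0]; rw [hp]; simp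
  have e2 := hK (p.1 + p.2) p.2
  have e3 : (G0 ∘ e) (p.1 + p.2, p.2) = G0 p := by
    simp [e]
  rw [e3] at e2
  rw [e1, e2, hA', hK1']
  ring

lemma expansion {f : ℝ × ℝ → Fin 3 → ℝ} {N : Set (ℝ × ℝ)} (hN : IsOpen N)
    (hf : ContDiffOn ℝ ∞ f N) {p₀ : ℝ × ℝ} (hp : p₀ ∈ N) :
    ∃ (β δ : ℝ → Fin 3 → ℝ) (A K : ℝ × ℝ → Fin 3 → ℝ), ContDiff ℝ ∞ β ∧ ContDiff ℝ ∞ δ ∧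
      ContDiff ℝ ∞ A ∧
      ContDiff ℝ ∞ K ∧ ∀ᶠ p in 𝓝 p₀, f p = β (p.1 + p.2) + p.2 • δ (p.1 + p.2)
        + p.2 ^ 2 • A (p.1 + p.2, p.2 ^ 2) + p.2 ^ 3 • K (p.1 + p.2, p.2 ^ 2) := by
  have := fun l => expansion_scalar (f := fun p => f p l) hN (contDiffOn_pi.1 hf l) hp
  choose β δ A K h1 h2 h3 h4 h5 using this
  refine ⟨fun t l => β l t, fun t l => δ l t, fun p l => A l p, fun p l => K l p,
    contDiff_pi.2 h1, contDiff_pi.2 h2, contDiff_pi.2 h3, contDiff_pi.2 h4, ?_⟩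
  filter_upwards [eventually_all.2 h5] with p hp
  ext l
  simpa using hp l

lemma germ_of_expansion {f : ℝ × ℝ → Fin 3 → ℝ} {t₀ : ℝ} {β : ℝ → Fin 3 → ℝ}
    {A K : ℝ × ℝ → Fin 3 → ℝ} (hβ : ContDiff ℝ ∞ β) (hA : ContDiff ℝ ∞ A) (hK : ContDiff ℝ ∞ K)
    (hexp : ∀ᶠ p in 𝓝 (t₀, (0:ℝ)), f p = β (p.1 + p.2)
        + p.2 ^ 2 • A (p.1 + p.2, p.2 ^ 2) + p.2 ^ 3 • K (p.1 + p.2, p.2 ^ 2))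
    (hind : LinearIndependent ℝ ![deriv β t₀, A (t₀, 0), K (t₀, 0)]) :
    GermDiffeomorphic f (t₀, (0 : ℝ))
      (fun p : ℝ × ℝ => ![p.1, p.2 ^ 2, p.2 ^ 3]) ((0 : ℝ), (0 : ℝ)) := by
  let Ψ : (Fin 3 → ℝ) → (Fin 3 → ℝ) := fun q =>
    β (t₀ + q 0) + q 1 • A (t₀ + q 0, q 1) + q 2 • K (t₀ + q 0, q 1)
  have hΨ : ContDiff ℝ ∞ Ψ := by
    have i1 : ContDiff ℝ ∞ (fun q : Fin 3 → ℝ => t₀ + q 0) := by fun_prop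
    have i2 : ContDiff ℝ ∞ (fun q : Fin 3 → ℝ => (t₀ + q 0, q 1)) := by fun_prop
    have i3 : ContDiff ℝ ∞ (fun q : Fin 3 → ℝ => q 1) := by fun_prop
    have i4 : ContDiff ℝ ∞ (fun q : Fin 3 → ℝ => q 2) := by fun_prop
    exact ((hβ.comp i1).add (i3.smul (hA.comp i2))).add (i4.smul (hK.comp i2))
  have hΨd := (contDiff_infty_iff_fderiv.1 hΨ).1
  -- derivative at the origin
  let L : (Fin 3 → ℝ) →L[ℝ] (Fin 3 → ℝ) :=
    (ContinuousLinearMap.proj (R := ℝ) (φ := fun _ : Fin 3 => ℝ) 0).smulRight (deriv β t₀) +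
    (ContinuousLinearMap.proj (R := ℝ) (φ := fun _ : Fin 3 => ℝ) 1).smulRight (A (t₀, 0)) +
    (ContinuousLinearMap.proj (R := ℝ) (φ := fun _ : Fin 3 => ℝ) 2).smulRight (K (t₀, 0))
  have hL : HasFDerivAt Ψ L 0 := by
    have p0 : ∀ i, HasFDerivAt (fun q : Fin 3 → ℝ => q i)
        (ContinuousLinearMap.proj (R := ℝ) (φ := fun _ : Fin 3 => ℝ) i) 0 := fun i =>
      (ContinuousLinearMap.proj (R := ℝ) (φ := fun _ : Fin 3 => ℝ) i).hasFDerivAt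
    have p1 : HasFDerivAt (fun q : Fin 3 → ℝ => t₀ + q 0)
        (ContinuousLinearMap.proj (R := ℝ) (φ := fun _ : Fin 3 => ℝ) 0) 0 := (p0 0).const_add t₀
    have hb : HasDerivAt β (deriv β t₀) (t₀ + (0 : Fin 3 → ℝ) 0) := by
      simpa using ((hβ.differentiable (by simp)) t₀).hasDerivAt
    have h0 := hb.hasFDerivAt.comp (0 : Fin 3 → ℝ) p1
    have hAd : DifferentiableAt ℝ (fun q : Fin 3 → ℝ => A (t₀ + q 0, q 1)) 0 :=
      (hA.differentiable (by simp) _).comp _ (by fun_prop)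
    have hKd : DifferentiableAt ℝ (fun q : Fin 3 → ℝ => K (t₀ + q 0, q 1)) 0 :=
      (hK.differentiable (by simp) _).comp _ (by fun_prop)
    have h1 := (p0 1).smul hAd.hasFDerivAt
    have h2 := (p0 2).smul hKd.hasFDerivAt
    have h3 := (h0.add h1).add h2
    refine h3.congr_fderiv ?_
    ext v i
    simp [L]
  have hLinj : Function.Injective L := by
    rw [injective_iff_map_eq_zero]
    intro v hv
    have := Fintype.linearIndependent_iff.1 hind v (by
      rw [Fin.sum_univ_three]; simpa [L] using hv)
    ext i
    exact this i
  let L' : (Fin 3 → ℝ) ≃L[ℝ] (Fin 3 → ℝ) :=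
    (LinearEquiv.ofInjectiveEndo (L : (Fin 3 → ℝ) →ₗ[ℝ] (Fin 3 → ℝ)) hLinj).toContinuousLinearEquiv
  have hL' : (L' : (Fin 3 → ℝ) →L[ℝ] (Fin 3 → ℝ)) = L := by ext; rfl
  have hΨ0 : HasFDerivAt Ψ (L' : (Fin 3 → ℝ) →L[ℝ] (Fin 3 → ℝ)) 0 := by rw [hL']; exact hL
  let e := (hΨ.contDiffAt (x := 0)).toOpenPartialHomeomorph Ψ hΨ0 (by simp)
  have he : ∀ q, e q = Ψ q := fun q => rfl
  have h0s : (0 : Fin 3 → ℝ) ∈ e.source :=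
    (hΨ.contDiffAt (x := 0)).mem_toOpenPartialHomeomorph_source hΨ0 (by simp)
  let O : Set (Fin 3 → ℝ) := fderiv ℝ Ψ ⁻¹' (range
    (ContinuousLinearEquiv.toContinuousLinearMap (σ₁₂ := RingHom.id ℝ)
      (M₁ := Fin 3 → ℝ) (M₂ := Fin 3 → ℝ)))
  have hO : IsOpen O := ContinuousLinearEquiv.isOpen.preimage
    (contDiff_infty_iff_fderiv.1 hΨ).2.continuous
  let S := e.source ∩ O
  have hS : IsOpen S := e.open_source.inter hO
  have h0S : (0 : Fin 3 → ℝ) ∈ S := ⟨h0s, ⟨L', hΨ0.fderiv.symm⟩⟩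
  let V := Ψ '' S
  have hV : IsOpen V := e.isOpen_image_of_subset_source hS inter_subset_left
  have hinv : ∀ q ∈ S, e.symm (Ψ q) = q := fun q hq => e.left_inv hq.1
  have himg : e.symm '' V = S := by
    ext q
    constructor
    · rintro ⟨_, ⟨q', hq', rfl⟩, rfl⟩
      rw [hinv q' hq']; exact hq'
    · intro hq
      exact ⟨Ψ q, ⟨q, hq, rfl⟩, hinv q hq⟩
  have hτ : SmoothDiffeoOn e.symm V := by
    refine ⟨hV, himg ▸ hS, ?_, Ψ, hΨ.contDiffOn, ?_⟩
    · rintro _ ⟨q, hq, rfl⟩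
      obtain ⟨M, hM⟩ := hq.2
      apply ContDiffAt.contDiffWithinAt
      have hq' : e.symm (e q) = q := e.left_inv hq.1
      apply e.contDiffAt_symm (f₀' := M) (e.map_source hq.1)
      · change HasFDerivAt Ψ _ (e.symm (e q))
        rw [hq', hM]; exact (hΨd q).hasFDerivAt
      · exact hΨ.contDiffAt
    · rintro _ ⟨q, hq, rfl⟩
      rw [hinv q hq]
  let σ : ℝ × ℝ → ℝ × ℝ := fun p => (p.1 + p.2 - t₀, p.2)
  let Q : ℝ × ℝ → Fin 3 → ℝ := fun p => ![p.1 + p.2 - t₀, p.2 ^ 2, p.2 ^ 3]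
  have hQ : Continuous Q := by
    apply continuous_pi
    intro i
    fin_cases i <;> simp [Q] <;> fun_prop
  have hQ0 : Q (t₀, 0) = 0 := by ext i; fin_cases i <;> simp [Q]
  have hev : ∀ᶠ p in 𝓝 (t₀, (0:ℝ)), f p = Ψ (Q p) ∧ Q p ∈ S := by
    refine Filter.Eventually.and ?_ (hQ.continuousAt.eventually (by
      rw [hQ0]; exact hS.mem_nhds h0S))
    filter_upwards [hexp] with p hp
    rw [hp]
    simp [Ψ, Q]
  obtain ⟨U, hU, hUo, hpU⟩ := eventually_nhds_iff.1 hev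
  refine ⟨U, V, σ, e.symm, ?_, hτ, hpU, ?_, ?_, ?_, ?_, ?_⟩
  · have hσi : ∀ x, (fun p : ℝ × ℝ => (p.1 - p.2 + t₀, p.2)) (σ x) = x := by
      intro x; exact Prod.ext (by simp only [σ]; ring) rfl
    refine ⟨hUo, ?_, ?_, fun p => (p.1 - p.2 + t₀, p.2), ?_, fun x _ => hσi x⟩
    · have : σ '' U = (fun p : ℝ × ℝ => (p.1 - p.2 + t₀, p.2)) ⁻¹' U := by
        ext p
        constructor
        · rintro ⟨x, hx, rfl⟩
          have h := hσi x
          exact (congrArg (fun z => z ∈ U) h).mpr hx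
        · intro hp
          refine ⟨_, hp, ?_⟩
          exact Prod.ext (by simp only [σ]; ring) rfl
      rw [this]
      exact hUo.preimage (by fun_prop)
    · exact ContDiff.contDiffOn (by fun_prop)
    · exact ContDiff.contDiffOn (by fun_prop)
  · exact ⟨_, (hU _ hpU).2, (hU _ hpU).1.symm⟩
  · simp [σ]
  · rw [(hU _ hpU).1, hinv _ (hU _ hpU).2, hQ0]
    ext i; fin_cases i <;> simp
  · intro x hx
    exact ⟨_, (hU x hx).2, (hU x hx).1.symm⟩
  · intro x hx
    rw [(hU x hx).1, hinv _ (hU x hx).2]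

lemma smooth_deriv {b : ℝ → ℝ} (hb : ContDiff ℝ ∞ b) : ContDiff ℝ ∞ (deriv b) :=
  (contDiff_infty_iff_deriv.1 hb).2

lemma smooth_hasDerivAt {b : ℝ → ℝ} (hb : ContDiff ℝ ∞ b) (t : ℝ) :
    HasDerivAt b (deriv b t) t :=
  ((contDiff_infty_iff_deriv.1 hb).1 t).hasDerivAt

lemma scalar_jet {b a k : ℝ → ℝ} (hb : ContDiff ℝ ∞ b) (ha : ContDiff ℝ ∞ a)
    (hk : ContDiff ℝ ∞ k) (t : ℝ) {h : ℝ → ℝ}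
    (hh : ∀ s, h s = b (t + s) + s ^ 2 * a s + s ^ 3 * k s) :
    deriv h 0 = deriv b t ∧ deriv (deriv h) 0 = deriv (deriv b) t + 2 * a 0 ∧
    deriv (deriv (deriv h)) 0 = deriv (deriv (deriv b)) t + 6 * deriv a 0 + 6 * k 0 := by
  have hh' : h = fun s => b (t + s) + s ^ 2 * a s + s ^ 3 * k s := funext hh
  have sh : ∀ {c : ℝ → ℝ}, ContDiff ℝ ∞ c → ∀ s, HasDerivAt (fun s => c (t + s))
      (deriv c (t + s)) s := fun hc s => by
    simpa using (smooth_hasDerivAt hc (t + s)).comp_const_add t s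
  have pw : ∀ (n : ℕ) (s : ℝ), HasDerivAt (fun s : ℝ => s ^ n) (n * s ^ (n - 1)) s :=
    fun n s => hasDerivAt_pow n s
  have d1 : deriv h = fun s => deriv b (t + s) + (2 * s * a s + s ^ 2 * deriv a s)
      + (3 * s ^ 2 * k s + s ^ 3 * deriv k s) := by
    funext s
    rw [hh']
    refine HasDerivAt.deriv ?_
    refine (((sh hb s).add ((pw 2 s).mul (smooth_hasDerivAt ha s))).add
      ((pw 3 s).mul (smooth_hasDerivAt hk s))).congr_deriv ?_
    push_cast; ring
  have hb1 := smooth_deriv hb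
  have ha1 := smooth_deriv ha
  have hk1 := smooth_deriv hk
  have d2 : deriv (deriv h) = fun s => deriv (deriv b) (t + s)
      + (2 * a s + 4 * s * deriv a s + s ^ 2 * deriv (deriv a) s)
      + (6 * s * k s + 6 * s ^ 2 * deriv k s + s ^ 3 * deriv (deriv k) s) := by
    funext s
    rw [d1]
    refine HasDerivAt.deriv ?_
    refine (((sh hb1 s).add ((((hasDerivAt_id' s).const_mul 2).mul (smooth_hasDerivAt ha s)).add
      ((pw 2 s).mul (smooth_hasDerivAt ha1 s)))).add
      ((((pw 2 s).const_mul 3).mul (smooth_hasDerivAt hk s)).add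
      ((pw 3 s).mul (smooth_hasDerivAt hk1 s)))).congr_deriv ?_
    push_cast; ring
  have hb2 := smooth_deriv hb1
  have ha2 := smooth_deriv ha1
  have hk2 := smooth_deriv hk1
  refine ⟨by rw [d1]; simp, by rw [d2]; simp, ?_⟩
  rw [d2]
  refine HasDerivAt.deriv ?_
  have i := hasDerivAt_id' (0 : ℝ)
  refine (((sh hb2 0).add ((((smooth_hasDerivAt ha 0).const_mul 2).add
      ((i.const_mul 4).mul (smooth_hasDerivAt ha1 0))).add
      ((pw 2 0).mul (smooth_hasDerivAt ha2 0)))).add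
      ((((i.const_mul 6).mul (smooth_hasDerivAt hk 0)).add
      (((pw 2 0).const_mul 6).mul (smooth_hasDerivAt hk1 0))).add
      ((pw 3 0).mul (smooth_hasDerivAt hk2 0)))).congr_deriv ?_
  norm_num
  ring

lemma quad_deriv {Γ : (Fin 3 → ℝ) → Fin 3 → Fin 3 → Fin 3 → ℝ} {c p : ℝ → Fin 3 → ℝ}
    {v q : Fin 3 → ℝ} {r : ℝ} (l : Fin 3)
    (hΓ : ∀ μ ν, DifferentiableAt ℝ (fun x => Γ x l μ ν) (c r))
    (hc : HasDerivAt c v r) (hp : ∀ μ, HasDerivAt (fun s => p s μ) (q μ) r) :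
    HasDerivAt (fun s => ∑ μ, ∑ ν, Γ (c s) l μ ν * p s μ * p s ν)
      (∑ μ, ∑ ν, (fderiv ℝ (fun x => Γ x l μ ν) (c r) v * p r μ * p r ν
        + Γ (c r) l μ ν * q μ * p r ν + Γ (c r) l μ ν * p r μ * q ν)) r := by
  refine HasDerivAt.fun_sum fun μ _ => HasDerivAt.fun_sum fun ν _ => ?_
  have h1 : HasDerivAt (fun s => Γ (c s) l μ ν) (fderiv ℝ (fun x => Γ x l μ ν) (c r) v) r :=
    (hΓ μ ν).hasFDerivAt.comp_hasDerivAt r hc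
  refine ((h1.mul (hp μ)).mul (hp ν)).congr_deriv ?_
  simp only [Pi.mul_apply]
  ring

lemma covDeriv_congr {m : ℕ} {Γ : (Fin m → ℝ) → Fin m → Fin m → Fin m → ℝ}
    {γ β : ℝ → Fin m → ℝ} {t₀ : ℝ} (h : γ =ᶠ[𝓝 t₀] β) (k : ℕ) :
    covDeriv Γ γ k =ᶠ[𝓝 t₀] covDeriv Γ β k := by
  induction k with
  | zero => exact h.deriv
  | succ k ih =>
    filter_upwards [ih.eventually_nhds, h, h.deriv] with t h1 h2 h3
    funext l
    have e1 : (fun u => covDeriv Γ γ k u l) =ᶠ[𝓝 t] (fun u => covDeriv Γ β k u l) := by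
      filter_upwards [h1] with u hu
      rw [hu]
    simp only [covDeriv]
    rw [e1.deriv_eq, h2, h3, h1.self_of_nhds]

lemma deriv_apply {β : ℝ → Fin 3 → ℝ} (hβ : ContDiff ℝ ∞ β) (t : ℝ) (l : Fin 3) :
    deriv β t l = deriv (fun u => β u l) t := by
  have h : HasDerivAt β (deriv β t) t := ((contDiff_infty_iff_deriv.1 hβ).1 t).hasDerivAt
  exact ((hasDerivAt_pi.1 h) l).deriv.symm

lemma jets {Γ : (Fin 3 → ℝ) → Fin 3 → Fin 3 → Fin 3 → ℝ}
    (hTF : ∀ x l μ ν, Γ x l μ ν = Γ x l ν μ)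
    {t₀ : ℝ} {β : ℝ → Fin 3 → ℝ} {A K : ℝ × ℝ → Fin 3 → ℝ}
    (hβ : ContDiff ℝ ∞ β) (hA : ContDiff ℝ ∞ A) (hK : ContDiff ℝ ∞ K)
    (hΓ : ∀ l μ ν, DifferentiableAt ℝ (fun x => Γ x l μ ν) (β t₀))
    {x : ℝ × ℝ → Fin 3 → ℝ}
    (hx : ∀ p, x p = β (p.1 + p.2)
        + p.2 ^ 2 • A (p.1 + p.2, p.2 ^ 2) + p.2 ^ 3 • K (p.1 + p.2, p.2 ^ 2))
    (hgeo : ∀ᶠ p in 𝓝 (t₀, (0 : ℝ)), ∀ l, deriv (deriv (fun s => x (p.1, s) l)) p.2 +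
      ∑ μ, ∑ ν, Γ (x p) l μ ν * deriv (fun s => x (p.1, s) μ) p.2 *
        deriv (fun s => x (p.1, s) ν) p.2 = 0) :
    covDeriv Γ β 0 t₀ = deriv β t₀ ∧ covDeriv Γ β 1 t₀ = (-2 : ℝ) • A (t₀, 0) ∧
      covDeriv Γ β 2 t₀ = (3 : ℝ) • K (t₀, 0) := by
  have hβl : ∀ l, ContDiff ℝ ∞ (fun t => β t l) := fun l => contDiff_pi.1 hβ l
  have hAl : ∀ l t, ContDiff ℝ ∞ (fun s => A (t + s, s ^ 2) l) := fun l t =>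
    (contDiff_pi.1 hA l).comp (g := fun p => A p l) (f := fun s : ℝ => (t + s, s ^ 2)) (by fun_prop)
  have hKl : ∀ l t, ContDiff ℝ ∞ (fun s => K (t + s, s ^ 2) l) := fun l t =>
    (contDiff_pi.1 hK l).comp (g := fun p => K p l) (f := fun s : ℝ => (t + s, s ^ 2)) (by fun_prop)
  have hxl : ∀ l t s, x (t, s) l = β (t + s) l + s ^ 2 * A (t + s, s ^ 2) l
      + s ^ 3 * K (t + s, s ^ 2) l := by
    intro l t s; rw [hx]; simp
  have J := fun l t => scalar_jet (hβl l) (hAl l t) (hKl l t) t (hxl l t)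
  have hx0 : ∀ t, x (t, 0) = β t := by intro t; rw [hx]; simp
  have hAd : ∀ l, deriv (fun s => A (t₀ + s, s ^ 2) l) 0 = deriv (fun t => A (t, 0) l) t₀ := by
    intro l
    have hA' : DifferentiableAt ℝ (fun p => A p l) (t₀, 0) :=
      (contDiff_pi.1 hA l).differentiable (by simp) _
    have e1 : HasDerivAt (fun t : ℝ => (t, (0 : ℝ))) ((1 : ℝ), (0 : ℝ)) t₀ :=
      (hasDerivAt_id' t₀).prodMk (hasDerivAt_const t₀ (0 : ℝ))
    have e2 : HasDerivAt (fun s : ℝ => (t₀ + s, s ^ 2)) ((1 : ℝ), (0 : ℝ)) 0 := by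
      have := ((hasDerivAt_id' (0 : ℝ)).const_add t₀).prodMk (hasDerivAt_pow 2 (0 : ℝ))
      simpa using this
    have f1 := hA'.hasFDerivAt.comp_hasDerivAt t₀ e1
    have f2 := HasFDerivAt.comp_hasDerivAt (f := fun s : ℝ => (t₀ + s, s ^ 2))
      (l := fun p => A p l) (0 : ℝ) (by simpa using hA'.hasFDerivAt) e2
    exact f2.deriv.trans f1.deriv.symm
  -- second order identity near the base point
  have h2 : ∀ᶠ t in 𝓝 t₀, ∀ l, deriv (deriv (fun u => β u l)) t + 2 * A (t, 0) l +
      ∑ μ, ∑ ν, Γ (β t) l μ ν * deriv (fun u => β u μ) t * deriv (fun u => β u ν) t = 0 := by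
    have hc : Tendsto (fun t : ℝ => (t, (0 : ℝ))) (𝓝 t₀) (𝓝 (t₀, 0)) :=
      Continuous.tendsto (by fun_prop) t₀
    filter_upwards [hc.eventually hgeo] with t ht l
    have := ht l
    simp only [hx0] at this
    rw [(J l t).2.1] at this
    simp only [fun μ => (J μ t).1] at this
    simpa using this
  have c1 : ∀ᶠ t in 𝓝 t₀, ∀ l, covDeriv Γ β 1 t l = -2 * A (t, 0) l := by
    filter_upwards [h2] with t ht l
    have := ht l
    simp only [covDeriv, deriv_apply hβ]
    linarith
  -- third order identities
  have D3a : ∀ l, deriv (deriv (deriv (fun u => β u l))) t₀ + 2 * deriv (fun t => A (t, 0) l) t₀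
      + (∑ μ, ∑ ν, (fderiv ℝ (fun x => Γ x l μ ν) (β t₀) (deriv β t₀) *
          deriv (fun u => β u μ) t₀ * deriv (fun u => β u ν) t₀
        + Γ (β t₀) l μ ν * deriv (deriv (fun u => β u μ)) t₀ * deriv (fun u => β u ν) t₀
        + Γ (β t₀) l μ ν * deriv (fun u => β u μ) t₀ * deriv (deriv (fun u => β u ν)) t₀)) = 0 := by
    intro l
    have q := quad_deriv (Γ := Γ) (c := β) (p := fun t μ => deriv (fun u => β u μ) t) (r := t₀) l
      (fun μ ν => hΓ l μ ν) (((contDiff_infty_iff_deriv.1 hβ).1 t₀).hasDerivAt)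
      (fun μ => smooth_hasDerivAt (smooth_deriv (hβl μ)) t₀)
    have a := smooth_hasDerivAt (b := fun t => A (t, 0) l)
      ((contDiff_pi.1 hA l).comp (g := fun p => A p l) (f := fun s : ℝ => (s, (0 : ℝ)))
        (by fun_prop)) t₀
    have tot := ((smooth_hasDerivAt (smooth_deriv (smooth_deriv (hβl l))) t₀).add
      (a.const_mul 2)).add q
    refine tot.unique ((hasDerivAt_const t₀ (0 : ℝ)).congr_of_eventuallyEq ?_)
    filter_upwards [h2] with t ht using ht l
  have hxs : ∀ l t, ContDiff ℝ ∞ (fun s => x (t, s) l) := by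
    intro l t
    simp only [hxl]
    have := (hβl l).comp (f := fun s : ℝ => t + s) (by fun_prop)
    have h2 : ContDiff ℝ ∞ (fun s : ℝ => s ^ 2) := by fun_prop
    have h3 : ContDiff ℝ ∞ (fun s : ℝ => s ^ 3) := by fun_prop
    exact (this.add (h2.mul (hAl l t))).add (h3.mul (hKl l t))
  have D3b : ∀ l, deriv (deriv (deriv (fun s => x (t₀, s) l))) 0
      + (∑ μ, ∑ ν, (fderiv ℝ (fun x => Γ x l μ ν) (β t₀) (deriv β t₀) *
          deriv (fun u => x (t₀, u) μ) 0 * deriv (fun u => x (t₀, u) ν) 0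
        + Γ (β t₀) l μ ν * deriv (deriv (fun u => x (t₀, u) μ)) 0 * deriv (fun u => x (t₀, u) ν) 0
        + Γ (β t₀) l μ ν * deriv (fun u => x (t₀, u) μ) 0 *
            deriv (deriv (fun u => x (t₀, u) ν)) 0)) = 0 := by
    intro l
    have hc0 : HasDerivAt (fun s => x (t₀, s)) (deriv β t₀) 0 := by
      rw [hasDerivAt_pi]
      intro μ
      rw [deriv_apply hβ, ← (J μ t₀).1]
      exact smooth_hasDerivAt (hxs μ t₀) 0
    have q := quad_deriv (Γ := Γ) (c := fun s => x (t₀, s))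
      (p := fun t μ => deriv (fun u => x (t₀, u) μ) t) (r := 0) l
      (fun μ ν => by simpa only [hx0] using hΓ l μ ν) hc0
      (fun μ => smooth_hasDerivAt (smooth_deriv (hxs μ t₀)) 0)
    simp only [hx0] at q
    have tot := (smooth_hasDerivAt (smooth_deriv (smooth_deriv (hxs l t₀))) 0).add q
    refine tot.unique ((hasDerivAt_const (0 : ℝ) (0 : ℝ)).congr_of_eventuallyEq ?_)
    have hc : Tendsto (fun s : ℝ => (t₀, s)) (𝓝 0) (𝓝 (t₀, 0)) :=
      Continuous.tendsto (by fun_prop) 0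
    filter_upwards [hc.eventually hgeo] with s hs using hs l
  refine ⟨rfl, ?_, ?_⟩
  · funext l
    simpa using c1.self_of_nhds l
  · funext l
    have e1 : (fun u => covDeriv Γ β 1 u l) =ᶠ[𝓝 t₀] fun u => -2 * A (u, 0) l := by
      filter_upwards [c1] with u hu using hu l
    have e2 : covDeriv Γ β 2 t₀ l = deriv (fun u => covDeriv Γ β 1 u l) t₀ +
        ∑ μ, ∑ ν, Γ (β t₀) l μ ν * deriv β t₀ μ * covDeriv Γ β 1 t₀ ν := rfl
    rw [e2, e1.deriv_eq, deriv_const_mul_field]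
    simp only [c1.self_of_nhds, deriv_apply hβ]
    have a1 := D3a l
    have a2 := D3b l
    simp only [(J _ t₀).2.2, (J _ t₀).2.1, (J _ t₀).1, hAd] at a2
    have T := hTF (β t₀) l
    have t1 := T 1 0
    have t2 := T 2 0
    have t3 := T 2 1
    simp only [Fin.sum_univ_three, t1, t2, t3] at a1 a2 ⊢
    simp at a1 a2 ⊢
    linear_combination (-1/2) * (a2 - a1)

lemma main_aux
    {Γ : (Fin 3 → ℝ) → Fin 3 → Fin 3 → Fin 3 → ℝ}
    {Ω : Set (Fin 3 → ℝ)} (hΩ : IsOpen Ω)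
    (hΓ : ∀ l μ ν, ContDiffOn ℝ ∞ (fun x => Γ x l μ ν) Ω)
    (hTF : ∀ x l μ ν, Γ x l μ ν = Γ x l ν μ)
    {W : Set ((Fin 3 → ℝ) × (Fin 3 → ℝ) × ℝ)}
    {φ : (Fin 3 → ℝ) × (Fin 3 → ℝ) × ℝ → Fin 3 → ℝ}
    (hφ : IsGeodesicFlow Γ Ω W φ)
    {I : Set ℝ} (hI : IsOpen I)
    {γ : ℝ → Fin 3 → ℝ} (hγ : ContDiffOn ℝ ∞ γ I) (hγΩ : ∀ t ∈ I, γ t ∈ Ω)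
    {t₀ : ℝ} (ht₀ : t₀ ∈ I)
    (hind : LinearIndependent ℝ
      ![covDeriv Γ γ 0 t₀, covDeriv Γ γ 1 t₀, covDeriv Γ γ 2 t₀]) :
    GermDiffeomorphic
      (fun p : ℝ × ℝ => φ (γ p.1, deriv γ p.1, p.2)) (t₀, (0 : ℝ))
      (fun p : ℝ × ℝ => ![p.1, p.2 ^ 2, p.2 ^ 3]) ((0 : ℝ), (0 : ℝ)) := by
  let f : ℝ × ℝ → Fin 3 → ℝ := fun p => φ (γ p.1, deriv γ p.1, p.2)
  let J : ℝ × ℝ → (Fin 3 → ℝ) × (Fin 3 → ℝ) × ℝ := fun p => (γ p.1, deriv γ p.1, p.2)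
  have hdγ : ContDiffOn ℝ ∞ (deriv γ) I := ((contDiffOn_infty_iff_deriv_of_isOpen hI).1 hγ).2
  have hJ : ContDiffOn ℝ ∞ J (Prod.fst ⁻¹' I) :=
    (hγ.comp contDiffOn_fst (mapsTo_preimage _ _)).prodMk
      ((hdγ.comp contDiffOn_fst (mapsTo_preimage _ _)).prodMk contDiffOn_snd)
  let N : Set (ℝ × ℝ) := Prod.fst ⁻¹' I ∩ J ⁻¹' W
  have hN : IsOpen N := hJ.continuousOn.isOpen_inter_preimage (hI.preimage continuous_fst)
    hφ.isOpen_W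
  have hf : ContDiffOn ℝ ∞ f N :=
    hφ.smooth.comp (hJ.mono inter_subset_left) (fun p hp => hp.2)
  have hp : (t₀, (0 : ℝ)) ∈ N := ⟨ht₀, hφ.mem_zero _ (hγΩ _ ht₀) _⟩
  obtain ⟨β, δ, A, K, hβ, hδ, hA, hK, hexp⟩ := expansion hN hf hp
  have hc : Tendsto (fun t : ℝ => (t, (0 : ℝ))) (𝓝 t₀) (𝓝 (t₀, 0)) :=
    Continuous.tendsto (by fun_prop) t₀
  -- position along the curve
  have hγβ : γ =ᶠ[𝓝 t₀] β := by
    filter_upwards [hc.eventually hexp, hI.mem_nhds ht₀] with t h1 h2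
    have h3 : f (t, 0) = γ t := hφ.init_pos _ (hγΩ t h2) _
    rw [← h3, h1]; simp
  have hcs : ∀ t : ℝ, Tendsto (fun s : ℝ => (t, s)) (𝓝 0) (𝓝 (t, 0)) := fun t =>
    Continuous.tendsto (by fun_prop) 0
  -- velocity
  have hδ0 : ∀ᶠ t in 𝓝 t₀, δ t = 0 := by
    filter_upwards [hc.eventually hexp.eventually_nhds, hI.mem_nhds ht₀, hγβ.deriv] with t h1 h2 h3
    have v : deriv (fun s => f (t, s)) 0 = deriv γ t := hφ.init_vel _ (hγΩ t h2) (deriv γ t)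
    have ev : (fun s => f (t, s)) =ᶠ[𝓝 0] fun s => β (t + s) + s • δ (t + s)
        + s ^ 2 • A (t + s, s ^ 2) + s ^ 3 • K (t + s, s ^ 2) := (hcs t).eventually h1
    rw [ev.deriv_eq] at v
    have sh : HasDerivAt (fun s : ℝ => t + s) 1 0 := (hasDerivAt_id' (0 : ℝ)).const_add t
    have b1 : HasDerivAt (fun s => β (t + s)) (deriv β t) 0 := by
      have : HasDerivAt β (deriv β t) (t + 0) := by
        rw [add_zero]; exact ((contDiff_infty_iff_deriv.1 hβ).1 t).hasDerivAt
      simpa using this.comp_const_add t 0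
    have dδ : DifferentiableAt ℝ (fun s => δ (t + s)) 0 :=
      ((contDiff_infty_iff_deriv.1 hδ).1 _).comp _ sh.differentiableAt
    have dA : DifferentiableAt ℝ (fun s : ℝ => A (t + s, s ^ 2)) 0 :=
      (hA.differentiable (by simp) _).comp _ (by fun_prop)
    have dK : DifferentiableAt ℝ (fun s : ℝ => K (t + s, s ^ 2)) 0 :=
      (hK.differentiable (by simp) _).comp _ (by fun_prop)
    have tot := ((b1.add ((hasDerivAt_id' (0 : ℝ)).smul dδ.hasDerivAt)).add
      ((hasDerivAt_pow 2 (0 : ℝ)).smul dA.hasDerivAt)).add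
      ((hasDerivAt_pow 3 (0 : ℝ)).smul dK.hasDerivAt)
    have v2 := tot.deriv.symm.trans v
    rw [h3] at v2
    simpa using v2
  have hadd : Tendsto (fun p : ℝ × ℝ => p.1 + p.2) (𝓝 (t₀, 0)) (𝓝 t₀) := by
    have : Continuous (fun p : ℝ × ℝ => p.1 + p.2) := by fun_prop
    simpa using this.tendsto (t₀, (0 : ℝ))
  let x : ℝ × ℝ → Fin 3 → ℝ := fun p => β (p.1 + p.2)
        + p.2 ^ 2 • A (p.1 + p.2, p.2 ^ 2) + p.2 ^ 3 • K (p.1 + p.2, p.2 ^ 2)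
  have hexp' : f =ᶠ[𝓝 (t₀, 0)] x := by
    filter_upwards [hexp, hadd.eventually hδ0] with p h1 h2
    rw [h1, h2]; simp [x]
  have hgeo : ∀ᶠ p in 𝓝 (t₀, (0 : ℝ)), ∀ l, deriv (deriv (fun s => x (p.1, s) l)) p.2 +
      ∑ μ, ∑ ν, Γ (x p) l μ ν * deriv (fun s => x (p.1, s) μ) p.2 *
        deriv (fun s => x (p.1, s) ν) p.2 = 0 := by
    filter_upwards [hexp'.eventually_nhds, hN.mem_nhds hp] with p h1 h2 l
    have h3 := hφ.geodesic (J p) h2.2 l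
    have hcp : Tendsto (fun s : ℝ => (p.1, s)) (𝓝 p.2) (𝓝 p) :=
      Continuous.tendsto (f := fun s : ℝ => (p.1, s)) (by fun_prop) p.2
    have ev : ∀ μ, (fun s => φ ((J p).1, (J p).2.1, s) μ) =ᶠ[𝓝 p.2] fun s => x (p.1, s) μ := by
      intro μ
      filter_upwards [hcp.eventually h1] with s hs
      exact congrFun hs μ
    have e0 : φ (J p) = x p := h1.self_of_nhds
    have e1 : ∀ μ, deriv (fun s => φ ((J p).1, (J p).2.1, s) μ) (J p).2.2
        = deriv (fun s => x (p.1, s) μ) p.2 := fun μ => (ev μ).deriv_eq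
    have e2 : deriv (deriv (fun s => φ ((J p).1, (J p).2.1, s) l)) (J p).2.2
        = deriv (deriv (fun s => x (p.1, s) l)) p.2 := (ev l).deriv.deriv_eq
    rw [e2, e0] at h3
    simp only [e1] at h3
    exact h3
  have hβΩ : β t₀ ∈ Ω := by
    rw [← hγβ.self_of_nhds]; exact hγΩ _ ht₀
  obtain ⟨j0, j1, j2⟩ := jets hTF hβ hA hK
    (fun l μ ν => ((hΓ l μ ν).contDiffAt (hΩ.mem_nhds hβΩ)).differentiableAt (by simp))
    (fun _ => rfl) hgeo
  rw [(covDeriv_congr hγβ 0).self_of_nhds, (covDeriv_congr hγβ 1).self_of_nhds,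
    (covDeriv_congr hγβ 2).self_of_nhds, j0, j1, j2] at hind
  refine germ_of_expansion hβ hA hK hexp' ?_
  rw [Fintype.linearIndependent_iff] at hind ⊢
  intro g hg
  have h := hind ![g 0, -(g 1 / 2), g 2 / 3] (by
    rw [Fin.sum_univ_three] at hg ⊢
    rw [← hg]
    simp [smul_smul])
  intro i
  fin_cases i
  · simpa using h 0
  · simpa using h 1
  · simpa using h 2

end Aux

/-- For a torsion-free connection on an open set `Ω ⊆ ℝ³`, a geodesic flow
`φ`, and a `C^∞` curve `γ : I → Ω`, if `∇γ(t₀), ∇²γ(t₀), ∇³γ(t₀)` are linearly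
independent then the germ at `(t₀, 0)` of the `∇`-tangent surface
`f(t,s) = φ(γ(t), γ'(t), s)` is diffeomorphic to the cuspidal edge `(u,w) ↦ (u, w², w³)`. -/
theorem tangent_surface_cuspidal_edge
    (Γ : (Fin 3 → ℝ) → Fin 3 → Fin 3 → Fin 3 → ℝ)
    (Ω : Set (Fin 3 → ℝ)) (hΩ : IsOpen Ω)
    (hΓ : ∀ l μ ν, ContDiffOn ℝ (⊤ : ℕ∞) (fun x => Γ x l μ ν) Ω)
    (hTF : ∀ x l μ ν, Γ x l μ ν = Γ x l ν μ)
    (W : Set ((Fin 3 → ℝ) × (Fin 3 → ℝ) × ℝ))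
    (φ : (Fin 3 → ℝ) × (Fin 3 → ℝ) × ℝ → Fin 3 → ℝ)
    (hφ : IsGeodesicFlow Γ Ω W φ)
    (I : Set ℝ) (hI : IsOpen I) (hI' : I.OrdConnected)
    (γ : ℝ → Fin 3 → ℝ) (hγ : ContDiffOn ℝ (⊤ : ℕ∞) γ I) (hγΩ : ∀ t ∈ I, γ t ∈ Ω)
    (t₀ : ℝ) (ht₀ : t₀ ∈ I)
    (hind : LinearIndependent ℝ
      ![covDeriv Γ γ 0 t₀, covDeriv Γ γ 1 t₀, covDeriv Γ γ 2 t₀]) :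
    GermDiffeomorphic
      (fun p : ℝ × ℝ => φ (γ p.1, deriv γ p.1, p.2)) (t₀, (0 : ℝ))
      (fun p : ℝ × ℝ => ![p.1, p.2 ^ 2, p.2 ^ 3]) ((0 : ℝ), (0 : ℝ)) := by
  exact main_aux hΩ hΓ hTF hφ hI hγ hγΩ ht₀ hind
end
end

section
/- Let Ω ⊆ ℝ³ be open with torsion-free C^∞ Christoffel symbols Γ^λ_{μν} : Ω → ℝ, let φ : W → Ω be a geodesic flow, let γ : I → Ω be a C^∞ curve on an open interval I, and let f(t,s) = φ(γ(t), γ'(t), s) be the ∇-tangent surface, defined on a neighborhood of (t₀,0) in I × ℝ. If (∇γ)(t₀), (∇²γ)(t₀), (∇³γ)(t₀) are linearly dependent while (∇γ)(t₀), (∇²γ)(t₀), (∇⁴γ)(t₀) are linearly independent, then the germ of f at (t₀,0) is diffeomorphic to the folded umbrella (t,s) ↦ (t+s, t²+2st, t⁴+4st³). -/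
open Set

noncomputable section

open scoped ContDiff Topology
open Filter
open MeasureTheory

/-- coefficients of the entire function `z ↦ cos √z`. -/
noncomputable def cosSqrtCoeff (n : ℕ) : ℝ := (-1) ^ n / (2 * n).factorial

theorem exists_entire_cosSqrt : ∃ c : ℝ → ℝ, ContDiff ℝ ∞ c ∧ ∀ s, c (s ^ 2) = Real.cos s := by
  have hrad : (FormalMultilinearSeries.ofScalars ℝ cosSqrtCoeff).radius = ⊤ := by
    apply FormalMultilinearSeries.ofScalars_radius_eq_top_of_tendsto
    · refine Eventually.of_forall fun n => ?_
      simp [cosSqrtCoeff, Nat.factorial_ne_zero]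
    · have h1 : ∀ n : ℕ, ‖cosSqrtCoeff n.succ‖ / ‖cosSqrtCoeff n‖
          = 1 / (2 * (n : ℝ) + 2) * (1 / (2 * (n : ℝ) + 1)) := by
        intro n
        have : (2 * n.succ).factorial = (2 * n + 2) * ((2 * n + 1) * (2 * n).factorial) := by
          rw [show 2 * n.succ = (2 * n + 1) + 1 by omega, Nat.factorial_succ, Nat.factorial_succ]
        simp only [cosSqrtCoeff, norm_div, norm_pow, norm_neg, norm_one, one_pow, this]
        have hf : ((2 * n).factorial : ℝ) ≠ 0 := by exact_mod_cast Nat.factorial_ne_zero _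
        rw [Real.norm_natCast, Real.norm_natCast]
        push_cast
        field_simp
      simp_rw [h1]
      have h2 : Tendsto (fun n : ℕ => (2 * (n : ℝ) + 2)) atTop atTop :=
        tendsto_atTop_add_const_right _ _ (tendsto_natCast_atTop_atTop.const_mul_atTop two_pos)
      have h3 : Tendsto (fun n : ℕ => (2 * (n : ℝ) + 1)) atTop atTop :=
        tendsto_atTop_add_const_right _ _ (tendsto_natCast_atTop_atTop.const_mul_atTop two_pos)
      simpa using (tendsto_const_nhds (x := (1:ℝ)) |>.div_atTop h2).mul (tendsto_const_nhds (x := (1:ℝ)) |>.div_atTop h3)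
  refine ⟨FormalMultilinearSeries.ofScalarsSum cosSqrtCoeff, ?_, ?_⟩
  · have h := (FormalMultilinearSeries.ofScalars ℝ cosSqrtCoeff).hasFPowerSeriesOnBall
      (by rw [hrad]; simp)
    have h2 : AnalyticOnNhd ℝ (FormalMultilinearSeries.ofScalars ℝ cosSqrtCoeff).sum univ := by
      have := h.analyticOnNhd
      rwa [hrad, Metric.eball_top] at this
    have h3 := h2.contDiffOn (n := ∞) uniqueDiffOn_univ
    rw [contDiffOn_univ] at h3
    exact h3
  · intro s
    rw [FormalMultilinearSeries.ofScalarsSum_eq_tsum]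
    rw [← (Real.hasSum_cos s).tsum_eq]
    simp only [cosSqrtCoeff, smul_eq_mul]
    congr 1
    ext n
    rw [← pow_mul]
    ring

theorem hasTemperateGrowth_of_iteratedDeriv_bounded {C : ℝ → ℝ} (hC : ContDiff ℝ ∞ C)
    (h : ∀ n, ∃ B, ∀ z, |iteratedDeriv n C z| ≤ B) : C.HasTemperateGrowth := by
  refine ⟨hC, fun n => ?_⟩
  obtain ⟨B, hB⟩ := h n
  refine ⟨0, B, fun x => ?_⟩
  rw [norm_iteratedFDeriv_eq_norm_iteratedDeriv]
  simpa using hB x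

theorem exists_temperate_cosSqrt : ∃ C S : ℝ → ℝ, C.HasTemperateGrowth ∧ S.HasTemperateGrowth ∧
    (∀ s, C (s ^ 2) = Real.cos s) ∧ (∀ s, s * S (s ^ 2) = Real.sin s) := by
  obtain ⟨c, hc, hcos⟩ := exists_entire_cosSqrt
  let C : ℝ → ℝ := fun z => Real.smoothTransition (z + 2) * c z
  have hC : ContDiff ℝ ∞ C := (Real.smoothTransition.contDiff.comp (by fun_prop)).mul hc
  have hCc : ∀ z, -1 < z → C z = c z := fun z hz => by
    simp [C, Real.smoothTransition.one_of_one_le (show 1 ≤ z + 2 by linarith)]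
  have hC0 : ∀ z, z < -2 → C z = 0 := fun z hz => by
    simp [C, Real.smoothTransition.zero_of_nonpos (show z + 2 ≤ 0 by linarith)]
  have hCcos : ∀ s, C (s ^ 2) = Real.cos s := fun s => by
    rw [hCc _ (by nlinarith [sq_nonneg s]), hcos]
  have hsq : ∀ z, 0 < z → C z = Real.cos √z := fun z hz => by
    rw [← hCcos, Real.sq_sqrt hz.le]
  have hd1 : ∀ z, 0 < z → deriv C z = - Real.sin √z * (1 / (2 * √z)) := fun z hz => by
    have h1 : HasDerivAt (fun z => Real.cos √z) (- Real.sin √z * (1 / (2 * √z))) z :=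
      (Real.hasDerivAt_sqrt hz.ne').cos
    have : C =ᶠ[𝓝 z] fun z => Real.cos √z := by
      filter_upwards [lt_mem_nhds hz] with y hy using hsq y hy
    rw [this.deriv_eq, h1.deriv]
  have hode : ∀ n : ℕ, ∀ z, 0 < z → 4 * z * iteratedDeriv (n + 2) C z
      + (4 * n + 2) * iteratedDeriv (n + 1) C z + iteratedDeriv n C z = 0 := by
    intro n
    induction n with
    | zero =>
      intro z hz
      have hz' : √z ≠ 0 := (Real.sqrt_pos.2 hz).ne'
      have : deriv C =ᶠ[𝓝 z] fun z => - Real.sin √z * (1 / (2 * √z)) := by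
        filter_upwards [lt_mem_nhds hz] with y hy using hd1 y hy
      have h1 : HasDerivAt (fun z => - Real.sin √z * (1 / (2 * √z)))
          (-(Real.cos √z * (1 / (2 * √z))) * (1 / (2 * √z)) + - Real.sin √z *
          ((0 * (2 * √z) - 1 * (2 * (1 / (2 * √z)))) / (2 * √z) ^ 2)) z :=
        (Real.hasDerivAt_sqrt hz.ne').sin.neg.mul
          ((hasDerivAt_const z 1).div ((Real.hasDerivAt_sqrt hz.ne').const_mul 2) (by positivity))
      rw [iteratedDeriv_succ, iteratedDeriv_one, iteratedDeriv_zero, this.deriv_eq, h1.deriv,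
        hd1 z hz, hsq z hz]
      have h4 : z = √z ^ 2 := (Real.sq_sqrt hz.le).symm
      generalize √z = r at *
      subst h4
      push_cast
      field_simp
      ring
    | succ n ih =>
      intro z hz
      have hd : ∀ k : ℕ, HasDerivAt (iteratedDeriv k C) (iteratedDeriv (k + 1) C z) z := by
        intro k
        rw [iteratedDeriv_succ]
        exact ((hC.differentiable_iteratedDeriv k (by exact_mod_cast WithTop.coe_lt_top _)) z).hasDerivAt
      have h1 := ((((hasDerivAt_id z).const_mul 4).mul (hd (n + 2))).add
        ((hd (n + 1)).const_mul (4 * (n : ℝ) + 2))).add (hd n)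
      have h2 : (fun z => 4 * z * iteratedDeriv (n + 2) C z
        + (4 * n + 2) * iteratedDeriv (n + 1) C z + iteratedDeriv n C z) =ᶠ[𝓝 z] fun _ => 0 := by
        filter_upwards [lt_mem_nhds hz] with y hy using ih y hy
      have h3 := h1.congr_of_eventuallyEq (f₁ := fun _ => (0:ℝ)) (by
        filter_upwards [h2] with y hy
        simpa using hy.symm)
      have h4 := h3.unique (hasDerivAt_const z 0)
      simp only [id] at h4
      push_cast
      linear_combination h4
  have hcpt : ∀ n, ∃ B, ∀ z ∈ Icc (-3 : ℝ) 1, |iteratedDeriv n C z| ≤ B := fun n => by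
    have := isCompact_Icc.exists_bound_of_continuousOn (f := iteratedDeriv n C)
      (s := Icc (-3 : ℝ) 1) (hC.continuous_iteratedDeriv n (by exact_mod_cast le_top)).continuousOn
    simpa using this
  have hneg : ∀ n z, z < -2 → iteratedDeriv n C z = 0 := by
    intro n z hz
    have : C =ᶠ[𝓝 z] fun _ => 0 := by
      filter_upwards [gt_mem_nhds hz] with y hy using hC0 y hy
    rw [this.iteratedDeriv_eq]
    simp
  have hpos : ∀ n, (∃ B, ∀ z, 1 ≤ z → |iteratedDeriv n C z| ≤ B) ∧
      (∃ B, ∀ z, 1 ≤ z → |iteratedDeriv (n + 1) C z| ≤ B) := by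
    intro n
    induction n with
    | zero =>
      refine ⟨⟨1, fun z hz => ?_⟩, ⟨1, fun z hz => ?_⟩⟩
      · rw [iteratedDeriv_zero, hsq z (by linarith)]
        exact Real.abs_cos_le_one _
      · rw [zero_add, iteratedDeriv_one, hd1 z (by linarith), abs_mul, abs_neg]
        have h1 : 1 ≤ √z := Real.one_le_sqrt.2 hz
        have h2 : |1 / (2 * √z)| ≤ 1 := by
          rw [abs_of_pos (by positivity), div_le_one (by positivity)]
          linarith
        nlinarith [Real.abs_sin_le_one √z, abs_nonneg (Real.sin √z), abs_nonneg (1 / (2 * √z))]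
    | succ n ih =>
      obtain ⟨⟨B0, h0⟩, ⟨B1, h1⟩⟩ := ih
      refine ⟨⟨B1, h1⟩, ⟨(4 * n + 2) * B1 + B0, fun z hz => ?_⟩⟩
      have h := hode n z (by linarith)
      have e : 4 * z * iteratedDeriv (n + 2) C z =
        - ((4 * n + 2) * iteratedDeriv (n + 1) C z + iteratedDeriv n C z) := by linarith
      have e2 : 4 * z * |iteratedDeriv (n + 2) C z| ≤ (4 * n + 2) * B1 + B0 := by
        calc 4 * z * |iteratedDeriv (n + 2) C z| = |4 * z * iteratedDeriv (n + 2) C z| := by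
              rw [abs_mul, abs_of_pos (show 0 < 4 * z by linarith)]
          _ = |(4 * n + 2) * iteratedDeriv (n + 1) C z + iteratedDeriv n C z| := by rw [e, abs_neg]
          _ ≤ |(4 * n + 2) * iteratedDeriv (n + 1) C z| + |iteratedDeriv n C z| := abs_add_le _ _
          _ = (4 * n + 2) * |iteratedDeriv (n + 1) C z| + |iteratedDeriv n C z| := by
              rw [abs_mul, abs_of_pos (show (0:ℝ) < 4 * n + 2 by positivity)]
          _ ≤ _ := by
              have := h1 z hz
              have := h0 z hz
              gcongr
      have : |iteratedDeriv (n + 2) C z| ≤ 4 * z * |iteratedDeriv (n + 2) C z| := by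
        nlinarith [abs_nonneg (iteratedDeriv (n + 2) C z)]
      exact this.trans e2
  have hbd : ∀ n, ∃ B, ∀ z, |iteratedDeriv n C z| ≤ B := by
    intro n
    obtain ⟨B1, h1⟩ := hcpt n
    obtain ⟨B2, h2⟩ := (hpos n).1
    refine ⟨max (max B1 B2) 0, fun z => ?_⟩
    rcases lt_or_ge z (-2) with hz | hz
    · rw [hneg n z hz]; simp
    rcases le_or_gt 1 z with hz' | hz'
    · exact (h2 z hz').trans (by simp)
    · exact (h1 z ⟨by linarith, hz'.le⟩).trans (by simp)
  have hCt := hasTemperateGrowth_of_iteratedDeriv_bounded hC hbd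
  have hDt : (deriv C).HasTemperateGrowth := by
    apply hasTemperateGrowth_of_iteratedDeriv_bounded
    · exact ((contDiff_infty_iff_deriv).1 hC).2
    · intro n
      simpa [iteratedDeriv_succ'] using hbd (n + 1)
  refine ⟨C, fun z => (-2) * deriv C z, hCt, by fun_prop, hCcos, fun s => ?_⟩
  have h1 : HasDerivAt (fun s => C (s ^ 2)) (deriv C (s ^ 2) * (2 * s)) s := by
    have : HasDerivAt C (deriv C (s ^ 2)) (s ^ 2) :=
      (hC.differentiable (by simp) _).hasDerivAt
    have h2 := HasDerivAt.comp (h := fun s : ℝ => s ^ 2) s this (hasDerivAt_pow 2 s)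
    have h3 : HasDerivAt (fun s => C (s ^ 2)) _ s := h2
    simpa using h3
  have h2 : HasDerivAt (fun s => C (s ^ 2)) (- Real.sin s) s := by
    simp_rw [hCcos]
    exact Real.hasDerivAt_cos s
  have := h1.unique h2
  linarith

theorem hasTemperateGrowth_cos_sin : Real.cos.HasTemperateGrowth ∧ Real.sin.HasTemperateGrowth := by
  have h : ∀ n, (∀ z, |iteratedDeriv n Real.cos z| ≤ 1) ∧ (∀ z, |iteratedDeriv n Real.sin z| ≤ 1) := by
    intro n
    induction n with
    | zero => simp [Real.abs_cos_le_one, Real.abs_sin_le_one]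
    | succ n ih =>
      rw [Real.iteratedDeriv_add_one_cos, Real.iteratedDeriv_add_one_sin]
      exact ⟨fun z => by simpa using ih.2 z, ih.1⟩
  exact ⟨hasTemperateGrowth_of_iteratedDeriv_bounded Real.contDiff_cos fun n => ⟨1, (h n).1⟩,
    hasTemperateGrowth_of_iteratedDeriv_bounded Real.contDiff_sin fun n => ⟨1, (h n).2⟩⟩

theorem hasTemperateGrowth_fderiv' {E F : Type} [NormedAddCommGroup E] [NormedSpace ℝ E]
    [NormedAddCommGroup F] [NormedSpace ℝ F] {K : E → F} (hK : K.HasTemperateGrowth) :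
    (fderiv ℝ K).HasTemperateGrowth := by
  refine ⟨((contDiff_infty_iff_fderiv).1 hK.1).2, fun n => ?_⟩
  obtain ⟨k, C, h⟩ := hK.2 (n + 1)
  exact ⟨k, C, fun x => by rw [norm_iteratedFDeriv_fderiv]; exact h x⟩

section param
variable {E V : Type} [NormedAddCommGroup E] [NormedSpace ℝ E]
  [NormedAddCommGroup V] [NormedSpace ℝ V] [SecondCountableTopology V]
  [MeasurableSpace V] [BorelSpace V] {μ : Measure V} {ψ : V → ℝ}

theorem integrable_one_add_pow_mul (hψ : ∀ k : ℕ, Integrable (fun v => ‖v‖ ^ k * |ψ v|) μ) (k : ℕ) :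
    Integrable (fun v => (1 + ‖v‖) ^ k * |ψ v|) μ := by
  have : (fun v => (1 + ‖v‖) ^ k * |ψ v|) = fun v => ∑ m ∈ Finset.range (k + 1),
      ((k.choose m : ℝ) * (‖v‖ ^ (k - m) * |ψ v|)) := by
    ext v
    rw [add_pow, Finset.sum_mul]
    refine Finset.sum_congr rfl fun m _ => ?_
    rw [one_pow]; ring
  rw [this]
  exact integrable_finsetSum _ fun m _ => (hψ _).const_mul _

theorem hasFDerivAt_integral_temperate {F : Type} [NormedAddCommGroup F] [NormedSpace ℝ F]
    (hm : AEStronglyMeasurable ψ μ)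
    (hψ : ∀ k : ℕ, Integrable (fun v => ‖v‖ ^ k * |ψ v|) μ)
    {K : E × V → F} (hK : K.HasTemperateGrowth) (e : E) :
    HasFDerivAt (fun e => ∫ v, ψ v • K (e, v) ∂μ)
      (∫ v, ψ v • ((fderiv ℝ K (e, v)).comp (ContinuousLinearMap.inl ℝ E V)) ∂μ) e := by
  have hψ' := integrable_one_add_pow_mul hψ
  have hKc : Continuous K := hK.1.continuous
  have hK' := hasTemperateGrowth_fderiv' hK
  have hK'c : Continuous (fderiv ℝ K) := hK'.1.continuous
  obtain ⟨k0, C0, h0⟩ := hK.2 0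
  obtain ⟨k1, C1, h1⟩ := hK'.2 0
  simp only [norm_iteratedFDeriv_zero] at h0 h1
  have pos0 : 0 ≤ C0 := by
    have := (norm_nonneg _).trans (h0 0)
    simpa using this
  have pos1 : 0 ≤ C1 := by
    have := (norm_nonneg _).trans (h1 0)
    simpa using this
  have key : ∀ (x : E) (v : V), 1 + ‖(x, v)‖ ≤ (1 + ‖x‖) * (1 + ‖v‖) := by
    intro x v
    rw [Prod.norm_def]
    rcases max_cases ‖x‖ ‖v‖ with ⟨h, _⟩ | ⟨h, _⟩ <;> simp only [h] <;>
      nlinarith [norm_nonneg x, norm_nonneg v, mul_nonneg (norm_nonneg x) (norm_nonneg v)]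
  refine hasFDerivAt_integral_of_dominated_of_fderiv_le (s := Metric.ball e 1) (𝕜 := ℝ)
    (F' := fun x v => ψ v • ((fderiv ℝ K (x, v)).comp (ContinuousLinearMap.inl ℝ E V)))
    (bound := fun v => (C1 * (2 + ‖e‖) ^ k1) * ((1 + ‖v‖) ^ k1 * |ψ v|))
    (Metric.ball_mem_nhds _ one_pos) ?_ ?_ ?_ ?_ ?_ ?_
  · exact Eventually.of_forall fun x => hm.smul
      (hKc.comp (Continuous.prodMk_right x)).aestronglyMeasurable
  · refine ((hψ' k0).const_mul (C0 * (1 + ‖e‖) ^ k0)).mono' (hm.smul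
      (hKc.comp (Continuous.prodMk_right e)).aestronglyMeasurable) ?_
    refine Eventually.of_forall fun v => ?_
    rw [norm_smul, Real.norm_eq_abs]
    calc |ψ v| * ‖K (e, v)‖ ≤ |ψ v| * (C0 * ((1 + ‖e‖) * (1 + ‖v‖)) ^ k0) := by
          gcongr
          exact (h0 _).trans (by gcongr; exact key e v)
      _ = _ := by rw [mul_pow]; ring
  · haveI : SecondCountableTopologyEither V (E →L[ℝ] F) := ⟨Or.inl inferInstance⟩
    refine hm.smul (Continuous.aestronglyMeasurable ?_)
    exact (hK'c.comp (Continuous.prodMk_right e)).clm_comp continuous_const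
  · refine Eventually.of_forall fun v x hx => ?_
    rw [norm_smul, Real.norm_eq_abs]
    have hx' : 1 + ‖x‖ ≤ 2 + ‖e‖ := by
      have := norm_le_norm_add_norm_sub' x e
      rw [Metric.mem_ball, dist_eq_norm] at hx
      linarith
    calc |ψ v| * ‖(fderiv ℝ K (x, v)).comp (ContinuousLinearMap.inl ℝ E V)‖
        ≤ |ψ v| * (‖fderiv ℝ K (x, v)‖ * 1) := by
          gcongr
          refine (ContinuousLinearMap.opNorm_comp_le _ _).trans ?_
          gcongr
          exact ContinuousLinearMap.norm_inl_le_one ℝ E V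
      _ ≤ |ψ v| * (C1 * ((2 + ‖e‖) * (1 + ‖v‖)) ^ k1) := by
          rw [mul_one]
          gcongr
          refine (h1 _).trans ?_
          gcongr
          refine (key x v).trans ?_
          gcongr
      _ = _ := by rw [mul_pow]; ring
  · exact (hψ' k1).const_mul _
  · refine Eventually.of_forall fun v x _ => ?_
    have : HasFDerivAt K (fderiv ℝ K (x, v)) (x, v) :=
      (hK.1.differentiable (by simp) _).hasFDerivAt
    exact (this.comp x (hasFDerivAt_prodMk_left x v)).const_smul (ψ v)

theorem contDiff_integral_temperate_nat 
    (hm : AEStronglyMeasurable ψ μ)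
    (hψ : ∀ k : ℕ, Integrable (fun v => ‖v‖ ^ k * |ψ v|) μ) (n : ℕ) :
    ∀ {F : Type} [NormedAddCommGroup F] [NormedSpace ℝ F]
    {K : E × V → F} (_ : K.HasTemperateGrowth),
    ContDiff ℝ n (fun e => ∫ v, ψ v • K (e, v) ∂μ) := by
  induction n with
  | zero =>
    intro F _ _ K hK
    simp only [Nat.cast_zero, contDiff_zero]
    have hd : Differentiable ℝ (fun e => ∫ v, ψ v • K (e, v) ∂μ) :=
      fun e => (hasFDerivAt_integral_temperate hm hψ hK e).differentiableAt
    exact hd.continuous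
  | succ n ih =>
    intro F _ _ K hK
    push_cast
    rw [contDiff_succ_iff_fderiv]
    refine ⟨fun e => (hasFDerivAt_integral_temperate hm hψ hK e).differentiableAt, by simp, ?_⟩
    have : fderiv ℝ (fun e => ∫ v, ψ v • K (e, v) ∂μ) = fun e =>
      ∫ v, ψ v • ((fderiv ℝ K (e, v)).comp (ContinuousLinearMap.inl ℝ E V)) ∂μ := by
      ext1 e
      exact (hasFDerivAt_integral_temperate hm hψ hK e).fderiv
    rw [this]
    have hK' := hasTemperateGrowth_fderiv' hK
    have h2 : (fun x => (fderiv ℝ K x).comp (ContinuousLinearMap.inl ℝ E V)).HasTemperateGrowth :=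
      ((ContinuousLinearMap.compL ℝ E (E × V) F).flip
        (ContinuousLinearMap.inl ℝ E V)).hasTemperateGrowth.comp hK'
    exact ih h2

theorem contDiff_integral_temperate {F : Type} [NormedAddCommGroup F] [NormedSpace ℝ F]
    (hm : AEStronglyMeasurable ψ μ)
    (hψ : ∀ k : ℕ, Integrable (fun v => ‖v‖ ^ k * |ψ v|) μ)
    {K : E × V → F} (hK : K.HasTemperateGrowth) :
    ContDiff ℝ ∞ (fun e => ∫ v, ψ v • K (e, v) ∂μ) :=
  contDiff_infty.2 fun n => contDiff_integral_temperate_nat hm hψ n hK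

theorem integrable_temperate {F : Type} [NormedAddCommGroup F] [NormedSpace ℝ F]
    (hm : AEStronglyMeasurable ψ μ)
    (hψ : ∀ k : ℕ, Integrable (fun v => ‖v‖ ^ k * |ψ v|) μ)
    {K : V → F} (hK : K.HasTemperateGrowth) :
    Integrable (fun v => ψ v • K v) μ := by
  have hψ' := integrable_one_add_pow_mul hψ
  obtain ⟨k0, C0, h0⟩ := hK.2 0
  simp only [norm_iteratedFDeriv_zero] at h0
  refine ((hψ' k0).const_mul C0).mono' (hm.smul hK.1.continuous.aestronglyMeasurable) ?_
  refine Eventually.of_forall fun v => ?_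
  rw [norm_smul, Real.norm_eq_abs]
  calc |ψ v| * ‖K v‖ ≤ |ψ v| * (C0 * (1 + ‖v‖) ^ k0) := by
        gcongr
        exact h0 _
    _ = _ := by ring
end param

/-- The Euclidean plane. -/
abbrev PlaneV : Type := EuclideanSpace ℝ (Fin 2)

open FourierTransform in
theorem whitney_global (g : ℝ × ℝ → ℝ) (hg : ContDiff ℝ ∞ g) (hgs : HasCompactSupport g) :
    ∃ p q : ℝ × ℝ → ℝ, ContDiff ℝ ∞ p ∧ ContDiff ℝ ∞ q ∧
      ∀ x s, g (x, s) = p (x, s ^ 2) + s * q (x, s ^ 2) := by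
  obtain ⟨C, S, hC, hS, hCc, hSs⟩ := exists_temperate_cosSqrt
  obtain ⟨hcos, hsin⟩ := hasTemperateGrowth_cos_sin
  let ι : PlaneV ≃L[ℝ] ℝ × ℝ := (EuclideanSpace.equiv (Fin 2) ℝ).trans
    (ContinuousLinearEquiv.finTwoArrow ℝ ℝ)
  have hι : ∀ v : PlaneV, ι v = (v 0, v 1) := fun v => rfl
  let G : PlaneV → ℂ := fun v => (g (ι v) : ℂ)
  have hG1 : ContDiff ℝ ∞ G := Complex.ofRealCLM.contDiff.comp (hg.comp ι.contDiff)
  have hG2 : HasCompactSupport G := by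
    have := hgs.comp_homeomorph ι.toHomeomorph
    exact this.comp_left (g := fun x : ℝ => (x : ℂ)) (by simp)
  let Gs : SchwartzMap PlaneV ℂ := hG2.toSchwartzMap hG1
  let H : SchwartzMap PlaneV ℂ := 𝓕 Gs
  have inv : ∀ w : PlaneV, (g (ι w) : ℂ) = ∫ v, Complex.exp ((↑(2 * Real.pi * inner ℝ v w) * Complex.I)) • H v := by
    intro w
    have h1 : 𝓕⁻ H = Gs := FourierTransform.fourierInv_fourier_eq Gs
    have h2 : (𝓕⁻ H) w = G w := by rw [h1]; rfl
    rw [SchwartzMap.fourierInv_coe, Real.fourierInv_eq'] at h2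
    exact h2.symm
  have hHi : Integrable H := H.integrable
  have hre : ∀ k : ℕ, Integrable (fun v => ‖v‖ ^ k * |(H v).re|) := fun k => by
    refine (H.integrable_pow_mul volume k).mono' ?_ ?_
    · exact Continuous.aestronglyMeasurable (by have := H.continuous; fun_prop)
    · refine Eventually.of_forall fun v => ?_
      rw [norm_mul, norm_pow, norm_norm, Real.norm_eq_abs, abs_abs]
      gcongr
      exact Complex.abs_re_le_norm _
  have him : ∀ k : ℕ, Integrable (fun v => ‖v‖ ^ k * |(H v).im|) := fun k => by
    refine (H.integrable_pow_mul volume k).mono' ?_ ?_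
    · exact Continuous.aestronglyMeasurable (by have := H.continuous; fun_prop)
    · refine Eventually.of_forall fun v => ?_
      rw [norm_mul, norm_pow, norm_norm, Real.norm_eq_abs, abs_abs]
      gcongr
      exact Complex.abs_im_le_norm _
  have mre : AEStronglyMeasurable (fun v => (H v).re) (volume : Measure PlaneV) :=
    Continuous.aestronglyMeasurable (by have := H.continuous; fun_prop)
  have mim : AEStronglyMeasurable (fun v => (H v).im) (volume : Measure PlaneV) :=
    Continuous.aestronglyMeasurable (by have := H.continuous; fun_prop)
  -- the coordinates
  let a : (ℝ × ℝ) × PlaneV → ℝ := fun y => 2 * Real.pi * (y.1.1 * y.2 0)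
  let z : (ℝ × ℝ) × PlaneV → ℝ := fun y => y.1.2 * (2 * Real.pi * y.2 1) ^ 2
  have hx1 : (fun y : (ℝ × ℝ) × PlaneV => y.1.1).HasTemperateGrowth :=
    ((ContinuousLinearMap.fst ℝ ℝ ℝ).comp (ContinuousLinearMap.fst ℝ (ℝ × ℝ) PlaneV)).hasTemperateGrowth
  have hx2 : (fun y : (ℝ × ℝ) × PlaneV => y.1.2).HasTemperateGrowth :=
    ((ContinuousLinearMap.snd ℝ ℝ ℝ).comp (ContinuousLinearMap.fst ℝ (ℝ × ℝ) PlaneV)).hasTemperateGrowth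
  have hv : ∀ i, (fun y : (ℝ × ℝ) × PlaneV => y.2 i).HasTemperateGrowth := fun i =>
    ((EuclideanSpace.proj i : PlaneV →L[ℝ] ℝ).comp (ContinuousLinearMap.snd ℝ (ℝ × ℝ) PlaneV)).hasTemperateGrowth
  have hv0 := hv 0
  have hv1 := hv 1
  have ha : a.HasTemperateGrowth := by fun_prop
  have hz : z.HasTemperateGrowth := by fun_prop
  have hca : (fun y => Real.cos (a y)).HasTemperateGrowth := hcos.comp ha
  have hsa : (fun y => Real.sin (a y)).HasTemperateGrowth := hsin.comp ha
  have hCz : (fun y => C (z y)).HasTemperateGrowth := hC.comp hz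
  have hSz : (fun y => 2 * Real.pi * y.2 1 * S (z y)).HasTemperateGrowth := by
    have : (fun y => S (z y)).HasTemperateGrowth := hS.comp hz
    fun_prop
  have k1 := hca.fun_mul hCz
  have k2 := hsa.fun_mul hCz
  have k3 := hca.fun_mul hSz
  have k4 := hsa.fun_mul hSz
  have slice : ∀ {K : (ℝ × ℝ) × PlaneV → ℝ}, K.HasTemperateGrowth → ∀ e : ℝ × ℝ,
      (fun v => K (e, v)).HasTemperateGrowth := by
    intro K hK e
    have : (fun v : PlaneV => ((e, v) : (ℝ × ℝ) × PlaneV)).HasTemperateGrowth := by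
      have h := (Function.HasTemperateGrowth.const (E := PlaneV) ((e, 0) : (ℝ × ℝ) × PlaneV)).add
        (ContinuousLinearMap.inr ℝ (ℝ × ℝ) PlaneV).hasTemperateGrowth
      convert h using 1
      ext v <;> simp
    exact hK.comp this
  refine ⟨fun e => (∫ v, (H v).re • (Real.cos (a (e, v)) * C (z (e, v)))) - 
      ∫ v, (H v).im • (Real.sin (a (e, v)) * C (z (e, v))), 
      fun e => - (∫ v, (H v).re • (Real.sin (a (e, v)) * (2 * Real.pi * v 1 * S (z (e, v))))) - 
      ∫ v, (H v).im • (Real.cos (a (e, v)) * (2 * Real.pi * v 1 * S (z (e, v)))), ?_, ?_, ?_⟩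
  · exact (contDiff_integral_temperate mre hre k1).sub (contDiff_integral_temperate mim him k2)
  · exact (contDiff_integral_temperate mre hre k4).neg.sub (contDiff_integral_temperate mim him k3)
  intro x s
  have h := congrArg Complex.re (inv (ι.symm (x, s)))
  rw [ι.apply_symm_apply, Complex.ofReal_re] at h
  have hInteg : Integrable (fun v => Complex.exp ((↑(2 * Real.pi * inner ℝ v (ι.symm (x, s))) * Complex.I)) • H v) := by
    refine hHi.norm.mono' (Continuous.aestronglyMeasurable ?_) (Eventually.of_forall fun v => ?_)
    · have := H.continuous
      fun_prop
    · rw [norm_smul, Complex.norm_exp_ofReal_mul_I, one_mul]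
  have h2 : (∫ v, Complex.exp ((↑(2 * Real.pi * inner ℝ v (ι.symm (x, s))) * Complex.I)) • H v).re
     = ∫ v, (Complex.exp ((↑(2 * Real.pi * inner ℝ v (ι.symm (x, s))) * Complex.I)) • H v).re := by
    have := Complex.reCLM.integral_comp_comm hInteg
    simpa using this.symm
  rw [h, h2]
  beta_reduce
  have i1 : Integrable (fun v => (H v).re • (Real.cos (a ((x, s ^ 2), v)) * C (z ((x, s ^ 2), v)))) :=
    integrable_temperate mre hre (slice k1 (x, s ^ 2))
  have i2 : Integrable (fun v => (H v).im • (Real.sin (a ((x, s ^ 2), v)) * C (z ((x, s ^ 2), v)))) :=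
    integrable_temperate mim him (slice k2 (x, s ^ 2))
  have i3 : Integrable (fun v => (H v).im • (Real.cos (a ((x, s ^ 2), v)) *
      (2 * Real.pi * v 1 * S (z ((x, s ^ 2), v))))) :=
    integrable_temperate mim him (slice k3 (x, s ^ 2))
  have i4 : Integrable (fun v => -((H v).re • (Real.sin (a ((x, s ^ 2), v)) *
      (2 * Real.pi * v 1 * S (z ((x, s ^ 2), v)))))) :=
    (integrable_temperate mre hre (slice k4 (x, s ^ 2))).neg
  rw [← integral_sub i1 i2, ← integral_neg, ← integral_sub i4 i3, ← integral_const_mul,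
    ← integral_add]
  · refine integral_congr_ae (Eventually.of_forall fun v => ?_)
    have hin : inner ℝ v (ι.symm (x, s)) = x * v 0 + s * v 1 := by
      rw [PiLp.inner_apply]
      simp only [Fin.sum_univ_two]
      rfl
    simp only [smul_eq_mul, Complex.mul_re, Complex.exp_ofReal_mul_I_re, Complex.exp_ofReal_mul_I_im]
    rw [hin, show 2 * Real.pi * (x * v 0 + s * v 1) = 2 * Real.pi * (x * v 0) + s * (2 * Real.pi * v 1) by ring,
      Real.cos_add, Real.sin_add]
    have e1 := hCc (s * (2 * Real.pi * v 1))
    have e2 := hSs (s * (2 * Real.pi * v 1))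
    have e3 : z ((x, s ^ 2), v) = (s * (2 * Real.pi * v 1)) ^ 2 := by simp only [z]; ring
    rw [e3, e1, ← e2]
    simp only [a]
    ring
  · exact i1.sub i2
  · exact (i4.sub i3).const_mul s

section smoothnear
variable {E F G : Type} [NormedAddCommGroup E] [NormedSpace ℝ E]
  [NormedAddCommGroup F] [NormedSpace ℝ F] [NormedAddCommGroup G] [NormedSpace ℝ G]

/-- `f` is smooth in a neighbourhood of `x`. -/
def SmoothNear (f : E → F) (x : E) : Prop := ∀ᶠ y in 𝓝 x, ContDiffAt ℝ ∞ f y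

theorem SmoothNear.contDiffAt {f : E → F} {x : E} (h : SmoothNear f x) : ContDiffAt ℝ ∞ f x :=
  h.self_of_nhds

theorem SmoothNear.continuousAt {f : E → F} {x : E} (h : SmoothNear f x) : ContinuousAt f x :=
  h.contDiffAt.continuousAt

theorem SmoothNear.differentiableAt {f : E → F} {x : E} (h : SmoothNear f x) :
    DifferentiableAt ℝ f x :=
  h.contDiffAt.differentiableAt (by simp)

theorem SmoothNear.eventually {f : E → F} {x : E} (h : SmoothNear f x) :
    ∀ᶠ y in 𝓝 x, SmoothNear f y := eventually_eventually_nhds.2 h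

theorem ContDiff.smoothNear {f : E → F} (h : ContDiff ℝ ∞ f) (x : E) : SmoothNear f x :=
  Eventually.of_forall fun _ => h.contDiffAt

theorem ContDiffOn.smoothNear {f : E → F} {U : Set E} (h : ContDiffOn ℝ ∞ f U) (hU : IsOpen U)
    {x : E} (hx : x ∈ U) : SmoothNear f x := by
  filter_upwards [hU.mem_nhds hx] with y hy
  exact h.contDiffAt (hU.mem_nhds hy)

theorem SmoothNear.congr {f g : E → F} {x : E} (h : SmoothNear f x) (hfg : g =ᶠ[𝓝 x] f) :
    SmoothNear g x := by
  filter_upwards [h, eventually_eventually_nhds.2 hfg] with y h1 h2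
  exact h1.congr_of_eventuallyEq h2

theorem SmoothNear.comp {g : F → G} {f : E → F} {x : E} (hg : SmoothNear g (f x))
    (hf : SmoothNear f x) : SmoothNear (fun y => g (f y)) x := by
  filter_upwards [hf, hf.continuousAt.eventually hg] with y h1 h2
  exact ContDiffAt.comp y h2 h1

theorem SmoothNear.comp_of_eq {g : F → G} {f : E → F} {x : E} {z : F} (hg : SmoothNear g z)
    (hf : SmoothNear f x) (h : f x = z) : SmoothNear (fun y => g (f y)) x := by
  subst h; exact hg.comp hf

theorem SmoothNear.prodMk {g : E → G} {f : E → F} {x : E} (hf : SmoothNear f x)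
    (hg : SmoothNear g x) : SmoothNear (fun y => (f y, g y)) x := by
  filter_upwards [hf, hg] with y h1 h2
  exact h1.prodMk h2

theorem SmoothNear.add {f g : E → F} {x : E} (hf : SmoothNear f x)
    (hg : SmoothNear g x) : SmoothNear (fun y => f y + g y) x := by
  filter_upwards [hf, hg] with y h1 h2
  exact h1.add h2

theorem SmoothNear.sub {f g : E → F} {x : E} (hf : SmoothNear f x)
    (hg : SmoothNear g x) : SmoothNear (fun y => f y - g y) x := by
  filter_upwards [hf, hg] with y h1 h2
  exact h1.sub h2

theorem SmoothNear.neg {f : E → F} {x : E} (hf : SmoothNear f x) :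
    SmoothNear (fun y => - f y) x := by
  filter_upwards [hf] with y h1
  exact h1.neg

theorem SmoothNear.smul {f : E → ℝ} {g : E → F} {x : E} (hf : SmoothNear f x)
    (hg : SmoothNear g x) : SmoothNear (fun y => f y • g y) x := by
  filter_upwards [hf, hg] with y h1 h2
  exact h1.smul h2

theorem SmoothNear.mul {f : E → ℝ} {g : E → ℝ} {x : E} (hf : SmoothNear f x)
    (hg : SmoothNear g x) : SmoothNear (fun y => f y * g y) x := by
  filter_upwards [hf, hg] with y h1 h2
  exact h1.mul h2

theorem SmoothNear.fderiv_apply {f : E → F} {x : E} (hf : SmoothNear f x) (v : E) :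
    SmoothNear (fun y => fderiv ℝ f y v) x := by
  filter_upwards [hf] with y h1
  exact (h1.fderiv_right (m := ∞) (by simp)).clm_apply contDiffAt_const

theorem SmoothNear.deriv {f : ℝ → F} {x : ℝ} (hf : SmoothNear f x) : SmoothNear (deriv f) x :=
  hf.fderiv_apply 1

/-- Globalization of smooth germs. -/
theorem SmoothNear.globalize [FiniteDimensional ℝ E] {f : E → F} {x : E} (hf : SmoothNear f x) :
    ∃ g : E → F, ContDiff ℝ ∞ g ∧ HasCompactSupport g ∧ g =ᶠ[𝓝 x] f := by
  obtain ⟨r, hr, hball⟩ := Metric.eventually_nhds_iff_ball.1 hf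
  let b : ContDiffBump x := ⟨r / 4, r / 2, by positivity, by linarith⟩
  refine ⟨fun y => b y • f y, ?_, ?_, ?_⟩
  · rw [contDiff_iff_contDiffAt]
    intro y
    by_cases hy : y ∈ Metric.ball x r
    · exact b.contDiff.contDiffAt.smul (hball y hy)
    · have : (fun y => b y • f y) =ᶠ[𝓝 y] fun _ => 0 := by
        have h1 : y ∈ (Metric.closedBall x (r / 2))ᶜ := by
          simp only [Metric.mem_ball, mem_compl_iff, Metric.mem_closedBall] at hy ⊢
          linarith
        filter_upwards [Metric.isClosed_closedBall.isOpen_compl.mem_nhds h1] with z hz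
        have : b z = 0 := by
          apply b.zero_of_le_dist
          simp only [mem_compl_iff, Metric.mem_closedBall] at hz
          simp only [b]; linarith
        simp [this]
      exact contDiffAt_const.congr_of_eventuallyEq this
  · exact b.hasCompactSupport.smul_right
  · filter_upwards [b.eventuallyEq_one] with y hy
    simp [hy]

/-- Parametric Hadamard lemma. -/
theorem hadamard_s3 [FiniteDimensional ℝ E] [FiniteDimensional ℝ F] {f : E × ℝ → F} {x : E} (hf : SmoothNear f (x, 0)) :
    ∃ g : E × ℝ → F, SmoothNear g (x, 0) ∧ ∀ᶠ p in 𝓝 (x, (0 : ℝ)), f p = f (p.1, 0) + p.2 • g p := by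
  have : CompleteSpace F := FiniteDimensional.complete ℝ F
  obtain ⟨h, h1, h2, h3⟩ := hf.globalize
  let D : E × ℝ → F := fun p => fderiv ℝ h p (0, 1)
  have hD1 : ContDiff ℝ ∞ D := (h1.fderiv_right (m := ∞) (by simp)).clm_apply contDiff_const
  have hD2 : HasCompactSupport D := (h2.fderiv (𝕜 := ℝ)).comp_left (g := fun L : E × ℝ →L[ℝ] F => L (0, 1)) (by simp)
  have hD := hD2.hasTemperateGrowth hD1
  let K : (E × ℝ) × ℝ → F := fun y => D (y.1.1, y.2 * y.1.2)
  have hK : K.HasTemperateGrowth := by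
    have a1 : (fun y : (E × ℝ) × ℝ => y.1.1).HasTemperateGrowth :=
      ((ContinuousLinearMap.fst ℝ E ℝ).comp (ContinuousLinearMap.fst ℝ (E × ℝ) ℝ)).hasTemperateGrowth
    have a2 : (fun y : (E × ℝ) × ℝ => y.1.2).HasTemperateGrowth :=
      ((ContinuousLinearMap.snd ℝ E ℝ).comp (ContinuousLinearMap.fst ℝ (E × ℝ) ℝ)).hasTemperateGrowth
    have a3 : (fun y : (E × ℝ) × ℝ => y.2).HasTemperateGrowth :=
      (ContinuousLinearMap.snd ℝ (E × ℝ) ℝ).hasTemperateGrowth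
    have a4 := a3.fun_mul a2
    have a5 : (fun y : (E × ℝ) × ℝ => (y.1.1, y.2 * y.1.2)).HasTemperateGrowth := by
      have b1 := (ContinuousLinearMap.inl ℝ E ℝ).hasTemperateGrowth.comp a1
      have b2 := (ContinuousLinearMap.inr ℝ E ℝ).hasTemperateGrowth.comp a4
      convert b1.add b2 using 1
      ext y <;> simp
    exact hD.comp a5
  let μ : Measure ℝ := volume.restrict (Ioc 0 1)
  have hg := contDiff_integral_temperate (μ := μ) (ψ := fun _ => (1 : ℝ)) (K := K)
    aestronglyMeasurable_const (fun k => by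
      have : Continuous fun v : ℝ => ‖v‖ ^ k * |(1 : ℝ)| := by fun_prop
      exact (this.integrableOn_Icc (a := 0) (b := 1)).mono_set Ioc_subset_Icc_self) hK
  refine ⟨_, hg.smoothNear _, ?_⟩
  have h4 : ∀ᶠ p in 𝓝 (x, (0 : ℝ)), h (p.1, 0) = f (p.1, 0) := by
    have : Tendsto (fun p : E × ℝ => (p.1, (0 : ℝ))) (𝓝 (x, 0)) (𝓝 (x, 0)) := by
      have : Continuous (fun p : E × ℝ => (p.1, (0 : ℝ))) := by fun_prop
      simpa using this.tendsto (x, (0 : ℝ))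
    exact this.eventually h3
  filter_upwards [h3, h4] with p hp1 hp2
  rw [← hp1, ← hp2]
  have hder : ∀ u : ℝ, HasDerivAt (fun u : ℝ => h (p.1, u * p.2)) (p.2 • K (p, u)) u := by
    intro u
    have e1 : HasDerivAt (fun u : ℝ => ((p.1, u * p.2) : E × ℝ)) (0, p.2) u := by
      refine (hasDerivAt_const u p.1).prodMk ?_
      simpa using (hasDerivAt_id u).mul_const p.2
    have e2 := ((h1.differentiable (by simp)) (p.1, u * p.2)).hasFDerivAt.comp_hasDerivAt u e1
    have e3 : p.2 • K (p, u) = fderiv ℝ h (p.1, u * p.2) (0, p.2) := by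
      show p.2 • (fderiv ℝ h (p.1, u * p.2)) (0, 1) = _
      rw [← map_smul]
      congr 1
      simp
    rw [e3]
    exact e2
  have hInteg := intervalIntegral.integral_eq_sub_of_hasDerivAt (a := 0) (b := 1) (fun u _ => hder u)
    (by
      apply Continuous.intervalIntegrable
      have := hK.1.continuous
      fun_prop)
  simp only [one_mul, zero_mul] at hInteg
  rw [intervalIntegral.integral_smul, intervalIntegral.integral_of_le zero_le_one] at hInteg
  simp only [one_smul]
  rw [hInteg]
  simp
end smoothnear

section taylor
variable {E F : Type} [NormedAddCommGroup E] [NormedSpace ℝ E]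
  [NormedAddCommGroup F] [NormedSpace ℝ F]

/-- Partial derivative in the last (real) variable. -/
def ds (f : E × ℝ → F) (p : E × ℝ) : F := fderiv ℝ f p (0, 1)

theorem SmoothNear.ds {f : E × ℝ → F} {p : E × ℝ} (h : SmoothNear f p) : SmoothNear (ds f) p :=
  h.fderiv_apply _

theorem hasDerivAt_ds {f : E × ℝ → F} {p : E × ℝ} (h : DifferentiableAt ℝ f p) :
    HasDerivAt (fun s => f (p.1, s)) (ds f p) p.2 := by
  have e1 : HasDerivAt (fun u : ℝ => ((p.1, u) : E × ℝ)) (0, 1) p.2 :=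
    (hasDerivAt_const p.2 p.1).prodMk (hasDerivAt_id p.2)
  exact h.hasFDerivAt.comp_hasDerivAt p.2 e1

theorem tendsto_line (p : E × ℝ) : Tendsto (fun s : ℝ => (p.1, s)) (𝓝 p.2) (𝓝 p) := by
  have : Continuous (fun s : ℝ => (p.1, s)) := by fun_prop
  exact this.tendsto p.2

theorem tendsto_zero_section (x : E) :
    Tendsto (fun p : E × ℝ => (p.1, (0 : ℝ))) (𝓝 (x, 0)) (𝓝 (x, 0)) := by
  have : Continuous (fun p : E × ℝ => (p.1, (0 : ℝ))) := by fun_prop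
  exact this.tendsto (x, (0 : ℝ))

theorem ds_add_smul {f A B : E × ℝ → F} {p : E × ℝ} (hf : SmoothNear f p) (hA : SmoothNear A p)
    (hB : SmoothNear B p) (h : ∀ᶠ q in 𝓝 p, f q = A q + q.2 • B q) :
    ∀ᶠ q in 𝓝 p, ds f q = (ds A q + B q) + q.2 • ds B q := by
  filter_upwards [hf.eventually, hA.eventually, hB.eventually, eventually_eventually_nhds.2 h]
    with q h1 h2 h3 h4
  have e1 := hasDerivAt_ds h1.differentiableAt
  have e2 := (hasDerivAt_ds h2.differentiableAt).add
    ((hasDerivAt_id q.2).smul (hasDerivAt_ds h3.differentiableAt))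
  have e3 := e2.congr_of_eventuallyEq ((tendsto_line q).eventually h4)
  rw [e1.unique e3]
  simp only [id, one_smul]
  abel

theorem SmoothNear.zero_section {f : E × ℝ → F} {x : E} (hf : SmoothNear f (x, 0)) :
    SmoothNear (fun p : E × ℝ => f (p.1, 0)) (x, 0) := by
  refine SmoothNear.comp_of_eq hf ?_ rfl
  exact ContDiff.smoothNear (by fun_prop) _

theorem ds_fst (c : E → F) (q : E × ℝ) (h : DifferentiableAt ℝ (fun p : E × ℝ => c p.1) q) :
    ds (fun p : E × ℝ => c p.1) q = 0 :=
  (hasDerivAt_ds h).unique (hasDerivAt_const q.2 (c q.1))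

variable [FiniteDimensional ℝ E] [FiniteDimensional ℝ F]

theorem hadamard_ds {f : E × ℝ → F} {x : E} (hf : SmoothNear f (x, 0)) :
    ∃ g : E × ℝ → F, SmoothNear g (x, 0) ∧
      (∀ᶠ p in 𝓝 (x, (0 : ℝ)), f p = f (p.1, 0) + p.2 • g p) ∧
      (∀ᶠ p in 𝓝 (x, (0 : ℝ)), ds f (p.1, 0) = g (p.1, 0)) ∧
      (∀ᶠ p in 𝓝 (x, (0 : ℝ)), ds (ds f) (p.1, 0) = (2 : ℝ) • ds g (p.1, 0)) ∧
      (∀ᶠ p in 𝓝 (x, (0 : ℝ)), ds (ds (ds f)) (p.1, 0) = (3 : ℝ) • ds (ds g) (p.1, 0)) := by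
  obtain ⟨g, hg, h⟩ := hadamard_s3 hf
  have h1 := ds_add_smul hf hf.zero_section hg h
  have h1' : ∀ᶠ q in 𝓝 (x, (0 : ℝ)), ds f q = g q + q.2 • ds g q := by
    filter_upwards [h1, hf.zero_section.eventually] with q hq h2
    rw [hq, ds_fst (fun y => f (y, 0)) _ h2.differentiableAt, zero_add]
  have h2 := ds_add_smul hf.ds hg hg.ds h1'
  have h3 := ds_add_smul hf.ds.ds (hg.ds.add hg.ds) hg.ds.ds h2
  have h4 : ∀ᶠ q in 𝓝 (x, (0 : ℝ)), ds (fun y => ds g y + ds g y) q = ds (ds g) q + ds (ds g) q := by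
    filter_upwards [hg.ds.eventually] with q hq
    exact (hasDerivAt_ds (hq.add hq).differentiableAt).unique
      ((hasDerivAt_ds hq.differentiableAt).add (hasDerivAt_ds hq.differentiableAt))
  have t := tendsto_zero_section x
  refine ⟨g, hg, h, ?_, ?_, ?_⟩
  · filter_upwards [t.eventually h1'] with p hp
    simpa using hp
  · filter_upwards [t.eventually h2] with p hp
    rw [hp, two_smul]; simp
  · filter_upwards [t.eventually h3, t.eventually h4] with p hp hp'
    rw [hp, hp']; module

theorem taylor_ds {f : E × ℝ → F} {x : E} (hf : SmoothNear f (x, 0)) :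
    ∃ R : E × ℝ → F, SmoothNear R (x, 0) ∧
      (∀ᶠ p in 𝓝 (x, (0 : ℝ)), f p = f (p.1, 0) + p.2 • ds f (p.1, 0)
        + (p.2 ^ 2 / 2) • ds (ds f) (p.1, 0) + (p.2 ^ 3 / 6) • ds (ds (ds f)) (p.1, 0)
        + p.2 ^ 4 • R p) := by
  obtain ⟨g1, hg1, a0, a1, a2, a3⟩ := hadamard_ds hf
  obtain ⟨g2, hg2, b0, b1, b2, -⟩ := hadamard_ds hg1
  obtain ⟨g3, hg3, c0, c1, -, -⟩ := hadamard_ds hg2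
  obtain ⟨g4, hg4, d0⟩ := hadamard_s3 hg3
  refine ⟨g4, hg4, ?_⟩
  filter_upwards [a0, a1, a2, a3, b0, b1, b2, c0, c1, d0] with p a0 a1 a2 a3 b0 b1 b2 c0 c1 d0
  rw [a3, a2, a1, b2, b1, c1, a0, b0, c0, d0]
  module

/-- Taylor expansion of `h (x - s)`. -/
theorem taylor_shift {h : ℝ → F} {x : ℝ} (hh : SmoothNear h x) :
    ∃ R : ℝ × ℝ → F, SmoothNear R (x, 0) ∧
      (∀ᶠ p in 𝓝 (x, (0 : ℝ)), h (p.1 - p.2) = h p.1 - p.2 • deriv h p.1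
        + (p.2 ^ 2 / 2) • deriv (deriv h) p.1 - (p.2 ^ 3 / 6) • deriv (deriv (deriv h)) p.1
        + p.2 ^ 4 • R p) := by
  have hsub : Tendsto (fun p : ℝ × ℝ => p.1 - p.2) (𝓝 (x, (0 : ℝ))) (𝓝 x) := by
    have : Continuous (fun p : ℝ × ℝ => p.1 - p.2) := by fun_prop
    simpa using this.tendsto (x, (0 : ℝ))
  have key : ∀ {k : ℝ → F}, SmoothNear k x → SmoothNear (fun p : ℝ × ℝ => k (p.1 - p.2)) (x, 0) :=
    fun hk => hk.comp_of_eq (ContDiff.smoothNear (by fun_prop) _) (by simp)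
  have key2 : ∀ {k : ℝ → F} {f : ℝ × ℝ → F} {c : ℝ}, SmoothNear k x → SmoothNear f (x, 0) →
      (∀ᶠ p in 𝓝 (x, (0 : ℝ)), f p = c • k (p.1 - p.2)) →
      ∀ᶠ p in 𝓝 (x, (0 : ℝ)), ds f p = (-c) • deriv k (p.1 - p.2) := by
    intro k f c hk hf hfk
    filter_upwards [hf.eventually, hsub.eventually hk.eventually,
      eventually_eventually_nhds.2 hfk] with p h1 h2 h3
    have e1 := hasDerivAt_ds h1.differentiableAt
    have e0 : HasDerivAt (fun s : ℝ => p.1 - s) (-1) p.2 := by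
      simpa using (hasDerivAt_id p.2).const_sub p.1
    have e2 := (HasDerivAt.scomp p.2 h2.differentiableAt.hasDerivAt e0).const_smul c
    have e3 := e2.congr_of_eventuallyEq ((tendsto_line p).eventually h3)
    rw [e1.unique e3]
    module
  have f0 := key hh
  have d1 := key2 (c := 1) hh f0 (Eventually.of_forall fun p => by simp)
  have d2 := key2 hh.deriv f0.ds d1
  have d3 := key2 hh.deriv.deriv f0.ds.ds d2
  obtain ⟨R, hR, h⟩ := taylor_ds f0
  have t := tendsto_zero_section x
  refine ⟨R, hR, ?_⟩
  filter_upwards [h, t.eventually d1, t.eventually d2, t.eventually d3] with p h d1 d2 d3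
  rw [h, d1, d2, d3]
  simp only [sub_zero]
  module
end taylor

section germs
variable {E F G : Type} [NormedAddCommGroup E] [NormedSpace ℝ E]
  [NormedAddCommGroup F] [NormedSpace ℝ F] [NormedAddCommGroup G] [NormedSpace ℝ G]

/-- `σ` is a local diffeomorphism at `p`. -/
def LD (σ : E → F) (p : E) : Prop :=
  SmoothNear σ p ∧ ∃ L : E ≃L[ℝ] F, HasFDerivAt σ (L : E →L[ℝ] F) p

theorem LD.smoothNear {σ : E → F} {p : E} (h : LD σ p) : SmoothNear σ p := h.1

theorem LD.comp {τ : F → G} {σ : E → F} {p : E} (hτ : LD τ (σ p)) (hσ : LD σ p) :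
    LD (fun x => τ (σ x)) p := by
  obtain ⟨h1, L, hL⟩ := hσ
  obtain ⟨h2, M, hM⟩ := hτ
  exact ⟨h2.comp h1, L.trans M, hM.comp p hL⟩

theorem LD.of_injective [FiniteDimensional ℝ E] [FiniteDimensional ℝ F]
    (hdim : Module.finrank ℝ E = Module.finrank ℝ F) {σ : E → F} {p : E} (h : SmoothNear σ p)
    {L : E →L[ℝ] F} (hL : HasFDerivAt σ L p) (hinj : ∀ v, L v = 0 → v = 0) : LD σ p := by
  have hi : Function.Injective (L : E →ₗ[ℝ] F) := by
    rw [injective_iff_map_eq_zero]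
    exact hinj
  refine ⟨h, (LinearEquiv.ofInjectiveOfFinrankEq (L : E →ₗ[ℝ] F) hi hdim).toContinuousLinearEquiv, ?_⟩
  convert hL using 1
  ext v; rfl

/-- The inverse function theorem, with open sets. -/
theorem LD.exists_open [CompleteSpace E] {σ : E → F} {p : E} (h : LD σ p) :
    ∃ e : OpenPartialHomeomorph E F, (⇑e = σ) ∧ p ∈ e.source ∧
      (∀ x ∈ e.source, ContDiffAt ℝ ∞ σ x) ∧ (∀ y ∈ e.target, ContDiffAt ℝ ∞ e.symm y) ∧
      (∀ x ∈ e.source, ∃ L : E ≃L[ℝ] F, HasFDerivAt σ (L : E →L[ℝ] F) x) := by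
  obtain ⟨h1, L, hL⟩ := h
  let e0 := h1.contDiffAt.toOpenPartialHomeomorph σ hL (by simp)
  have he0 : ⇑e0 = σ := h1.contDiffAt.toOpenPartialHomeomorph_coe hL (by simp)
  have hp0 : p ∈ e0.source := h1.contDiffAt.mem_toOpenPartialHomeomorph_source hL (by simp)
  have hopen : ∀ᶠ x in 𝓝 p, ∃ L : E ≃L[ℝ] F, HasFDerivAt σ (L : E →L[ℝ] F) x := by
    have hc : ContinuousAt (fderiv ℝ σ) p :=
      (h1.contDiffAt.fderiv_right (m := ∞) (by simp)).continuousAt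
    have hr : range ((↑) : (E ≃L[ℝ] F) → E →L[ℝ] F) ∈ 𝓝 (fderiv ℝ σ p) := by
      rw [hL.fderiv]
      exact ContinuousLinearEquiv.nhds L
    filter_upwards [hc.eventually hr, h1.eventually] with x hx1 hx2
    obtain ⟨M, hM⟩ := hx1
    exact ⟨M, by rw [hM]; exact hx2.differentiableAt.hasFDerivAt⟩
  obtain ⟨U, hU1, hU2, hU3⟩ := eventually_nhds_iff.1 (h1.and hopen)
  have hs : ∀ x ∈ (e0.restrOpen U hU2).source, x ∈ U := fun x hx => by
    rw [e0.restrOpen_source] at hx; exact hx.2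
  refine ⟨e0.restrOpen U hU2, he0, ?_, fun x hx => (hU1 x (hs x hx)).1, ?_,
    fun x hx => (hU1 x (hs x hx)).2⟩
  · rw [e0.restrOpen_source]; exact ⟨hp0, hU3⟩
  · intro y hy
    have hx := (e0.restrOpen U hU2).map_target hy
    obtain ⟨a, M, hM⟩ := hU1 _ (hs _ hx)
    refine OpenPartialHomeomorph.contDiffAt_symm (f₀' := M) _ hy ?_ ?_
    · have : ⇑(e0.restrOpen U hU2) = σ := he0
      rw [this]; exact hM
    · have : ⇑(e0.restrOpen U hU2) = σ := he0
      rw [this]; exact a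

theorem LD.exists_inverse [CompleteSpace E] {σ : E → F} {p : E} (h : LD σ p) :
    ∃ ρ : F → E, LD ρ (σ p) ∧ ρ (σ p) = p ∧ (∀ᶠ x in 𝓝 p, ρ (σ x) = x) ∧
      (∀ᶠ y in 𝓝 (σ p), σ (ρ y) = y) := by
  obtain ⟨e, he, hp, h1, h2, h3⟩ := h.exists_open
  obtain ⟨L, hL⟩ := h3 p hp
  have hpt : σ p ∈ e.target := by rw [← he]; exact e.map_source hp
  have l1 : ∀ x ∈ e.source, e.symm (σ x) = x := fun x hx => by rw [← he]; exact e.left_inv hx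
  have l2 : ∀ y ∈ e.target, σ (e.symm y) = y := fun x hx => by rw [← he]; exact e.right_inv hx
  have hev : ∀ᶠ y in 𝓝 (σ p), σ (e.symm y) = y := by
    filter_upwards [e.open_target.mem_nhds hpt] using l2
  refine ⟨e.symm, ⟨?_, L.symm, ?_⟩, l1 p hp, ?_, hev⟩
  · filter_upwards [e.open_target.mem_nhds hpt] using h2
  · refine HasFDerivAt.of_local_left_inverse (f := σ) (h2 _ hpt).continuousAt ?_ hev
    rw [l1 p hp]; exact hL
  · filter_upwards [e.open_source.mem_nhds hp] using l1

end germs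

/-- Right-left equivalence of germs, allowing different ambient spaces. -/
def GEq {E E' F F' : Type} [NormedAddCommGroup E] [NormedSpace ℝ E] [NormedAddCommGroup E']
    [NormedSpace ℝ E'] [NormedAddCommGroup F] [NormedSpace ℝ F] [NormedAddCommGroup F']
    [NormedSpace ℝ F'] (f : E → F) (p : E) (g : E' → F') (q : E') : Prop :=
  ∃ (σ : E → E') (τ : F → F'), LD σ p ∧ LD τ (f p) ∧ σ p = q ∧
    ∀ᶠ x in 𝓝 p, τ (f x) = g (σ x)

theorem GEq.trans {E E' E'' F F' F'' : Type} [NormedAddCommGroup E] [NormedSpace ℝ E]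
    [NormedAddCommGroup E'] [NormedSpace ℝ E'] [NormedAddCommGroup E''] [NormedSpace ℝ E'']
    [NormedAddCommGroup F] [NormedSpace ℝ F] [NormedAddCommGroup F'] [NormedSpace ℝ F']
    [NormedAddCommGroup F''] [NormedSpace ℝ F'']
    {f : E → F} {p : E} {g : E' → F'} {q : E'} {h : E'' → F''} {r : E''}
    (h1 : GEq f p g q) (h2 : GEq g q h r) : GEq f p h r := by
  obtain ⟨σ, τ, a1, a2, rfl, a4⟩ := h1
  obtain ⟨σ', τ', b1, b2, rfl, b4⟩ := h2
  refine ⟨fun x => σ' (σ x), fun y => τ' (τ y), b1.comp a1, LD.comp ?_ a2, rfl, ?_⟩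
  · rw [a4.self_of_nhds]; exact b2
  · filter_upwards [a4, a1.1.continuousAt.eventually b4] with x hx hx'
    rw [hx, hx']

theorem GEq.germDiffeomorphic {E F : Type} [NormedAddCommGroup E] [NormedSpace ℝ E]
    [NormedAddCommGroup F] [NormedSpace ℝ F] [CompleteSpace E] [CompleteSpace F]
    {f g : E → F} {p q : E} (h : GEq f p g q) (hf : ContinuousAt f p) :
    GermDiffeomorphic f p g q := by
  obtain ⟨σ, τ, h1, h2, h3, h4⟩ := h
  obtain ⟨e, he, hp, s1, s2, -⟩ := h1.exists_open
  obtain ⟨e', he', hp', t1, t2, -⟩ := h2.exists_open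
  obtain ⟨U, hU1, hU2, hU3⟩ := eventually_nhds_iff.1
    ((h4.and (hf.eventually (e'.open_source.mem_nhds hp'))).and (e.open_source.mem_nhds hp))
  refine ⟨U, e'.source, σ, τ, ⟨hU2, ?_, ?_, e.symm, ?_, ?_⟩, ⟨e'.open_source, ?_, ?_, e'.symm, ?_, ?_⟩,
    hU3, hp', h3, ?_, fun x hx => (hU1 x hx).1.2, fun x hx => (hU1 x hx).1.1⟩
  · rw [← he]
    exact e.isOpen_image_of_subset_source hU2 fun x hx => (hU1 x hx).2
  · exact fun x hx => (s1 x (hU1 x hx).2).contDiffWithinAt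
  · rintro _ ⟨x, hx, rfl⟩
    refine (s2 _ ?_).contDiffWithinAt
    rw [← he]; exact e.map_source (hU1 x hx).2
  · intro x hx
    rw [← he]; exact e.left_inv (hU1 x hx).2
  · rw [← he', e'.image_source_eq_target]; exact e'.open_target
  · exact fun x hx => (t1 x hx).contDiffWithinAt
  · rintro _ ⟨x, hx, rfl⟩
    refine (t2 _ ?_).contDiffWithinAt
    rw [← he']; exact e'.map_source hx
  · intro x hx
    rw [← he']; exact e'.left_inv hx
  · rw [← h3]; exact h4.self_of_nhds

theorem LD.of_inverse {E F : Type} [NormedAddCommGroup E] [NormedSpace ℝ E]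
    [NormedAddCommGroup F] [NormedSpace ℝ F] {σ : E → F} {ρ : F → E} (p : E)
    (h1 : ContDiff ℝ ∞ σ) (h2 : ContDiff ℝ ∞ ρ) (h3 : ∀ x, ρ (σ x) = x) (h4 : ∀ y, σ (ρ y) = y) :
    LD σ p := by
  have e1 : HasFDerivAt σ (fderiv ℝ σ p) p := (h1.differentiable (by simp) p).hasFDerivAt
  have e2 : HasFDerivAt ρ (fderiv ℝ ρ (σ p)) (σ p) := (h2.differentiable (by simp) _).hasFDerivAt
  have e3 : HasFDerivAt ρ (fderiv ℝ ρ (σ p)) (σ (ρ (σ p))) := by rw [h3]; exact e2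
  refine ⟨h1.smoothNear p, ContinuousLinearEquiv.equivOfInverse (fderiv ℝ σ p) (fderiv ℝ ρ (σ p)) ?_ ?_, ?_⟩
  · intro v
    have := e2.comp p e1
    have h : ρ ∘ σ = id := funext h3
    rw [h] at this
    exact DFunLike.congr_fun (this.unique (hasFDerivAt_id p)) v
  · intro v
    have e1' : HasFDerivAt σ (fderiv ℝ σ p) (ρ (σ p)) := by rw [h3]; exact e1
    have := e1'.comp (σ p) e2
    have h : σ ∘ ρ = id := funext h4
    rw [h] at this
    exact DFunLike.congr_fun (this.unique (hasFDerivAt_id _)) v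
  · exact e1

theorem LD.refl {E : Type} [NormedAddCommGroup E] [NormedSpace ℝ E] (p : E) : LD (fun x : E => x) p :=
  LD.of_inverse (ρ := fun x => x) p contDiff_id contDiff_id (fun _ => rfl) (fun _ => rfl)

theorem geq_umbrella :
    GEq (fun p : ℝ × ℝ => ((p.1, p.2 ^ 2, p.1 * p.2 ^ 3) : ℝ × ℝ × ℝ)) (0, 0)
      (fun p : ℝ × ℝ =>
        ![p.1 + p.2, p.1 ^ 2 + 2 * p.2 * p.1, p.1 ^ 4 + 4 * p.2 * p.1 ^ 3])
      ((0 : ℝ), (0 : ℝ)) := by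
  refine ⟨fun p => (p.1 - p.2, p.2), fun y => ![y.1, y.1 ^ 2 - y.2.1,
    y.1 ^ 4 - 6 * y.1 ^ 2 * y.2.1 - 3 * y.2.1 ^ 2 + 8 * y.2.2], ?_, ?_, by simp,
    Eventually.of_forall fun p => ?_⟩
  · exact LD.of_inverse (ρ := fun p => (p.1 + p.2, p.2)) _ (by fun_prop) (by fun_prop)
      (fun x => by simp) (fun x => by simp)
  · refine LD.of_inverse (ρ := fun v : Fin 3 → ℝ => (v 0, v 0 ^ 2 - v 1,
      (v 2 - (v 0 ^ 4 - 6 * v 0 ^ 2 * (v 0 ^ 2 - v 1) - 3 * (v 0 ^ 2 - v 1) ^ 2)) / 8)) _ ?_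
      (by fun_prop) (fun x => ?_) (fun y => ?_)
    · rw [contDiff_pi]
      intro i
      fin_cases i <;> simp <;> fun_prop
    · ext <;> simp
    · ext i
      fin_cases i <;> simp
      ring
  · ext i
    fin_cases i <;> simp <;> ring

theorem geq_whitney {c : ℝ × ℝ → ℝ} {t₀ d : ℝ} (hc : SmoothNear c (t₀, 0)) (h0 : c (t₀, 0) = 0)
    (hd : HasDerivAt (fun x => c (x, 0)) d t₀) (hd0 : d ≠ 0) :
    GEq (fun p : ℝ × ℝ => ((p.1, p.2 ^ 2, p.2 ^ 3 * c p) : ℝ × ℝ × ℝ)) (t₀, 0)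
      (fun p : ℝ × ℝ => ((p.1, p.2 ^ 2, p.1 * p.2 ^ 3) : ℝ × ℝ × ℝ)) (0, 0) := by
  obtain ⟨g, g1, g2, g3⟩ := hc.globalize
  obtain ⟨p, q, hp, hq, hpq⟩ := whitney_global g g1 g2
  have hp0 : p (t₀, 0) = 0 := by
    have := hpq t₀ 0
    rw [g3.self_of_nhds, h0] at this
    simpa using this.symm
  have hline : Tendsto (fun x : ℝ => (x, (0 : ℝ))) (𝓝 t₀) (𝓝 (t₀, 0)) := by
    have : Continuous (fun x : ℝ => (x, (0 : ℝ))) := by fun_prop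
    exact this.tendsto t₀
  have hpd : HasDerivAt (fun x => p (x, 0)) d t₀ := by
    refine hd.congr_of_eventuallyEq ?_
    filter_upwards [hline.eventually g3] with x hx
    have := hpq x 0
    rw [hx] at this
    simpa using this.symm
  have hpF : HasFDerivAt p (fderiv ℝ p (t₀, 0)) (t₀, 0) :=
    (hp.differentiable (by simp) _).hasFDerivAt
  have hp1 : ∀ ξ : ℝ, fderiv ℝ p (t₀, 0) (ξ, 0) = ξ * d := by
    intro ξ
    have e1 : HasDerivAt (fun x : ℝ => ((x, 0) : ℝ × ℝ)) (1, 0) t₀ :=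
      (hasDerivAt_id t₀).prodMk (hasDerivAt_const t₀ 0)
    have e2 := hpF.comp_hasDerivAt t₀ e1
    have e3 := e2.unique hpd
    rw [← e3, ← smul_eq_mul, ← map_smul]
    simp
  refine ⟨fun y => (p (y.1, y.2 ^ 2), y.2), fun y => (p (y.1, y.2.1), y.2.1, y.2.2 - y.2.1 ^ 2 * q (y.1, y.2.1)),
    ?_, ?_, by simp [hp0], ?_⟩
  · have s1 : HasFDerivAt (fun y : ℝ × ℝ => (y.1, y.2 ^ 2))
      ((ContinuousLinearMap.fst ℝ ℝ ℝ).prod ((2 * (0 : ℝ)) • ContinuousLinearMap.snd ℝ ℝ ℝ)) (t₀, (0 : ℝ)) := by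
      refine (hasFDerivAt_fst).prodMk ?_
      simpa using (hasFDerivAt_snd (𝕜 := ℝ) (p := (t₀, (0 : ℝ)))).pow 2
    have hpF' : HasFDerivAt p (fderiv ℝ p (t₀, 0)) (((t₀, 0) : ℝ × ℝ).1, ((t₀, 0) : ℝ × ℝ).2 ^ 2) := by
      simpa using hpF
    have s2 := (hpF'.comp (t₀, (0 : ℝ)) s1).prodMk (hasFDerivAt_snd (𝕜 := ℝ) (p := (t₀, (0 : ℝ))))
    refine LD.of_injective rfl (ContDiff.smoothNear (by fun_prop) _) s2 ?_
    rintro ⟨ξ, η⟩ h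
    simp only [ContinuousLinearMap.prod_apply, ContinuousLinearMap.comp_apply, Prod.mk_eq_zero] at h
    obtain ⟨h1, h2⟩ := h
    have h2' : η = 0 := h2
    have h1' : fderiv ℝ p (t₀, 0) (ξ, 0) = 0 := by simpa using h1
    rw [hp1] at h1'
    simp [h2', (mul_eq_zero.1 h1').resolve_right hd0]
  · let P : ℝ × ℝ × ℝ →L[ℝ] ℝ × ℝ := (ContinuousLinearMap.fst ℝ ℝ (ℝ × ℝ)).prod
      ((ContinuousLinearMap.fst ℝ ℝ ℝ).comp (ContinuousLinearMap.snd ℝ ℝ (ℝ × ℝ)))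
    let Z : ℝ × ℝ × ℝ →L[ℝ] ℝ := (ContinuousLinearMap.snd ℝ ℝ ℝ).comp (ContinuousLinearMap.snd ℝ ℝ (ℝ × ℝ))
    let Y : ℝ × ℝ × ℝ →L[ℝ] ℝ := (ContinuousLinearMap.fst ℝ ℝ ℝ).comp (ContinuousLinearMap.snd ℝ ℝ (ℝ × ℝ))
    let N : ℝ × ℝ → ℝ := fun y => y.2 ^ 2 * q y
    have hN : ContDiff ℝ ∞ N := by fun_prop
    let b : ℝ × ℝ × ℝ := (t₀, 0, 0)
    have hb : ((t₀, (0 : ℝ) ^ 2, (0 : ℝ) ^ 3 * c (t₀, 0)) : ℝ × ℝ × ℝ) = b := by simp [b]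
    have hNF : HasFDerivAt N (fderiv ℝ N (P b)) (P b) := (hN.differentiable (by simp) _).hasFDerivAt
    have hPF : HasFDerivAt p (fderiv ℝ p (P b)) (P b) := (hp.differentiable (by simp) _).hasFDerivAt
    have s2 := (hPF.comp b P.hasFDerivAt).prodMk (Y.hasFDerivAt.prodMk
      (Z.hasFDerivAt.sub (hNF.comp b P.hasFDerivAt)))
    show LD _ ((t₀, (0 : ℝ) ^ 2, (0 : ℝ) ^ 3 * c (t₀, 0)) : ℝ × ℝ × ℝ)
    rw [hb]
    refine LD.of_injective rfl (ContDiff.smoothNear (by fun_prop) _) s2 ?_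
    rintro ⟨ξ, η, ζ⟩ h
    simp only [ContinuousLinearMap.prod_apply, ContinuousLinearMap.comp_apply, Prod.mk_eq_zero,
      sub_apply] at h
    obtain ⟨h1, h2, h3⟩ := h
    have h2' : η = 0 := h2
    subst h2'
    have h1' : fderiv ℝ p (t₀, 0) (ξ, 0) = 0 := h1
    rw [hp1] at h1'
    have h4 : ξ = 0 := (mul_eq_zero.1 h1').resolve_right hd0
    subst h4
    have h5 : P (0, 0, ζ) = 0 := rfl
    rw [h5, map_zero, sub_zero] at h3
    have h6 : ζ = 0 := h3
    subst h6
    rfl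
  · filter_upwards [g3] with y hy
    have := hpq y.1 y.2
    rw [show ((y.1, y.2) : ℝ × ℝ) = y from rfl, hy] at this
    simp only [Prod.mk.injEq, true_and]
    rw [this]; ring

theorem geq_normalize {a b c : ℝ × ℝ → ℝ} {t₀ d : ℝ} (ha : SmoothNear a (t₀, 0))
    (hb : SmoothNear b (t₀, 0)) (hc : SmoothNear c (t₀, 0)) (h0 : c (t₀, 0) = 0)
    (hd : HasDerivAt (fun x => c (x, 0)) d t₀) (hd0 : d ≠ 0) :
    GEq (fun p : ℝ × ℝ => ((p.1 + p.2 ^ 3 * a p, p.2 ^ 2 + p.2 ^ 3 * b p, p.2 ^ 3 * c p) : ℝ × ℝ × ℝ))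
      (t₀, 0) (fun p : ℝ × ℝ => ((p.1, p.2 ^ 2, p.1 * p.2 ^ 3) : ℝ × ℝ × ℝ)) (0, 0) := by
  have hx : SmoothNear (fun p : ℝ × ℝ => p.1) (t₀, (0 : ℝ)) := contDiff_fst.smoothNear _
  have hs : SmoothNear (fun p : ℝ × ℝ => p.2) (t₀, (0 : ℝ)) := contDiff_snd.smoothNear _
  have h1c : SmoothNear (fun p : ℝ × ℝ => (1 : ℝ)) (t₀, (0 : ℝ)) := contDiff_const.smoothNear _
  have hu : SmoothNear (fun p : ℝ × ℝ => 1 + p.2 * b p) (t₀, (0 : ℝ)) := h1c.add (hs.mul hb)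
  have hsq : SmoothNear Real.sqrt 1 := by
    filter_upwards [isOpen_ne.mem_nhds (one_ne_zero (α := ℝ))] with y hy
    exact Real.contDiffAt_sqrt hy
  have hiv : SmoothNear (fun y : ℝ => y⁻¹) 1 := by
    filter_upwards [isOpen_ne.mem_nhds (one_ne_zero (α := ℝ))] with y hy
    exact contDiffAt_inv ℝ hy
  let k : ℝ × ℝ → ℝ := fun p => Real.sqrt (1 + p.2 * b p)
  have hk : SmoothNear k (t₀, 0) := hsq.comp_of_eq hu (by simp)
  have hk1 : ∀ x, k (x, 0) = 1 := fun x => by simp [k]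
  have hkpos : ∀ᶠ p in 𝓝 (t₀, (0 : ℝ)), 0 < 1 + p.2 * b p := by
    have := hu.continuousAt.eventually_const_lt (u := 0) (by simp)
    exact this
  let σ : ℝ × ℝ → ℝ × ℝ := fun p => (p.1 + p.2 * (p.2 ^ 2 * a p), p.2 * k p)
  have hσs : SmoothNear σ (t₀, 0) := by
    have h2 : SmoothNear (fun p : ℝ × ℝ => p.2 ^ 2) (t₀, (0 : ℝ)) := ContDiff.smoothNear (by fun_prop) _
    exact (hx.add (hs.mul (h2.mul ha))).prodMk (hs.mul hk)
  have hσ : LD σ (t₀, 0) := by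
    have h2 : SmoothNear (fun p : ℝ × ℝ => p.2 ^ 2 * a p) (t₀, (0 : ℝ)) :=
      SmoothNear.mul (ContDiff.smoothNear (by fun_prop) _) ha
    have f1 := hasFDerivAt_fst (𝕜 := ℝ) (p := (t₀, (0 : ℝ)))
    have f2 := hasFDerivAt_snd (𝕜 := ℝ) (p := (t₀, (0 : ℝ)))
    have s2 := (f1.add (f2.mul h2.differentiableAt.hasFDerivAt)).prodMk
      (f2.mul hk.differentiableAt.hasFDerivAt)
    refine LD.of_injective rfl hσs s2 ?_
    rintro ⟨ξ, η⟩ h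
    simp only [hk1] at h
    simpa using h
  have hσx : ∀ x, σ (x, 0) = (x, 0) := fun x => by simp [σ]
  obtain ⟨ρ, r1, r2, r3, r4⟩ := hσ.exists_inverse
  let C0 : ℝ × ℝ → ℝ := fun p => c p * ((k p)⁻¹ * (k p)⁻¹ * (k p)⁻¹)
  have hki := hiv.comp_of_eq hk (hk1 t₀)
  have hC0 : SmoothNear C0 (t₀, 0) := hc.mul ((hki.mul hki).mul hki)
  rw [hσx] at r1 r2 r4
  have hC : SmoothNear (fun p => C0 (ρ p)) (t₀, 0) := hC0.comp_of_eq r1.1 r2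
  have hline : Tendsto (fun x : ℝ => (x, (0 : ℝ))) (𝓝 t₀) (𝓝 (t₀, 0)) := by
    have : Continuous (fun x : ℝ => (x, (0 : ℝ))) := by fun_prop
    exact this.tendsto t₀
  refine GEq.trans ?_ (geq_whitney (d := d) hC ?_ ?_ hd0)
  · refine ⟨σ, fun y => y, hσ, LD.refl _, hσx _, ?_⟩
    filter_upwards [r3, hkpos] with p hp hp'
    have hk2 : k p ^ 2 = 1 + p.2 * b p := Real.sq_sqrt hp'.le
    have hk0 : k p ≠ 0 := (Real.sqrt_pos.2 hp').ne'
    simp only [hp]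
    simp only [σ, Prod.mk.injEq, C0]
    refine ⟨by ring, ?_, ?_⟩
    · rw [mul_pow, hk2]; ring
    · field_simp
  · simp [r2, C0, h0]
  · refine hd.congr_of_eventuallyEq ?_
    filter_upwards [hline.eventually r3] with x hx
    rw [hσx] at hx
    simp only [hx, C0, hk1]
    simp

theorem lin_indep_three {V : Type} [AddCommGroup V] [Module ℝ V] {a b e : V}
    (h : LinearIndependent ℝ ![a, b, e]) (x y z : ℝ) (h0 : x • a + y • b + z • e = 0) :
    x = 0 ∧ y = 0 ∧ z = 0 := by
  rw [Fintype.linearIndependent_iff] at h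
  have := h ![x, y, z] (by simpa [Fin.sum_univ_three] using h0)
  exact ⟨this 0, this 1, this 2⟩

theorem lin_dep_three {V : Type} [AddCommGroup V] [Module ℝ V] {a b c e : V}
    (h : LinearIndependent ℝ ![a, b, e]) (h' : ¬ LinearIndependent ℝ ![a, b, c]) :
    ∃ α β : ℝ, c = α • a + β • b := by
  rw [Fintype.not_linearIndependent_iff] at h'
  obtain ⟨g, hg, i, hi⟩ := h'
  simp only [Fin.sum_univ_three, Matrix.cons_val_zero, Matrix.cons_val_one, Matrix.cons_val] at hg
  by_cases h2 : g 2 = 0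
  · exfalso
    obtain ⟨e0, e1, -⟩ := lin_indep_three h (g 0) (g 1) 0 (by rw [h2] at hg; simpa using hg)
    fin_cases i
    · exact hi e0
    · exact hi e1
    · exact hi h2
  · refine ⟨-(g 0 / g 2), -(g 1 / g 2), ?_⟩
    have : g 2 • c = -(g 0 • a + g 1 • b) := by
      rw [eq_neg_iff_add_eq_zero, add_comm]; exact hg
    calc c = (g 2)⁻¹ • (g 2 • c) := by rw [smul_smul, inv_mul_cancel₀ h2, one_smul]
      _ = _ := by
        rw [this]
        module

theorem geq_of_expansion {γ V2 V3 : ℝ → (Fin 3 → ℝ)} {R F : ℝ × ℝ → (Fin 3 → ℝ)}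
    {e : Fin 3 → ℝ} {L : (Fin 3 → ℝ) →ₗ[ℝ] (Fin 3 → ℝ)} {t₀ : ℝ}
    (hγ : SmoothNear γ t₀) (hV2 : SmoothNear V2 t₀) (hV3 : SmoothNear V3 t₀)
    (hR : SmoothNear R (t₀, 0))
    (hF : ∀ᶠ p in 𝓝 (t₀, (0 : ℝ)), F p = γ p.1 - (p.2 ^ 2 / 2) • V2 p.1 + (p.2 ^ 3 / 3) • V3 p.1
      + p.2 ^ 4 • R p)
    (h1 : deriv (deriv γ) t₀ = V2 t₀ - L (deriv γ t₀))
    (h2 : deriv V2 t₀ = V3 t₀ - L (V2 t₀))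
    (h3 : deriv V3 t₀ = e - L (V3 t₀))
    (hind : LinearIndependent ℝ ![deriv γ t₀, V2 t₀, e])
    (hdep : ¬ LinearIndependent ℝ ![deriv γ t₀, V2 t₀, V3 t₀]) :
    GEq F (t₀, 0) (fun p : ℝ × ℝ => ((p.1, p.2 ^ 2, p.1 * p.2 ^ 3) : ℝ × ℝ × ℝ)) (0, 0) := by
  obtain ⟨α, β, hαβ⟩ := lin_dep_three hind hdep
  have hI := lin_indep_three hind
  let Ψ : ℝ × ℝ × ℝ → (Fin 3 → ℝ) := fun y => γ y.1 - (y.2.1 / 2) • V2 y.1 + y.2.2 • e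
  have hx : ∀ z, SmoothNear (fun y : ℝ × ℝ × ℝ => y.1) z := fun z => contDiff_fst.smoothNear _
  have hΨs : SmoothNear Ψ (t₀, 0, 0) := by
    refine SmoothNear.add (SmoothNear.sub (hγ.comp_of_eq (hx _) rfl) (SmoothNear.smul ?_
      (hV2.comp_of_eq (hx _) rfl))) ?_
    · exact ContDiff.smoothNear (by fun_prop) _
    · exact ContDiff.smoothNear (by fun_prop) _
  have hΨd : ∀ᶠ x in 𝓝 t₀, ∃ M : ℝ × ℝ × ℝ →L[ℝ] (Fin 3 → ℝ), HasFDerivAt Ψ M (x, 0, 0) ∧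
      ∀ ξ η ζ, M (ξ, η, ζ) = ξ • deriv γ x - (η / 2) • V2 x + ζ • e := by
    filter_upwards [hγ.eventually, hV2.eventually] with x a1 a2
    have f1 : HasFDerivAt (fun y : ℝ × ℝ × ℝ => y.1) (ContinuousLinearMap.fst ℝ ℝ (ℝ × ℝ)) (x, 0, 0) :=
      hasFDerivAt_fst
    have f2 : HasFDerivAt (fun y : ℝ × ℝ × ℝ => y.2.1 / 2) ((2 : ℝ)⁻¹ • (ContinuousLinearMap.fst ℝ ℝ ℝ).comp
        (ContinuousLinearMap.snd ℝ ℝ (ℝ × ℝ))) (x, 0, 0) := by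
      have := ((2 : ℝ)⁻¹ • (ContinuousLinearMap.fst ℝ ℝ ℝ).comp
        (ContinuousLinearMap.snd ℝ ℝ (ℝ × ℝ))).hasFDerivAt (x := (x, 0, 0))
      refine this.congr_of_eventuallyEq (Eventually.of_forall fun y => ?_)
      simp; ring
    have f3 : HasFDerivAt (fun y : ℝ × ℝ × ℝ => y.2.2) ((ContinuousLinearMap.snd ℝ ℝ ℝ).comp
        (ContinuousLinearMap.snd ℝ ℝ (ℝ × ℝ))) (x, 0, 0) :=
      ((ContinuousLinearMap.snd ℝ ℝ ℝ).comp (ContinuousLinearMap.snd ℝ ℝ (ℝ × ℝ))).hasFDerivAt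
    have g1 : HasFDerivAt γ _ ((fun y : ℝ × ℝ × ℝ => y.1) (x, 0, 0)) :=
      a1.differentiableAt.hasDerivAt.hasFDerivAt
    have g2 : HasFDerivAt V2 _ ((fun y : ℝ × ℝ × ℝ => y.1) (x, 0, 0)) :=
      a2.differentiableAt.hasDerivAt.hasFDerivAt
    refine ⟨_, ((g1.comp _ f1).sub (f2.smul (g2.comp _ f1))).add (f3.smul_const e), ?_⟩
    intro ξ η ζ
    simp
    module
  have hΨ : LD Ψ (t₀, 0, 0) := by
    obtain ⟨M, hM, hM'⟩ := hΨd.self_of_nhds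
    refine LD.of_injective (by simp) hΨs hM ?_
    rintro ⟨ξ, η, ζ⟩ h
    rw [hM'] at h
    obtain ⟨e0, e1, e2⟩ := hI ξ (-(η / 2)) ζ (by rw [← h]; module)
    have e1' : η = 0 := by linarith
    simp [e0, e1', e2]
  obtain ⟨ρ, hρ, hρ0, hρΨ, hΨρ⟩ := hΨ.exists_inverse
  have hΨ0 : Ψ (t₀, 0, 0) = γ t₀ := by simp [Ψ]
  let A : (ℝ × ℝ) × ℝ → (Fin 3 → ℝ) := fun q => Ψ (q.1.1, q.1.2 ^ 2, 0) +
    q.2 • ((3 : ℝ)⁻¹ • V3 q.1.1 + q.1.2 • R q.1)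
  have hA0 : A ((t₀, 0), 0) = Ψ (t₀, 0, 0) := by simp [A]
  have hA : SmoothNear A ((t₀, 0), 0) := by
    refine SmoothNear.add (hΨs.comp_of_eq ?_ (by simp)) (SmoothNear.smul ?_ (SmoothNear.add
      (SmoothNear.smul ?_ (hV3.comp_of_eq ?_ rfl)) (SmoothNear.smul ?_ (hR.comp_of_eq ?_ rfl))))
    all_goals exact ContDiff.smoothNear (by fun_prop) _
  let M : (ℝ × ℝ) × ℝ → ℝ × ℝ × ℝ := fun q => ρ (A q)
  have hM : SmoothNear M ((t₀, 0), 0) := hρ.1.comp_of_eq hA hA0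
  obtain ⟨N, hN, hMN⟩ := hadamard_s3 hM
  have hΨM : ∀ᶠ q in 𝓝 ((t₀, (0 : ℝ)), (0 : ℝ)), Ψ (M q) = A q := by
    have := hA.continuousAt
    rw [ContinuousAt, hA0] at this
    exact this.eventually hΨρ
  have hM0 : ∀ᶠ p in 𝓝 (t₀, (0 : ℝ)), M (p, 0) = (p.1, p.2 ^ 2, 0) := by
    have : Tendsto (fun p : ℝ × ℝ => ((p.1, p.2 ^ 2, 0) : ℝ × ℝ × ℝ)) (𝓝 (t₀, 0)) (𝓝 (t₀, 0, 0)) := by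
      have : Continuous (fun p : ℝ × ℝ => ((p.1, p.2 ^ 2, 0) : ℝ × ℝ × ℝ)) := by fun_prop
      simpa using this.tendsto (t₀, (0 : ℝ))
    filter_upwards [this.eventually hρΨ] with p hp
    simp [M, A, hp]
  have hline : Tendsto (fun x : ℝ => (x, (0 : ℝ))) (𝓝 t₀) (𝓝 (t₀, 0)) := by
    have : Continuous (fun x : ℝ => (x, (0 : ℝ))) := by fun_prop
    exact this.tendsto t₀
  have hline2 : Tendsto (fun x : ℝ => ((x, (0 : ℝ)), (0 : ℝ))) (𝓝 t₀) (𝓝 ((t₀, 0), 0)) := by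
    have : Continuous (fun x : ℝ => ((x, (0 : ℝ)), (0 : ℝ))) := by fun_prop
    exact this.tendsto t₀
  let n : ℝ → ℝ × ℝ × ℝ := fun x => N ((x, 0), 0)
  have hn : SmoothNear n t₀ := hN.comp_of_eq (f := fun x : ℝ => ((x, (0 : ℝ)), (0 : ℝ)))
    (ContDiff.smoothNear (by fun_prop) _) rfl
  have hrel : ∀ᶠ x in 𝓝 t₀, (3 : ℝ)⁻¹ • V3 x = (n x).1 • deriv γ x - ((n x).2.1 / 2) • V2 x
      + (n x).2.2 • e := by
    filter_upwards [hΨd, hline.eventually hM0, hline2.eventually (eventually_eventually_nhds.2 hMN),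
      hline2.eventually (eventually_eventually_nhds.2 hΨM), hline2.eventually hN.eventually]
      with x ⟨D, hD, hD'⟩ b1 b2 b3 b4
    have tl : Tendsto (fun r : ℝ => ((x, (0 : ℝ)), r)) (𝓝 0) (𝓝 ((x, 0), 0)) := 
      tendsto_line ((x, (0 : ℝ)), (0 : ℝ))
    have hNd : HasDerivAt (fun r => N ((x, 0), r)) _ 0 := hasDerivAt_ds (p := ((x, 0), 0)) b4.differentiableAt
    have c1 : HasDerivAt (fun r : ℝ => ((x, 0, 0) : ℝ × ℝ × ℝ) + r • N ((x, 0), r)) (n x) 0 := by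
      have := ((hasDerivAt_id (0 : ℝ)).smul hNd).const_add ((x, 0, 0) : ℝ × ℝ × ℝ)
      simpa using this
    have hD2 : HasFDerivAt Ψ D (((x, 0, 0) : ℝ × ℝ × ℝ) + (0 : ℝ) • N ((x, 0), (0 : ℝ))) := by
      simpa using hD
    have c2 := hD2.comp_hasDerivAt (0 : ℝ) c1
    have c3 : HasDerivAt (fun r : ℝ => γ x + r • ((3 : ℝ)⁻¹ • V3 x)) ((3 : ℝ)⁻¹ • V3 x) 0 := by
      have := ((hasDerivAt_id (0 : ℝ)).smul_const ((3 : ℝ)⁻¹ • V3 x)).const_add (γ x)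
      simpa using this
    have c4 : (fun r : ℝ => γ x + r • ((3 : ℝ)⁻¹ • V3 x)) =ᶠ[𝓝 0]
        (Ψ ∘ fun r : ℝ => ((x, 0, 0) : ℝ × ℝ × ℝ) + r • N ((x, 0), r)) := by
      filter_upwards [tl.eventually b2, tl.eventually b3] with r d2 d3
      have b1' : M ((x, 0), 0) = (x, (0 : ℝ) ^ 2, 0) := b1
      replace d2 : M ((x, 0), r) = M ((x, 0), 0) + r • N ((x, 0), r) := d2
      rw [b1'] at d2
      simp only [Function.comp]
      have : ((x, 0, 0) : ℝ × ℝ × ℝ) + r • N ((x, 0), r) = M ((x, 0), r) := by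
        rw [d2]; simp
      rw [this, d3]
      simp [A, Ψ]
    have c5 := (c2.congr_of_eventuallyEq c4).unique c3
    rw [← c5, ← hD']
  have hrel0 := hrel.self_of_nhds
  obtain ⟨r1, r2, r3⟩ := hI ((n t₀).1 - α / 3) (-((n t₀).2.1 / 2) - β / 3) (n t₀).2.2 (by
    have : (3 : ℝ)⁻¹ • V3 t₀ - (3 : ℝ)⁻¹ • V3 t₀ = 0 := sub_self _
    nth_rewrite 1 [hrel0] at this
    rw [hαβ] at this
    rw [← this]; module)
  have hnd := hn.differentiableAt.hasDerivAt
  have hn1 : HasDerivAt (fun x => (n x).1) (deriv n t₀).1 t₀ := hnd.fst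
  have hn2 : HasDerivAt (fun x => (n x).2.1) (deriv n t₀).2.1 t₀ := hnd.snd.fst
  have hn3 : HasDerivAt (fun x => (n x).2.2) (deriv n t₀).2.2 t₀ := hnd.snd.snd
  have hn3' : (deriv n t₀).2.2 = 1 / 3 := by
    have l1 := hV3.differentiableAt.hasDerivAt.const_smul (3 : ℝ)⁻¹
    have l2 := ((hn1.smul hγ.deriv.differentiableAt.hasDerivAt).sub
      ((hn2.div_const 2).smul hV2.differentiableAt.hasDerivAt)).add (hn3.smul_const e)
    have l3 := l1.unique (l2.congr_of_eventuallyEq hrel)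
    have l4 : (n t₀).1 = α / 3 := by linarith
    have l5 : (n t₀).2.1 / 2 = - (β / 3) := by linarith
    rw [h1, h2, h3, l4, l5, hαβ, map_add, map_smul, map_smul] at l3
    obtain ⟨-, -, m⟩ := hI ((deriv n t₀).1 + α * β / 3) (α / 3 - (deriv n t₀).2.1 / 2 + β ^ 2 / 3)
      ((deriv n t₀).2.2 - 1 / 3) (by
        rw [← sub_eq_zero] at l3
        rw [← neg_eq_zero, ← l3]
        module)
    linarith
  have cub : SmoothNear (fun p : ℝ × ℝ => (p, p.2 ^ 3)) (t₀, (0 : ℝ)) := ContDiff.smoothNear (by fun_prop) _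
  have hNc : SmoothNear (fun p : ℝ × ℝ => N (p, p.2 ^ 3)) (t₀, 0) := hN.comp_of_eq cub (by simp)
  refine GEq.trans ?_ (geq_normalize (a := fun p => (N (p, p.2 ^ 3)).1) (b := fun p => (N (p, p.2 ^ 3)).2.1)
    (c := fun p => (N (p, p.2 ^ 3)).2.2) (t₀ := t₀) (d := 1 / 3) ?_ ?_ ?_ ?_ ?_ (by norm_num))
  · refine ⟨fun x => x, ρ, LD.refl _, ?_, rfl, ?_⟩
    · rw [hF.self_of_nhds]
      simpa [hΨ0] using hρ
    · have tc : Tendsto (fun p : ℝ × ℝ => (p, p.2 ^ 3)) (𝓝 (t₀, (0 : ℝ))) (𝓝 ((t₀, 0), 0)) := by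
        simpa [ContinuousAt] using cub.continuousAt
      filter_upwards [hF, hM0, tc.eventually hMN] with p q1 q2 q3
      have : F p = A (p, p.2 ^ 3) := by
        rw [q1]
        simp only [A, Ψ]
        module
      rw [this]
      show M (p, p.2 ^ 3) = _
      rw [q3, q2]
      ext <;> simp
  · exact SmoothNear.comp_of_eq (contDiff_fst.smoothNear _) hNc rfl
  · exact SmoothNear.comp_of_eq (g := fun y : ℝ × ℝ × ℝ => y.2.1) (ContDiff.smoothNear (by fun_prop) _) hNc rfl
  · exact SmoothNear.comp_of_eq (g := fun y : ℝ × ℝ × ℝ => y.2.2) (ContDiff.smoothNear (by fun_prop) _) hNc rfl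
  · simpa [n] using r3
  · have : (fun x : ℝ => (N ((x, 0), ((x, 0) : ℝ × ℝ).2 ^ 3)).2.2) = fun x => (n x).2.2 := by
      ext x; simp [n]
    show HasDerivAt (fun x : ℝ => (N ((x, 0), ((x, 0) : ℝ × ℝ).2 ^ 3)).2.2) _ _
    rw [this, ← hn3']
    exact hn3

section geometry

theorem SmoothNear.pi {E : Type} [NormedAddCommGroup E] [NormedSpace ℝ E] {n : ℕ}
    {f : E → Fin n → ℝ} {x : E} (h : ∀ i, SmoothNear (fun y => f y i) x) : SmoothNear f x := by
  have : ∀ᶠ y in 𝓝 x, ∀ i, ContDiffAt ℝ ∞ (fun y => f y i) y := eventually_all.2 h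
  filter_upwards [this] with y hy
  exact contDiffAt_pi.2 hy

theorem SmoothNear.apply {E : Type} [NormedAddCommGroup E] [NormedSpace ℝ E] {n : ℕ}
    {f : E → Fin n → ℝ} {x : E} (h : SmoothNear f x) (i : Fin n) : SmoothNear (fun y => f y i) x := by
  filter_upwards [h] with y hy
  exact contDiffAt_pi.1 hy i

theorem SmoothNear.sum {E ι : Type} [NormedAddCommGroup E] [NormedSpace ℝ E] {s : Finset ι}
    {f : ι → E → ℝ} {x : E} (h : ∀ i, SmoothNear (f i) x) : SmoothNear (fun y => ∑ i ∈ s, f i y) x := by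
  have : ∀ᶠ y in 𝓝 x, ∀ i ∈ s, ContDiffAt ℝ ∞ (f i) y :=
    (Filter.eventually_all_finset s).2 fun i _ => h i
  filter_upwards [this] with y hy
  exact ContDiffAt.sum fun i hi => hy i hi

/-- The Christoffel bilinear form. -/
def GQ (Γ : (Fin 3 → ℝ) → Fin 3 → Fin 3 → Fin 3 → ℝ) (x u v : Fin 3 → ℝ) : Fin 3 → ℝ :=
  fun l => ∑ μ, ∑ ν, Γ x l μ ν * u μ * v ν

/-- The derivative of the Christoffel form in the base point. -/
def GK (Γ : (Fin 3 → ℝ) → Fin 3 → Fin 3 → Fin 3 → ℝ) (x w u : Fin 3 → ℝ) : Fin 3 → ℝ :=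
  fun l => ∑ μ, ∑ ν, fderiv ℝ (fun y => Γ y l μ ν) x w * u μ * u ν

theorem GQ_add (Γ : (Fin 3 → ℝ) → Fin 3 → Fin 3 → Fin 3 → ℝ) (x u v w : Fin 3 → ℝ) :
    GQ Γ x u (v + w) = GQ Γ x u v + GQ Γ x u w := by
  ext l
  simp [GQ, mul_add, Finset.sum_add_distrib]

theorem GQ_smul (Γ : (Fin 3 → ℝ) → Fin 3 → Fin 3 → Fin 3 → ℝ) (x u v : Fin 3 → ℝ) (r : ℝ) :
    GQ Γ x u (r • v) = r • GQ Γ x u v := by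
  ext l
  simp only [GQ, Pi.smul_apply, smul_eq_mul, Finset.mul_sum]
  exact Finset.sum_congr rfl fun _ _ => Finset.sum_congr rfl fun _ _ => by ring

/-- The Christoffel form as a linear map. -/
def GQL (Γ : (Fin 3 → ℝ) → Fin 3 → Fin 3 → Fin 3 → ℝ) (x u : Fin 3 → ℝ) :
    (Fin 3 → ℝ) →ₗ[ℝ] (Fin 3 → ℝ) where
  toFun := GQ Γ x u
  map_add' := GQ_add Γ x u
  map_smul' r v := GQ_smul Γ x u v r

theorem GQ_symm {Γ : (Fin 3 → ℝ) → Fin 3 → Fin 3 → Fin 3 → ℝ}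
    (hTF : ∀ x l μ ν, Γ x l μ ν = Γ x l ν μ) (x u v : Fin 3 → ℝ) : GQ Γ x u v = GQ Γ x v u := by
  ext l
  simp only [GQ]
  rw [Finset.sum_comm]
  refine Finset.sum_congr rfl fun μ _ => Finset.sum_congr rfl fun ν _ => ?_
  rw [hTF]; ring

theorem hasDerivAt_GQ {Γ : (Fin 3 → ℝ) → Fin 3 → Fin 3 → Fin 3 → ℝ} {c u : ℝ → (Fin 3 → ℝ)}
    {c' u' : Fin 3 → ℝ} {s : ℝ} (hΓ : ∀ l μ ν, DifferentiableAt ℝ (fun x => Γ x l μ ν) (c s))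
    (hc : HasDerivAt c c' s) (hu : HasDerivAt u u' s) :
    HasDerivAt (fun s => GQ Γ (c s) (u s) (u s))
      (GK Γ (c s) c' (u s) + GQ Γ (c s) u' (u s) + GQ Γ (c s) (u s) u') s := by
  rw [hasDerivAt_pi]
  intro l
  have h : ∀ μ ν, HasDerivAt (fun s => Γ (c s) l μ ν * u s μ * u s ν)
      (fderiv ℝ (fun y => Γ y l μ ν) (c s) c' * u s μ * u s ν + Γ (c s) l μ ν * u' μ * u s ν
        + Γ (c s) l μ ν * u s μ * u' ν) s := by
    intro μ ν
    have e1 := (hΓ l μ ν).hasFDerivAt.comp_hasDerivAt s hc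
    have e2 := (e1.mul (hasDerivAt_pi.1 hu μ)).mul (hasDerivAt_pi.1 hu ν)
    refine e2.congr_deriv ?_
    simp only [Function.comp, Pi.mul_apply]
    ring
  have h2 := HasDerivAt.fun_sum (u := Finset.univ) fun μ _ => HasDerivAt.fun_sum (u := Finset.univ)
    fun ν _ => h μ ν
  refine h2.congr_deriv ?_
  simp [GQ, GK, Finset.sum_add_distrib]

theorem smoothNear_GQ {Γ : (Fin 3 → ℝ) → Fin 3 → Fin 3 → Fin 3 → ℝ} {c u v : ℝ → (Fin 3 → ℝ)} {s : ℝ}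
    (hΓ : ∀ l μ ν, SmoothNear (fun x => Γ x l μ ν) (c s))
    (hc : SmoothNear c s) (hu : SmoothNear u s) (hv : SmoothNear v s) :
    SmoothNear (fun s => GQ Γ (c s) (u s) (v s)) s := by
  refine SmoothNear.pi fun l => ?_
  exact SmoothNear.sum fun μ => SmoothNear.sum fun ν =>
    (((hΓ l μ ν).comp hc).mul (hu.apply μ)).mul (hv.apply ν)

end geometry

theorem tangent_surface_folded_umbrella
    (Γ : (Fin 3 → ℝ) → Fin 3 → Fin 3 → Fin 3 → ℝ)
    (Ω : Set (Fin 3 → ℝ)) (hΩ : IsOpen Ω)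
    (hΓ : ∀ l μ ν, ContDiffOn ℝ (⊤ : ℕ∞) (fun x => Γ x l μ ν) Ω)
    (hTF : ∀ x l μ ν, Γ x l μ ν = Γ x l ν μ)
    (W : Set ((Fin 3 → ℝ) × (Fin 3 → ℝ) × ℝ))
    (φ : (Fin 3 → ℝ) × (Fin 3 → ℝ) × ℝ → Fin 3 → ℝ)
    (hφ : IsGeodesicFlow Γ Ω W φ)
    (I : Set ℝ) (hI : IsOpen I) (hI' : I.OrdConnected)
    (γ : ℝ → Fin 3 → ℝ) (hγ : ContDiffOn ℝ (⊤ : ℕ∞) γ I) (hγΩ : ∀ t ∈ I, γ t ∈ Ω)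
    (t₀ : ℝ) (ht₀ : t₀ ∈ I)
    (hdep : ¬ LinearIndependent ℝ
      ![covDeriv Γ γ 0 t₀, covDeriv Γ γ 1 t₀, covDeriv Γ γ 2 t₀])
    (hind : LinearIndependent ℝ
      ![covDeriv Γ γ 0 t₀, covDeriv Γ γ 1 t₀, covDeriv Γ γ 3 t₀]) :
    GermDiffeomorphic
      (fun p : ℝ × ℝ => φ (γ p.1, deriv γ p.1, p.2)) (t₀, (0 : ℝ))
      (fun p : ℝ × ℝ =>
        ![p.1 + p.2, p.1 ^ 2 + 2 * p.2 * p.1, p.1 ^ 4 + 4 * p.2 * p.1 ^ 3])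
      ((0 : ℝ), (0 : ℝ)) := by
  have hIev : ∀ᶠ t in 𝓝 t₀, t ∈ I := hI.mem_nhds ht₀
  have hΓs : ∀ x ∈ Ω, ∀ l μ ν, SmoothNear (fun x => Γ x l μ ν) x := fun x hx l μ ν =>
    (hΓ l μ ν).smoothNear hΩ hx
  have hγs : ∀ t ∈ I, SmoothNear γ t := fun t ht => hγ.smoothNear hI ht
  -- the covariant derivatives
  have hcd : ∀ k, (∀ t ∈ I, SmoothNear (covDeriv Γ γ k) t) ∧ ∀ t ∈ I,
      covDeriv Γ γ (k + 1) t = deriv (covDeriv Γ γ k) t + GQ Γ (γ t) (deriv γ t) (covDeriv Γ γ k t) := by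
    have step : ∀ k, (∀ t ∈ I, SmoothNear (covDeriv Γ γ k) t) → ∀ t ∈ I,
      covDeriv Γ γ (k + 1) t = deriv (covDeriv Γ γ k) t
        + GQ Γ (γ t) (deriv γ t) (covDeriv Γ γ k t) := by
      intro k hk t ht
      ext l
      have := hasDerivAt_pi.1 (hk t ht).differentiableAt.hasDerivAt l
      rw [Pi.add_apply, ← this.deriv]
      rfl
    have sm : ∀ k, ∀ t ∈ I, SmoothNear (covDeriv Γ γ k) t := by
      intro k
      induction k with
      | zero => exact fun t ht => (hγs t ht).deriv
      | succ k ih =>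
        intro t ht
        refine SmoothNear.congr ((ih t ht).deriv.add (smoothNear_GQ (hΓs _ (hγΩ t ht)) (hγs t ht)
          (hγs t ht).deriv (ih t ht))) ?_
        filter_upwards [hI.mem_nhds ht] with u hu
        exact step k ih u hu
    exact fun k => ⟨sm k, step k (sm k)⟩
  let f : ℝ × ℝ → (Fin 3 → ℝ) := fun p => φ (γ p.1, deriv γ p.1, p.2)
  have hγ0 := hγs t₀ ht₀
  have hfs : SmoothNear f (t₀, 0) := by
    refine SmoothNear.comp_of_eq (hφ.smooth.smoothNear hφ.isOpen_W
      (hφ.mem_zero _ (hγΩ t₀ ht₀) (deriv γ t₀))) (SmoothNear.prodMk (hγ0.comp_of_eq ?_ rfl)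
      (SmoothNear.prodMk (hγ0.deriv.comp_of_eq ?_ rfl) ?_)) rfl
    all_goals exact ContDiff.smoothNear (by fun_prop) _
  have hfst : Tendsto (fun p : ℝ × ℝ => p.1) (𝓝 (t₀, (0 : ℝ))) (𝓝 t₀) :=
    (continuous_fst.tendsto (t₀, (0 : ℝ)))
  have hline : Tendsto (fun x : ℝ => (x, (0 : ℝ))) (𝓝 t₀) (𝓝 (t₀, 0)) := by
    have : Continuous (fun x : ℝ => (x, (0 : ℝ))) := by fun_prop
    exact this.tendsto t₀
  have hWev : ∀ᶠ p in 𝓝 (t₀, (0 : ℝ)), (γ p.1, deriv γ p.1, p.2) ∈ W := by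
    have hc : ContinuousAt (fun p : ℝ × ℝ => (γ p.1, deriv γ p.1, p.2)) (t₀, 0) := by
      have c1 : ContinuousAt (fun p : ℝ × ℝ => γ p.1) (t₀, 0) :=
        ContinuousAt.comp (f := fun p : ℝ × ℝ => p.1) hγ0.continuousAt continuousAt_fst
      have c2 : ContinuousAt (fun p : ℝ × ℝ => deriv γ p.1) (t₀, 0) :=
        ContinuousAt.comp (g := deriv γ) (x := (t₀, (0 : ℝ))) (f := fun p : ℝ × ℝ => p.1)
          hγ0.deriv.continuousAt continuousAt_fst
      exact c1.prodMk (c2.prodMk continuousAt_snd)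
    exact hc.eventually (hφ.isOpen_W.mem_nhds (hφ.mem_zero _ (hγΩ t₀ ht₀) (deriv γ t₀)))
  -- the geodesic equation
  have hgeo : ∀ᶠ p in 𝓝 (t₀, (0 : ℝ)), ds (ds f) p = - GQ Γ (f p) (ds f p) (ds f p) := by
    filter_upwards [hWev, hfs.eventually, eventually_eventually_nhds.2 hfs.eventually] with p hp h1 h2
    ext l
    have hd : ∀ {q : ℝ × ℝ}, SmoothNear f q → ∀ l, deriv (fun s => f (q.1, s) l) q.2 = ds f q l := by
      intro q hq l
      exact (hasDerivAt_pi.1 (hasDerivAt_ds hq.differentiableAt) l).deriv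
    have h3 := hφ.geodesic _ hp l
    have h4 : deriv (deriv (fun s => f (p.1, s) l)) p.2 = ds (ds f) p l := by
      have e1 := hasDerivAt_pi.1 (hasDerivAt_ds h1.ds.differentiableAt) l
      have e2 : deriv (fun s => f (p.1, s) l) =ᶠ[𝓝 p.2] fun s => ds f (p.1, s) l := by
        filter_upwards [(tendsto_line p).eventually h2] with s hs
        exact hd hs l
      exact (e1.congr_of_eventuallyEq e2).deriv
    have h5 : ds (ds f) p l + GQ Γ (f p) (ds f p) (ds f p) l = 0 := by
      rw [← h4]
      simp only [GQ, ← hd h1]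
      exact h3
    rw [Pi.neg_apply]
    linarith
  have hf0 : ∀ᶠ t in 𝓝 t₀, f (t, 0) = γ t := by
    filter_upwards [hIev] with t ht
    exact hφ.init_pos _ (hγΩ t ht) _
  have hf1 : ∀ᶠ t in 𝓝 t₀, ds f (t, 0) = deriv γ t := by
    filter_upwards [hIev, hline.eventually hfs.eventually] with t ht h
    have := hφ.init_vel _ (hγΩ t ht) (deriv γ t)
    rw [← this]
    exact (hasDerivAt_ds h.differentiableAt).deriv.symm
  let A : ℝ → (Fin 3 → ℝ) := fun t => ds (ds f) (t, 0)
  let B : ℝ → (Fin 3 → ℝ) := fun t => ds (ds (ds f)) (t, 0)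
  have hlineS : SmoothNear (fun x : ℝ => (x, (0 : ℝ))) t₀ := ContDiff.smoothNear (by fun_prop) _
  have hAs : SmoothNear A t₀ := hfs.ds.ds.comp_of_eq hlineS rfl
  have hBs : SmoothNear B t₀ := hfs.ds.ds.ds.comp_of_eq hlineS rfl
  have hA : ∀ᶠ t in 𝓝 t₀, A t = - GQ Γ (γ t) (deriv γ t) (deriv γ t) := by
    filter_upwards [hline.eventually hgeo, hf0, hf1] with t h1 h2 h3
    simp only [A, h1, h2, h3]
  have hV2 : ∀ᶠ t in 𝓝 t₀, covDeriv Γ γ 1 t = deriv (deriv γ) t - A t := by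
    filter_upwards [hA, hIev] with t h1 h2
    rw [(hcd 0).2 t h2, h1, sub_neg_eq_add]
    rfl
  have hBA : ∀ᶠ t in 𝓝 t₀, B t - deriv A t = (2 : ℝ) • GQ Γ (γ t) (deriv γ t) (covDeriv Γ γ 1 t) := by
    filter_upwards [hf0, hf1, hV2, eventually_eventually_nhds.2 hA, hIev,
      hline.eventually hfs.eventually, hline.eventually (eventually_eventually_nhds.2 hgeo)]
      with t h0 h1 h2 h3 h4 h5 h6
    have hΓd : ∀ l μ ν, DifferentiableAt ℝ (fun x => Γ x l μ ν) (γ t) := fun l μ ν =>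
      (hΓs _ (hγΩ t h4) l μ ν).differentiableAt
    have a1 := (hasDerivAt_GQ hΓd (hγs t h4).differentiableAt.hasDerivAt
      (hγs t h4).deriv.differentiableAt.hasDerivAt).neg
    have a2 := (a1.congr_of_eventuallyEq h3).deriv
    have b1 : HasDerivAt (fun s => f (t, s)) (ds f (t, 0)) 0 := hasDerivAt_ds h5.differentiableAt
    have b2 : HasDerivAt (fun s => ds f (t, s)) (ds (ds f) (t, 0)) 0 :=
      hasDerivAt_ds h5.ds.differentiableAt
    have b3 : HasDerivAt (fun s => ds (ds f) (t, s)) (ds (ds (ds f)) (t, 0)) 0 :=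
      hasDerivAt_ds h5.ds.ds.differentiableAt
    have b4 := (hasDerivAt_GQ (Γ := Γ) (by rw [h0]; exact hΓd) b1 b2).neg
    have b5 := b3.unique (b4.congr_of_eventuallyEq ((tendsto_line (t, (0 : ℝ))).eventually h6))
    rw [h0, h1] at b5
    have b6 : B t = _ := b5
    have hAt : ds (ds f) (t, 0) = A t := rfl
    have h7 : deriv (deriv γ) t = covDeriv Γ γ 1 t + A t := by rw [h2]; abel
    rw [b6, a2, hAt, h7, GQ_symm hTF _ (A t), GQ_symm hTF _ (covDeriv Γ γ 1 t + A t), GQ_add]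
    module
  have hV3 : ∀ᶠ t in 𝓝 t₀, covDeriv Γ γ 2 t = deriv (deriv (deriv γ)) t + (2 : ℝ)⁻¹ • B t
      - (3 / 2 : ℝ) • deriv A t := by
    filter_upwards [hBA, eventually_eventually_nhds.2 hV2, hIev, hAs.eventually] with t h1 h2 h3 h5
    have h4 : covDeriv Γ γ 1 =ᶠ[𝓝 t] fun u => deriv (deriv γ) u - A u := h2
    have h6 : HasDerivAt (fun u => deriv (deriv γ) u - A u)
        (deriv (deriv (deriv γ)) t - deriv A t) t :=
      (hγs t h3).deriv.deriv.differentiableAt.hasDerivAt.sub h5.differentiableAt.hasDerivAt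
    have h7 : deriv (covDeriv Γ γ 1) t = deriv (deriv (deriv γ)) t - deriv A t :=
      (h6.congr_of_eventuallyEq h4).deriv
    have h8 : GQ Γ (γ t) (deriv γ t) (covDeriv Γ γ 1 t) = (2 : ℝ)⁻¹ • (B t - deriv A t) := by
      rw [h1]; module
    rw [(hcd 1).2 t h3, h7, h8]
    module
  obtain ⟨R0, hR0, e0⟩ := taylor_ds hfs
  obtain ⟨Ra, hRa, ea⟩ := taylor_shift hγ0
  obtain ⟨Rb, hRb, eb⟩ := taylor_shift hγ0.deriv
  obtain ⟨Rc, hRc, ec⟩ := taylor_shift hAs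
  obtain ⟨Rd, hRd, ed⟩ := taylor_shift hBs
  have hshc : Tendsto (fun p : ℝ × ℝ => (p.1 - p.2, p.2)) (𝓝 (t₀, (0 : ℝ))) (𝓝 (t₀, (0 : ℝ))) := by
    have : Continuous (fun p : ℝ × ℝ => (p.1 - p.2, p.2)) := by fun_prop
    simpa using this.tendsto (t₀, (0 : ℝ))
  have hsub : Tendsto (fun p : ℝ × ℝ => p.1 - p.2) (𝓝 (t₀, (0 : ℝ))) (𝓝 t₀) := by
    have : Continuous (fun p : ℝ × ℝ => p.1 - p.2) := by fun_prop
    simpa using this.tendsto (t₀, (0 : ℝ))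
  have hx : SmoothNear (fun p : ℝ × ℝ => p.1) (t₀, (0 : ℝ)) := contDiff_fst.smoothNear _
  have hR0' : SmoothNear (fun p : ℝ × ℝ => R0 (p.1 - p.2, p.2)) (t₀, 0) :=
    hR0.comp_of_eq (ContDiff.smoothNear (by fun_prop) _) (by simp)
  have lift : ∀ {k : ℝ → (Fin 3 → ℝ)}, SmoothNear k t₀ →
      SmoothNear (fun p : ℝ × ℝ => k p.1) (t₀, 0) := fun hk => hk.comp_of_eq hx rfl
  have sm : ∀ {r : ℝ → ℝ} {k : ℝ × ℝ → (Fin 3 → ℝ)}, ContDiff ℝ ∞ r → SmoothNear k (t₀, 0) →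
      SmoothNear (fun p : ℝ × ℝ => r p.2 • k p) (t₀, 0) := fun hr hk =>
    SmoothNear.smul (ContDiff.smoothNear (by fun_prop) _) hk
  let R : ℝ × ℝ → (Fin 3 → ℝ) := fun p =>
    R0 (p.1 - p.2, p.2) + Ra p + (-(1 / 6) : ℝ) • deriv (deriv (deriv (deriv γ))) p.1 + p.2 • Rb p
      + (1 / 4 : ℝ) • deriv (deriv A) p.1 + (-(p.2 / 12)) • deriv (deriv (deriv A)) p.1
      + (p.2 ^ 2 / 2) • Rc p
      + (-(1 / 6) : ℝ) • deriv B p.1 + (p.2 / 12) • deriv (deriv B) p.1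
      + (-(p.2 ^ 2 / 36)) • deriv (deriv (deriv B)) p.1 + (p.2 ^ 3 / 6) • Rd p
  have hR : SmoothNear R (t₀, 0) := by
    refine ((((((((((hR0'.add hRa).add ?_).add ?_).add ?_).add ?_).add ?_).add ?_).add ?_).add ?_).add ?_)
    · exact sm (r := fun _ => (-(1 / 6) : ℝ)) (by fun_prop) (lift hγ0.deriv.deriv.deriv.deriv)
    · exact sm (r := fun s => s) (by fun_prop) hRb
    · exact sm (r := fun _ => (1 / 4 : ℝ)) (by fun_prop) (lift hAs.deriv.deriv)
    · exact sm (r := fun s => -(s / 12)) (by fun_prop) (lift hAs.deriv.deriv.deriv)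
    · exact sm (r := fun s => s ^ 2 / 2) (by fun_prop) hRc
    · exact sm (r := fun _ => (-(1 / 6) : ℝ)) (by fun_prop) (lift hBs.deriv)
    · exact sm (r := fun s => s / 12) (by fun_prop) (lift hBs.deriv.deriv)
    · exact sm (r := fun s => -(s ^ 2 / 36)) (by fun_prop) (lift hBs.deriv.deriv.deriv)
    · exact sm (r := fun s => s ^ 3 / 6) (by fun_prop) hRd
  have hF : ∀ᶠ p in 𝓝 (t₀, (0 : ℝ)), f (p.1 - p.2, p.2) = γ p.1 - (p.2 ^ 2 / 2) • covDeriv Γ γ 1 p.1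
      + (p.2 ^ 3 / 3) • covDeriv Γ γ 2 p.1 + p.2 ^ 4 • R p := by
    filter_upwards [hshc.eventually e0, ea, eb, ec, ed, hsub.eventually hf0, hsub.eventually hf1,
      hfst.eventually hV2, hfst.eventually hV3] with p e0 ea eb ec ed f0 f1 v2 v3
    have hAp : ds (ds f) (p.1 - p.2, 0) = A (p.1 - p.2) := rfl
    have hBp : ds (ds (ds f)) (p.1 - p.2, 0) = B (p.1 - p.2) := rfl
    rw [hAp, hBp, f0, f1, ea, eb, ec, ed] at e0
    rw [e0, v2, v3]
    simp only [R]
    module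
  have key := geq_of_expansion (F := fun p : ℝ × ℝ => f (p.1 - p.2, p.2)) (e := covDeriv Γ γ 3 t₀)
    (L := GQL Γ (γ t₀) (deriv γ t₀)) hγ0 ((hcd 1).1 t₀ ht₀) ((hcd 2).1 t₀ ht₀) hR hF
    (eq_sub_of_add_eq ((hcd 0).2 t₀ ht₀).symm) (eq_sub_of_add_eq ((hcd 1).2 t₀ ht₀).symm)
    (eq_sub_of_add_eq ((hcd 2).2 t₀ ht₀).symm) hind hdep
  have first : GEq f (t₀, 0) (fun p : ℝ × ℝ => f (p.1 - p.2, p.2)) (t₀, 0) := by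
    refine ⟨fun p => (p.1 + p.2, p.2), fun y => y,
      LD.of_inverse (ρ := fun p : ℝ × ℝ => (p.1 - p.2, p.2)) _ (by fun_prop) (by fun_prop) ?_ ?_,
      LD.refl _, by simp, Eventually.of_forall fun p => by simp⟩
    · intro x; simp
    · intro x; simp
  exact ((first.trans key).trans geq_umbrella).germDiffeomorphic hfs.continuousAt
end
end
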